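/- arXiv:1305.5440 — 2 statements merged into one kernel-verified Lean document; each statement's English description precedes it below -/
import Mathlib

section
/- For every ε > 0 and every finite set J, there exist δ > 0, T > 0 and η > 0 such that the following holds. Let V = (J, (V_j)_{j∈J}, r, H) be a hypergraph system and let ν and g be weighted hypergraphs on V with 0 ≤ g_e ≤ ν_e pointwise for all e ∈ H, such that ν satisfies the H-linear forms condition within η and E[∏_{e∈H} g_e(x_e) | x ∈ V_J] ≤ δ. Then for each e ∈ H there exists a set E'_e ⊆ V_e such that V_e ∖ E'_e has complexity at most T, ∏_{e∈H} 1_{E'_e}(x_e) = 0 for all x ∈ V_J, and E[g_e(x_e)·1_{V_e∖E'_e}(x_e) | x_e ∈ V_e] ≤ ε for all e ∈ H. -/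
/-!
The proof transfers the dense hypergraph removal lemma to the sparse setting by means of a dense
model. A function on `V_e` is regarded as a function on `V_J` that depends only on the coordinates
in `e` (`Dep e`). A function `F` is `u`-uniform on `e` (`Unif e F u`) if its correlation with every
product of indicator functions of sets over the faces `e \ {j}` is at most `u`.

*Dense model* (`dense_model`). Starting from the trivial colouring of the faces, any failure of
uniformity of `g_e` minus its conditional expectation, truncated at `1`, is used to refine the
colouring. The energy of the truncated conditional expectations increases by a fixed amount up to
the mass lost by truncation. That mass is negligible because `ν_e - 1` is uniform, which follows
from the linear forms condition by repeated Cauchy–Schwarz (`cs_small`). The result is a function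
`0 ≤ h_e ≤ 1` with `g_e - h_e` uniform.

*Relative counting* (`rel_count`). The averages of `∏ g_e` and `∏ h_e` are close, by induction on
the number of edges whose function is bounded only by `ν_e`. For such an edge `e`, Cauchy–Schwarz
over `V_e` with weight `ν_e`, and the replacement of that weight by `1` (`cs_small` again), leave
mean squares of the averages of the other factors over the coordinates outside `e`. Truncating one
of these averages at `1` makes it a bounded function on `e`, and the edge has become dense
(`count_step`).

*Dense removal* (`dense_removal`). The strong regularity lemma (`strong_reg`) is applied to the
edges of each size in turn, from the top downwards, and yields a bounded colouring of all proper
faces for which every cell without an exceptional edge has mass bounded below (`exists_cellReg`).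
If the sets `E_e` span few copies of `H`, then every point lies in an exceptional set `D_e`, which
is a union of cells and meets `E_e` in small measure.

*Conclusion* (`removal_aux`). Dense removal is applied to the level sets `h_e ≥ τ`, which span few
copies of `H` by relative counting. The sets `D_e` are unions of boundedly many cells, so they have
bounded complexity, and uniformity of `g_e - h_e` bounds the mass of `g_e` on `D_e`. Taking
`E'_e` to be the complement of `D_e` proves the theorem for fixed `H`; there are only finitely many
`H` on `J`.
-/

open Finset

/-- The average (expectation with respect to the uniform measure) of `f` over `α`. -/
noncomputable def avg {α : Type*} [Fintype α] (f : α → ℝ) : ℝ :=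
  (∑ x, f x) / (Fintype.card α)

variable {J : Type} [Fintype J] [DecidableEq J] {V : J → Type}

/-- Restriction (projection) of a full tuple `x ∈ V_J` to the coordinates in `e`. -/
def restr (e : Finset J) (x : (j : J) → V j) : (i : ↥e) → V i := fun i => x i.1

/-- Projection of a tuple indexed by `e` to the coordinates in the face `e.erase j`. -/
def faceProj {e : Finset J} (j : J) (x : (i : ↥e) → V i) :
    (i : ↥(e.erase j)) → V i :=
  fun i => x ⟨i.1, Finset.mem_of_mem_erase i.2⟩

/-- The product `∏_{f ∈ ∂e} 1_{B_f}(x_f)` of the indicators of the sets `B_f ⊆ V_f`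
over the faces `f = e.erase j`, `j ∈ e`, of `e`. -/
noncomputable def faceInd (e : Finset J)
    (B : (j : J) → Set ((i : ↥(e.erase j)) → V i)) (x : (i : ↥e) → V i) : ℝ :=
  ∏ j ∈ e, Set.indicator (B j) (fun _ => (1 : ℝ)) (faceProj j x)

/-- `(g, g')` is an `ε`-discrepancy pair on the edge `e`: for all choices of
`B_f ⊆ V_f` (`f ∈ ∂e`), `|E[(g(x_e) - g'(x_e)) ∏_{f ∈ ∂e} 1_{B_f}(x_f)]| ≤ ε`. -/
noncomputable def EdgeDiscrepancy [∀ j, Fintype (V j)] (e : Finset J)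
    (g g' : ((i : ↥e) → V i) → ℝ) (ε : ℝ) : Prop :=
  ∀ B : (j : J) → Set ((i : ↥(e.erase j)) → V i),
    |avg (fun x : (i : ↥e) → V i => (g x - g' x) * faceInd e B x)| ≤ ε

/-- `g` is upper `η`-regular on the edge `e`: for all choices of `B_f ⊆ V_f`
(`f ∈ ∂e`), `E[(g(x_e) - 1) ∏_{f ∈ ∂e} 1_{B_f}(x_f)] ≤ η`. -/
noncomputable def EdgeUpperRegular [∀ j, Fintype (V j)] (e : Finset J)
    (g : ((i : ↥e) → V i) → ℝ) (η : ℝ) : Prop :=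
  ∀ B : (j : J) → Set ((i : ↥(e.erase j)) → V i),
    avg (fun x : (i : ↥e) → V i => (g x - 1) * faceInd e B x) ≤ η

/-- `E ⊆ V_e` is the set of `r`-cliques of some `(r-1)`-uniform hypergraph: there are
sets `B_f ⊆ V_f` for the faces `f ∈ ∂e` with `1_E(x_e) = ∏_{f ∈ ∂e} 1_{B_f}(x_f)`. -/
def IsCliqueSet (e : Finset J) (E : Set ((i : ↥e) → V i)) : Prop :=
  ∃ B : (j : J) → Set ((i : ↥(e.erase j)) → V i),
    ∀ x, x ∈ E ↔ ∀ j ∈ e, faceProj j x ∈ B j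

/-- `E ⊆ V_e` has complexity at most `T`: it can be partitioned into `T` (possibly
empty) clique sets. -/
def ComplexityLE (e : Finset J) (E : Set ((i : ↥e) → V i)) (T : ℕ) : Prop :=
  ∃ P : Fin T → Set ((i : ↥e) → V i),
    (∀ i, IsCliqueSet e (P i)) ∧
    (∀ i₁ i₂, i₁ ≠ i₂ → P i₁ ∩ P i₂ = ∅) ∧
    (⋃ i, P i) = E

/-- The weighted hypergraph `ν` satisfies the `H`-linear forms condition within `η`:
for every choice of exponents `n (e, ω) ∈ {0,1}` (`e ∈ H`, `ω ∈ {0,1}^e`),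
`|E[∏_{e ∈ H} ∏_{ω ∈ {0,1}^e} ν_e(x_e^{(ω)})^{n_{e,ω}} | x⁰, x¹ ∈ V_J] - 1| ≤ η`. -/
noncomputable def HLinearForms [∀ j, Fintype (V j)] (H : Finset (Finset J))
    (ν : (e : Finset J) → ((i : ↥e) → V i) → ℝ) (η : ℝ) : Prop :=
  ∀ n : (e : Finset J) → (↥e → Bool) → Bool,
    |avg (fun x : ((j : J) → V j) × ((j : J) → V j) =>
      ∏ e ∈ H, ∏ ω : ↥e → Bool,
        if n e ω then ν e (fun i => if ω i then x.2 i.1 else x.1 i.1) else 1) - 1| ≤ η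

set_option linter.unusedSectionVars false

/-! ### Indicator functions -/

section Indicators

variable {α : Type*}

/-- The indicator function of a set, as a real function. -/
noncomputable def ind (W : Set α) : α → ℝ := W.indicator fun _ => 1

theorem ind_of_mem {W : Set α} {x : α} (h : x ∈ W) : ind W x = 1 := by simp [ind, h]

theorem ind_of_notMem {W : Set α} {x : α} (h : x ∉ W) : ind W x = 0 := by simp [ind, h]

theorem ind_nonneg (W : Set α) (x : α) : 0 ≤ ind W x := by
  by_cases h : x ∈ W <;> simp [ind, h]

theorem ind_le_one (W : Set α) (x : α) : ind W x ≤ 1 := by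
  by_cases h : x ∈ W <;> simp [ind, h]

theorem ind_mono {W W' : Set α} (h : W ⊆ W') (x : α) : ind W x ≤ ind W' x := by
  by_cases hx : x ∈ W
  · rw [ind_of_mem hx, ind_of_mem (h hx)]
  · rw [ind_of_notMem hx]; exact ind_nonneg _ _

theorem ind_inter (W W' : Set α) (x : α) : ind (W ∩ W') x = ind W x * ind W' x := by
  by_cases hx : x ∈ W <;> by_cases hx' : x ∈ W' <;> simp [ind, hx, hx']

theorem ind_forall {ι : Type*} (s : Finset ι) (W : ι → Set α) (x : α) :
    ind {y | ∀ i ∈ s, y ∈ W i} x = ∏ i ∈ s, ind (W i) x := by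
  by_cases h : ∀ i ∈ s, x ∈ W i
  · rw [ind_of_mem (by exact h), prod_eq_one fun i hi => ind_of_mem (h i hi)]
  · rw [ind_of_notMem (by exact h)]
    push Not at h
    obtain ⟨i, hi, hx⟩ := h
    exact (prod_eq_zero hi (ind_of_notMem hx)).symm

end Indicators

/-! ### Averages over finite sets -/

section Averages

variable {α β : Type*} [Fintype α] [Fintype β]

theorem avg_add (f g : α → ℝ) : avg (fun x => f x + g x) = avg f + avg g := by
  simp only [avg, sum_add_distrib, add_div]

theorem avg_sub (f g : α → ℝ) : avg (fun x => f x - g x) = avg f - avg g := by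
  simp only [avg, sum_sub_distrib, sub_div]

theorem avg_neg (f : α → ℝ) : avg (fun x => - f x) = - avg f := by
  simp only [avg, sum_neg_distrib, neg_div]

theorem avg_const_mul (c : ℝ) (f : α → ℝ) : avg (fun x => c * f x) = c * avg f := by
  simp only [avg, ← mul_sum, mul_div_assoc]

theorem avg_mul_const (f : α → ℝ) (c : ℝ) : avg (fun x => f x * c) = avg f * c := by
  simp only [mul_comm _ c, avg_const_mul]

theorem avg_sum {ι : Type*} (s : Finset ι) (f : ι → α → ℝ) :
    avg (fun x => ∑ i ∈ s, f i x) = ∑ i ∈ s, avg (f i) := by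
  simp only [avg, sum_div]
  exact sum_comm

theorem avg_const [Nonempty α] (c : ℝ) : avg (fun _ : α => c) = c := by
  have h : (Fintype.card α : ℝ) ≠ 0 := by exact_mod_cast Fintype.card_ne_zero
  simp only [avg, sum_const, card_univ, nsmul_eq_mul]
  field_simp

theorem avg_mono {f g : α → ℝ} (h : ∀ x, f x ≤ g x) : avg f ≤ avg g := by
  unfold avg
  gcongr with x
  exact h x

theorem avg_nonneg {f : α → ℝ} (h : ∀ x, 0 ≤ f x) : 0 ≤ avg f :=
  div_nonneg (sum_nonneg fun x _ => h x) (Nat.cast_nonneg _)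

theorem avg_le_const [Nonempty α] {f : α → ℝ} {c : ℝ} (h : ∀ x, f x ≤ c) : avg f ≤ c :=
  (avg_mono h).trans_eq (avg_const c)

theorem abs_avg_le (f : α → ℝ) : |avg f| ≤ avg (fun x => |f x|) := by
  rw [abs_le, ← avg_neg]
  exact ⟨avg_mono fun x => neg_abs_le _, avg_mono fun x => le_abs_self _⟩

theorem avg_congr {f g : α → ℝ} (h : ∀ x, f x = g x) : avg f = avg g := by
  rw [funext h]

theorem avg_comp_equiv (e : α ≃ β) (f : β → ℝ) : avg (fun x => f (e x)) = avg f := by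
  simp only [avg, Fintype.card_congr e, Equiv.sum_comp e f]

theorem avg_prod (f : α × β → ℝ) : avg f = avg (fun x => avg (fun y => f (x, y))) := by
  simp only [avg, Fintype.sum_prod_type, Fintype.card_prod, ← sum_div, div_div, Nat.cast_mul]
  rw [mul_comm]

theorem avg_comm (f : α → β → ℝ) :
    avg (fun x => avg (fun y => f x y)) = avg (fun y => avg (fun x => f x y)) := by
  rw [← avg_prod (fun p : α × β => f p.1 p.2), ← avg_prod (fun p : β × α => f p.2 p.1),
    ← avg_comp_equiv (Equiv.prodComm α β)]
  rfl

/-- The weighted Cauchy–Schwarz inequality `(E a b)² ≤ (E w) (E w b²)` for `|a| ≤ w`. -/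
theorem avg_cauchy {a b w : α → ℝ} (haw : ∀ x, |a x| ≤ w x) :
    (avg fun x => a x * b x) ^ 2 ≤ avg w * avg (fun x => w x * b x ^ 2) := by
  have hw : ∀ x, 0 ≤ w x := fun x => (abs_nonneg _).trans (haw x)
  have h1 : |avg fun x => a x * b x| ≤ avg fun x => w x * |b x| := by
    refine (abs_avg_le _).trans (avg_mono fun x => ?_)
    rw [abs_mul]
    exact mul_le_mul_of_nonneg_right (haw x) (abs_nonneg _)
  have h2 : (∑ x, w x * |b x|) ^ 2 ≤ (∑ x, w x) * ∑ x, w x * b x ^ 2 := by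
    have := Finset.sum_mul_sq_le_sq_mul_sq univ (fun x => √(w x)) (fun x => √(w x) * |b x|)
    simp only [← mul_assoc, Real.mul_self_sqrt (hw _), mul_pow, Real.sq_sqrt (hw _), sq_abs] at this
    exact this
  calc (avg fun x => a x * b x) ^ 2 = |avg fun x => a x * b x| ^ 2 := (sq_abs _).symm
    _ ≤ (avg fun x => w x * |b x|) ^ 2 := by gcongr
    _ ≤ avg w * avg (fun x => w x * b x ^ 2) := by
      unfold avg
      rw [div_pow, div_mul_div_comm, ← sq]
      gcongr

theorem avg_sq_le {f : α → ℝ} [Nonempty α] : (avg f) ^ 2 ≤ avg fun x => f x ^ 2 := by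
  have := avg_cauchy (a := fun _ : α => (1 : ℝ)) (b := f) (w := fun _ => 1) (by simp)
  simpa [avg_const] using this

theorem markov {f : α → ℝ} (hf : ∀ x, 0 ≤ f x) {t : ℝ} :
    t * avg (ind {x | t < f x}) ≤ avg f := by
  rw [← avg_const_mul]
  refine avg_mono fun x => ?_
  by_cases h : t < f x
  · rw [ind_of_mem (by exact h)]; linarith
  · rw [ind_of_notMem (by exact h)]; linarith [hf x]

end Averages

/-! ### Conditional expectation with respect to a finite colouring -/

section CondExp

variable {α : Type*} [Fintype α] {κ : Type*} [DecidableEq κ]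

/-- The conditional expectation of `g` with respect to the partition into the colour classes
of `c`. -/
noncomputable def cexp (c : α → κ) (g : α → ℝ) (x : α) : ℝ :=
  (∑ y with c y = c x, g y) / #{y | c y = c x}

theorem cexp_congr {c : α → κ} (g : α → ℝ) {x y : α} (h : c x = c y) :
    cexp c g x = cexp c g y := by
  simp only [cexp, h]

theorem card_class_pos (c : α → κ) (x : α) : (0 : ℝ) < #{y | c y = c x} := by
  have : (0 : ℕ) < #{y | c y = c x} := card_pos.mpr ⟨x, by simp⟩
  exact_mod_cast this

theorem avg_cexp_mul (c : α → κ) (g h : α → ℝ) (hh : ∀ x y, c x = c y → h x = h y) :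
    avg (fun x => cexp c g x * h x) = avg (fun x => g x * h x) := by
  unfold avg
  congr 1
  have h1 : ∀ x, cexp c g x * h x
      = ∑ y, if c y = c x then g y * (h y / #{z | c z = c y}) else 0 := by
    intro x
    rw [← sum_filter, cexp, div_mul_eq_mul_div, sum_mul, sum_div]
    refine sum_congr rfl fun y hy => ?_
    have hy : c y = c x := by simpa using hy
    rw [hh y x hy, hy]
    ring
  simp only [h1]
  rw [sum_comm]
  refine sum_congr rfl fun y _ => ?_
  have h2 : ∀ x, (c y = c x) = (c x = c y) := fun x => propext eq_comm
  simp only [h2]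
  rw [← sum_filter, sum_const, nsmul_eq_mul]
  have := (card_class_pos c y).ne'
  field_simp

theorem cexp_nonneg (c : α → κ) {g : α → ℝ} (hg : ∀ x, 0 ≤ g x) (x : α) : 0 ≤ cexp c g x :=
  div_nonneg (sum_nonneg fun y _ => hg y) (Nat.cast_nonneg _)

theorem cexp_le_one (c : α → κ) {g : α → ℝ} (hg : ∀ x, g x ≤ 1) (x : α) : cexp c g x ≤ 1 := by
  rw [cexp, div_le_one (card_class_pos c x)]
  calc _ ≤ ∑ y with c y = c x, (1 : ℝ) := sum_le_sum fun y _ => hg y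
    _ = _ := by simp

theorem avg_cexp (c : α → κ) (g : α → ℝ) : avg (cexp c g) = avg g := by
  simpa using avg_cexp_mul c g (fun _ => 1) (fun _ _ _ => rfl)

/-- The conditional expectation at `x` is the average of `g` over the class of `x`. -/
theorem cexp_mul_avg_class (c : α → κ) (g : α → ℝ) (x : α) :
    cexp c g x * avg (ind {y | c y = c x}) = avg fun y => g y * ind {y | c y = c x} y := by
  rw [← avg_cexp_mul c g, ← avg_const_mul]
  · refine avg_congr fun y => ?_
    by_cases h : c y = c x
    · rw [cexp_congr g h]
    · rw [ind_of_notMem (by exact h)]; simp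
  · intro y z h
    simp only [ind, Set.indicator, Set.mem_ofPred_eq, h]

end CondExp

/-! ### Functions depending on few coordinates -/

section Dep

variable {β : Type*}

/-- `f` depends only on the coordinates in the finite set `e`. Functions on `V_e` are treated
throughout as functions on `V_J` with this property. -/
def Dep (e : Finset J) (f : ((j : J) → V j) → β) : Prop :=
  ∀ x y, (∀ j ∈ e, x j = y j) → f x = f y

theorem Dep.mono {e e' : Finset J} {f : ((j : J) → V j) → β} (h : Dep e f) (he : e ⊆ e') :
    Dep e' f := fun x y hxy => h x y fun j hj => hxy j (he hj)

theorem Dep.comp {e : Finset J} {f : ((j : J) → V j) → β} (h : Dep e f) {γ : Type*} (φ : β → γ) :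
    Dep e (fun x => φ (f x)) := fun x y hxy => congrArg φ (h x y hxy)

theorem Dep.comp₂ {e : Finset J} {f : ((j : J) → V j) → β} (h : Dep e f) {γ δ : Type*}
    {g : ((j : J) → V j) → γ} (hg : Dep e g) (φ : β → γ → δ) :
    Dep e (fun x => φ (f x) (g x)) := fun x y hxy => by
  simp only [h x y hxy, hg x y hxy]

theorem Dep.prod {ι : Type*} (s : Finset ι) {e : Finset J} {f : ι → ((j : J) → V j) → ℝ}
    (h : ∀ i ∈ s, Dep e (f i)) : Dep e (fun x => ∏ i ∈ s, f i x) :=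
  fun x y hxy => prod_congr rfl fun i hi => h i hi x y hxy

theorem Dep.piecewise {a e : Finset J} {f : ((j : J) → V j) → β} (h : Dep a f)
    (z : (j : J) → V j) : Dep (e ∩ a) (fun x => f (e.piecewise x z)) := by
  intro x y hxy
  refine h _ _ fun j hj => ?_
  by_cases hje : j ∈ e
  · simp [hje, hxy j (mem_inter.mpr ⟨hje, hj⟩)]
  · simp [hje]

theorem Dep.piecewise_eq {e s : Finset J} {f : ((j : J) → V j) → β} (h : Dep e f) (hs : e ⊆ s)
    (x z : (j : J) → V j) : f (s.piecewise x z) = f x :=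
  h _ _ fun j hj => by simp [hs hj]

theorem Dep.ind {e : Finset J} {W : Set ((j : J) → V j)} (h : Dep e (fun x => x ∈ W)) :
    Dep e (ind W) := by
  intro x y hxy
  have : (x ∈ W) = (y ∈ W) := h x y hxy
  by_cases hx : x ∈ W
  · rw [ind_of_mem hx, ind_of_mem (this ▸ hx)]
  · rw [ind_of_notMem hx, ind_of_notMem (this ▸ hx)]

variable [∀ j, Fintype (V j)]

/-- Resampling the coordinates outside `e` does not change the average. -/
theorem avg_piecewise (e : Finset J) (f : ((j : J) → V j) → ℝ) [∀ j, Nonempty (V j)] :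
    avg (fun z => avg (fun x => f (e.piecewise x z))) = avg f := by
  let σ : ((j : J) → V j) × ((j : J) → V j) ≃ ((j : J) → V j) × ((j : J) → V j) :=
    { toFun := fun p => (e.piecewise p.1 p.2, e.piecewise p.2 p.1)
      invFun := fun p => (e.piecewise p.1 p.2, e.piecewise p.2 p.1)
      left_inv := fun p => by
        ext j <;> by_cases hj : j ∈ e <;> simp [hj]
      right_inv := fun p => by
        ext j <;> by_cases hj : j ∈ e <;> simp [hj] }
  rw [avg_comm, ← avg_prod (fun p : ((j : J) → V j) × ((j : J) → V j) => f (e.piecewise p.1 p.2))]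
  have := avg_comp_equiv σ (fun p => f p.1)
  rw [avg_prod (fun p : ((j : J) → V j) × ((j : J) → V j) => f p.1)] at this
  simp only [avg_const] at this
  exact this

/-- The average of `R` over the coordinates outside `a`. -/
noncomputable def proj (a : Finset J) (R : ((j : J) → V j) → ℝ) (x : (j : J) → V j) : ℝ :=
  avg fun z => R (a.piecewise x z)

theorem dep_proj (a : Finset J) (R : ((j : J) → V j) → ℝ) : Dep a (proj a R) := by
  intro x y hxy
  unfold proj
  congr 1
  funext z
  congr 1
  ext j
  by_cases hj : j ∈ a <;> simp [hj, hxy]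

theorem avg_proj_mul [∀ j, Nonempty (V j)] {a : Finset J} (R : ((j : J) → V j) → ℝ)
    {h : ((j : J) → V j) → ℝ} (hh : Dep a h) :
    avg (fun x => proj a R x * h x) = avg (fun x => R x * h x) := by
  rw [← avg_piecewise a (fun x => R x * h x), avg_comm]
  refine avg_congr fun x => ?_
  rw [proj, ← avg_mul_const]
  exact avg_congr fun z => by rw [hh.piecewise_eq subset_rfl]

end Dep

/-! ### Uniformity -/

section Uniformity

variable [∀ j, Fintype (V j)]

/-- `F` is `u`-uniform on the edge `e`: its correlation with every product of indicator functions
of sets over the faces `e \ {j}` is at most `u`. -/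
def Unif (e : Finset J) (F : ((j : J) → V j) → ℝ) (u : ℝ) : Prop :=
  ∀ b : J → Set ((j : J) → V j), (∀ j ∈ e, Dep (e.erase j) (fun x => x ∈ b j)) →
    |avg fun x => F x * ∏ j ∈ e, ind (b j) x| ≤ u

variable [∀ j, Nonempty (V j)]

/-- A correlation is linear in each face function, hence is at most its value at some tuple of
indicator functions. -/
theorem unif_fun_aux {e : Finset J} {F : ((j : J) → V j) → ℝ} {u : ℝ} (hF : Unif e F u)
    (t : Finset J) (ht : t ⊆ e) :
    ∀ b : J → ((j : J) → V j) → ℝ, (∀ j ∈ e, Dep (e.erase j) (b j)) →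
      (∀ j ∈ e, ∀ x, 0 ≤ b j x ∧ b j x ≤ 1) →
      (∀ j ∈ e, j ∉ t → ∃ W : Set ((j : J) → V j), Dep (e.erase j) (fun x => x ∈ W) ∧
        b j = ind W) →
      avg (fun x => F x * ∏ j ∈ e, b j x) ≤ u := by
  induction t using Finset.induction_on with
  | empty =>
    intro b _ _ hb
    have hb' : ∀ j, ∃ W : Set ((j : J) → V j), j ∈ e →
        Dep (e.erase j) (fun x => x ∈ W) ∧ b j = ind W := by
      intro j
      by_cases hj : j ∈ e
      · obtain ⟨W, hW⟩ := hb j hj (by simp)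
        exact ⟨W, fun _ => hW⟩
      · exact ⟨∅, fun h => absurd h hj⟩
    choose W hW using hb'
    refine (le_abs_self _).trans (le_trans (le_of_eq ?_) (hF W fun j hj => (hW j hj).1))
    congr 2
    funext x
    congr 1
    exact prod_congr rfl fun j hj => by rw [(hW j hj).2]
  | insert i t hi ih =>
    intro b hbd hb01 hb
    have hie : i ∈ e := ht (mem_insert_self _ _)
    set R : ((j : J) → V j) → ℝ := fun x => F x * ∏ j ∈ e.erase i, b j x with hR
    set w := proj (e.erase i) R with hw
    set W : Set ((j : J) → V j) := {x | 0 < w x} with hWdef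
    have hwd : Dep (e.erase i) w := dep_proj _ _
    have hWd : Dep (e.erase i) (fun x => x ∈ W) := hwd.comp (fun t => 0 < t)
    have h1 : ∀ c : ((j : J) → V j) → ℝ, ∀ x,
        F x * ∏ j ∈ e, (Function.update b i c) j x = R x * c x := by
      intro c x
      rw [hR, ← mul_prod_erase e _ hie, Function.update_self]
      have : ∏ j ∈ e.erase i, Function.update b i c j x = ∏ j ∈ e.erase i, b j x :=
        prod_congr rfl fun j hj => by rw [Function.update_of_ne (ne_of_mem_erase hj)]
      rw [this]; ring
    have h2 : avg (fun x => F x * ∏ j ∈ e, (Function.update b i (ind W)) j x) ≤ u := by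
      refine ih ((subset_insert _ _).trans ht) _ ?_ ?_ ?_
      · intro j hj
        rcases eq_or_ne j i with rfl | hji
        · rw [Function.update_self]; exact hWd.ind
        · rw [Function.update_of_ne hji]; exact hbd j hj
      · intro j hj x
        rcases eq_or_ne j i with rfl | hji
        · rw [Function.update_self]; exact ⟨ind_nonneg _ _, ind_le_one _ _⟩
        · rw [Function.update_of_ne hji]; exact hb01 j hj x
      · intro j hj hjt
        rcases eq_or_ne j i with rfl | hji
        · exact ⟨W, hWd, by rw [Function.update_self]⟩
        · rw [Function.update_of_ne hji]
          exact hb j hj (by simp [hji, hjt])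
    have h3 := h1 (b i)
    rw [Function.update_eq_self] at h3
    rw [avg_congr h3, ← avg_proj_mul R (hbd i hie)]
    rw [avg_congr (h1 _), ← avg_proj_mul R hWd.ind] at h2
    refine le_trans (avg_mono fun x => ?_) h2
    by_cases hx : 0 < w x
    · rw [ind_of_mem (show x ∈ W from hx)]
      exact mul_le_mul_of_nonneg_left (hb01 i hie x).2 hx.le
    · rw [ind_of_notMem (show x ∉ W from hx), mul_zero]
      exact mul_nonpos_of_nonpos_of_nonneg (not_lt.mp hx) (hb01 i hie x).1

theorem Unif.neg {e : Finset J} {F : ((j : J) → V j) → ℝ} {u : ℝ} (hF : Unif e F u) :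
    Unif e (fun x => - F x) u := by
  intro b hb
  have := hF b hb
  simp only [neg_mul]
  rwa [avg_neg, abs_neg]

/-- Uniform functions have small correlation with products of `[0,1]`-valued face functions. -/
theorem Unif.funs {e : Finset J} {F : ((j : J) → V j) → ℝ} {u : ℝ} (hF : Unif e F u)
    {b : J → ((j : J) → V j) → ℝ} (hbd : ∀ j ∈ e, Dep (e.erase j) (b j))
    (hb01 : ∀ j ∈ e, ∀ x, 0 ≤ b j x ∧ b j x ≤ 1) :
    |avg (fun x => F x * ∏ j ∈ e, b j x)| ≤ u := by
  rw [abs_le]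
  constructor
  · have := unif_fun_aux hF.neg e subset_rfl b hbd hb01 (fun j hj h => absurd hj h)
    simp only [neg_mul] at this
    rw [avg_neg] at this
    linarith
  · exact unif_fun_aux hF e subset_rfl b hbd hb01 (fun j hj h => absurd hj h)

/-- `h` is a product of `[0,1]`-valued functions of the faces of `e` as soon as the coordinates
outside `e` are frozen. -/
def FaceProd (e : Finset J) (h : ((j : J) → V j) → ℝ) : Prop :=
  ∀ z, ∃ b : J → ((j : J) → V j) → ℝ, (∀ j ∈ e, Dep (e.erase j) (b j)) ∧
    (∀ j ∈ e, ∀ x, 0 ≤ b j x ∧ b j x ≤ 1) ∧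
    ∀ x, h (e.piecewise x z) = ∏ j ∈ e, b j x

theorem FaceProd.mul {e : Finset J} {h h' : ((j : J) → V j) → ℝ} (hh : FaceProd e h)
    (hh' : FaceProd e h') : FaceProd e (fun x => h x * h' x) := by
  intro z
  obtain ⟨b, hb, hb1, hb2⟩ := hh z
  obtain ⟨b', hb', hb1', hb2'⟩ := hh' z
  refine ⟨fun j x => b j x * b' j x, fun j hj => (hb j hj).comp₂ (hb' j hj) (· * ·),
    fun j hj x => ⟨mul_nonneg (hb1 j hj x).1 (hb1' j hj x).1,
      mul_le_one₀ (hb1 j hj x).2 (hb1' j hj x).1 (hb1' j hj x).2⟩, fun x => ?_⟩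
  dsimp only
  rw [hb2, hb2', prod_mul_distrib]

theorem FaceProd.of_dep {e a : Finset J} (hea : ¬ e ⊆ a) {h : ((j : J) → V j) → ℝ} (hd : Dep a h)
    (h01 : ∀ x, 0 ≤ h x ∧ h x ≤ 1) : FaceProd e h := by
  intro z
  obtain ⟨i, hi, hia⟩ := not_subset.mp hea
  refine ⟨fun j x => if j = i then h (e.piecewise x z) else 1, ?_, ?_, ?_⟩
  · intro j hj
    rcases eq_or_ne j i with rfl | hji
    · simp only [if_true]
      refine (hd.piecewise z).mono fun k hk => ?_
      rw [mem_inter] at hk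
      exact mem_erase.mpr ⟨fun h => hia (h ▸ hk.2), hk.1⟩
    · simp only [hji, if_false]
      exact fun _ _ _ => rfl
  · intro j hj x
    dsimp only
    split_ifs
    · exact h01 _
    · simp
  · intro x
    rw [prod_ite_eq' e i, if_pos hi]

theorem FaceProd.prod {ι : Type*} {e : Finset J} (he : e.Nonempty) (s : Finset ι)
    {h : ι → ((j : J) → V j) → ℝ} (hh : ∀ i ∈ s, FaceProd e (h i)) :
    FaceProd e (fun x => ∏ i ∈ s, h i x) := by
  classical
  induction s using Finset.induction_on with
  | empty =>
    refine FaceProd.of_dep (a := ∅) (fun h => ?_) (fun _ _ _ => rfl) (by simp)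
    exact he.ne_empty (subset_empty.mp h)
  | insert i s hi ih =>
    simp only [prod_insert hi]
    exact (hh i (mem_insert_self _ _)).mul (ih fun j hj => hh j (mem_insert_of_mem hj))

/-- Frozen outer coordinates turn a function of class `FaceProd e` into a product of face
functions, so it is orthogonal to uniform functions on `e`, up to the uniformity parameter. -/
theorem Unif.faceProd {e : Finset J} {F : ((j : J) → V j) → ℝ} {u : ℝ} (hF : Unif e F u)
    (hFd : Dep e F) {h : ((j : J) → V j) → ℝ} (hh : FaceProd e h) :
    |avg (fun x => F x * h x)| ≤ u := by
  rw [← avg_piecewise e (fun x => F x * h x)]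
  refine (abs_avg_le _).trans (avg_le_const fun z => ?_)
  obtain ⟨b, hb, hb1, hb2⟩ := hh z
  have : ∀ x, F (e.piecewise x z) * h (e.piecewise x z) = F x * ∏ j ∈ e, b j x := by
    intro x
    rw [hb2, hFd.piecewise_eq subset_rfl]
  rw [avg_congr this]
  exact hF.funs hb hb1

end Uniformity

/-! ### Regularity lemmas -/

section Regularity

/-- A system of colourings, one on each `V_f`, with fewer than `m` colours each. -/
def IsCol (β : Finset J → ((j : J) → V j) → ℕ) (m : ℕ) : Prop :=
  ∀ f, Dep f (β f) ∧ ∀ x, β f x < m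

theorem IsCol.mono {β : Finset J → ((j : J) → V j) → ℕ} {m m' : ℕ} (h : IsCol β m) (hm : m ≤ m') :
    IsCol β m' := fun f => ⟨(h f).1, fun x => ((h f).2 x).trans_le hm⟩

/-- The joint colour of the faces of `e`; the coordinates outside `e` carry the dummy colour `0`. -/
def jc (β : Finset J → ((j : J) → V j) → ℕ) (e : Finset J) (x : (j : J) → V j) : J → ℕ :=
  fun j => if j ∈ e then β (e.erase j) x else 0

theorem jc_eq_iff {β : Finset J → ((j : J) → V j) → ℕ} {e : Finset J} {x y : (j : J) → V j} :
    jc β e x = jc β e y ↔ ∀ j ∈ e, β (e.erase j) x = β (e.erase j) y := by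
  constructor
  · intro h j hj
    have := congrFun h j
    simpa [jc, hj] using this
  · intro h
    funext j
    by_cases hj : j ∈ e <;> simp [jc, hj, h]

/-- `β'` refines `β`. -/
def Refines (β β' : Finset J → ((j : J) → V j) → ℕ) : Prop :=
  ∀ f x y, β' f x = β' f y → β f x = β f y

variable [∀ j, Fintype (V j)]

/-- The conditional expectation of `g` given the colours of the faces of `e`. -/
noncomputable def fcond (β : Finset J → ((j : J) → V j) → ℕ) (e : Finset J)
    (g : ((j : J) → V j) → ℝ) : ((j : J) → V j) → ℝ :=
  cexp (jc β e) g

/-- The conditional expectation `fcond`, truncated at `1`. -/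
noncomputable def tcond (β : Finset J → ((j : J) → V j) → ℕ) (e : Finset J)
    (g : ((j : J) → V j) → ℝ) (x : (j : J) → V j) : ℝ :=
  min (fcond β e g x) 1

/-- The mass lost by truncating the conditional expectation at `1`. -/
noncomputable def excess (β : Finset J → ((j : J) → V j) → ℕ) (e : Finset J)
    (g : ((j : J) → V j) → ℝ) : ℝ :=
  avg fun x => fcond β e g x - tcond β e g x

theorem dep_jc {β : Finset J → ((j : J) → V j) → ℕ} {m : ℕ} (h : IsCol β m) (e : Finset J) :
    Dep e (jc β e) := fun x y hxy => jc_eq_iff.mpr fun _ _ =>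
  (h _).1 x y fun i hi => hxy i (mem_of_mem_erase hi)

theorem tcond_congr {β : Finset J → ((j : J) → V j) → ℕ} {e : Finset J} (g : ((j : J) → V j) → ℝ)
    {x y : (j : J) → V j} (h : jc β e x = jc β e y) : tcond β e g x = tcond β e g y := by
  simp only [tcond, fcond, cexp_congr g h]

theorem dep_tcond {β : Finset J → ((j : J) → V j) → ℕ} {m : ℕ} (h : IsCol β m) (e : Finset J)
    (g : ((j : J) → V j) → ℝ) : Dep e (tcond β e g) := fun x y hxy =>
  tcond_congr g (dep_jc h e x y hxy)

theorem tcond_le_fcond (β : Finset J → ((j : J) → V j) → ℕ) (e : Finset J)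
    (g : ((j : J) → V j) → ℝ) (x : (j : J) → V j) : tcond β e g x ≤ fcond β e g x := min_le_left _ _

theorem tcond_le_one (β : Finset J → ((j : J) → V j) → ℕ) (e : Finset J)
    (g : ((j : J) → V j) → ℝ) (x : (j : J) → V j) : tcond β e g x ≤ 1 := min_le_right _ _

theorem tcond_nonneg (β : Finset J → ((j : J) → V j) → ℕ) (e : Finset J)
    {g : ((j : J) → V j) → ℝ} (hg : ∀ x, 0 ≤ g x) (x : (j : J) → V j) : 0 ≤ tcond β e g x :=
  le_min (cexp_nonneg _ hg x) zero_le_one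

theorem tcond_eq_fcond (β : Finset J → ((j : J) → V j) → ℕ) (e : Finset J)
    {g : ((j : J) → V j) → ℝ} (hg : ∀ x, g x ≤ 1) (x : (j : J) → V j) :
    tcond β e g x = fcond β e g x :=
  min_eq_left (cexp_le_one _ hg x)

/-- Refining a colouring increases the energy by the squared distance of the truncated conditional
expectations, up to the truncation error. -/
theorem energy_step {β β' : Finset J → ((j : J) → V j) → ℕ} (hr : Refines β β') (e : Finset J)
    {g : ((j : J) → V j) → ℝ} (hg : ∀ x, 0 ≤ g x) {τ : ℝ} (hτ : excess β' e g ≤ τ) :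
    avg (fun x => (tcond β' e g x - tcond β e g x) ^ 2) ≤
      avg (fun x => tcond β' e g x ^ 2) - avg (fun x => tcond β e g x ^ 2) + 2 * τ := by
  have h1 : avg (fun x => fcond β e g x * tcond β e g x) = avg (fun x => g x * tcond β e g x) :=
    avg_cexp_mul _ _ _ fun x y h => tcond_congr g h
  have h2 : avg (fun x => fcond β' e g x * tcond β e g x) = avg (fun x => g x * tcond β e g x) :=
    avg_cexp_mul _ _ _ fun x y h => tcond_congr g
      (jc_eq_iff.mpr fun j hj => hr _ _ _ (jc_eq_iff.mp h j hj))
  have h3 : avg (fun x => (tcond β' e g x - tcond β e g x) ^ 2) ≤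
      avg (fun x => (tcond β' e g x ^ 2 - tcond β e g x ^ 2)
        + 2 * ((fcond β e g x * tcond β e g x - fcond β' e g x * tcond β e g x)
          + (fcond β' e g x - tcond β' e g x))) := by
    refine avg_mono fun x => ?_
    have a1 := tcond_nonneg β e hg x
    have a2 := tcond_le_one β e g x
    have a3 := tcond_le_fcond β e g x
    have a4 := tcond_le_fcond β' e g x
    nlinarith [mul_nonneg a1 (sub_nonneg.mpr a3), mul_nonneg (sub_nonneg.mpr a2) (sub_nonneg.mpr a4)]
  rw [avg_add, avg_sub, avg_const_mul, avg_add, avg_sub, h1, h2] at h3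
  unfold excess at hτ
  linarith

/-- If `g - tcond β e g` is not uniform, splitting each face colour by the witness to
non-uniformity moves the truncated conditional expectation. -/
theorem refine_step [∀ j, Nonempty (V j)] {β : Finset J → ((j : J) → V j) → ℕ} {m : ℕ}
    (hβ : IsCol β m) {e : Finset J}
    {g : ((j : J) → V j) → ℝ} {u : ℝ}
    (hu : ¬ Unif e (fun x => g x - tcond β e g x) u) :
    ∃ β', Refines β β' ∧ IsCol β' (2 * m) ∧ ∀ τ ≤ u, excess β' e g ≤ τ →
      (u - τ) ^ 2 ≤ avg (fun x => (tcond β' e g x - tcond β e g x) ^ 2) := by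
  classical
  unfold Unif at hu
  push Not at hu
  obtain ⟨b, hb, hbu⟩ := hu
  let bit : Finset J → ((j : J) → V j) → ℕ := fun f x =>
    if ∃ j ∈ e, f = e.erase j ∧ x ∈ b j then 1 else 0
  have hbit : ∀ f x, bit f x < 2 := by
    intro f x; dsimp only [bit]; split_ifs <;> norm_num
  have hbit1 : ∀ j ∈ e, ∀ x, bit (e.erase j) x = 1 ↔ x ∈ b j := by
    intro j hj x
    dsimp only [bit]
    constructor
    · intro h
      split_ifs at h with h'
      obtain ⟨j', hj', hjj, hx⟩ := h'
      have : j = j' := Finset.erase_injOn e hj hj' hjj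
      rwa [this]
    · intro h
      rw [if_pos ⟨j, hj, rfl, h⟩]
  have href : ∀ f x y, 2 * β f x + bit f x = 2 * β f y + bit f y →
      β f x = β f y ∧ bit f x = bit f y := by
    intro f x y h
    have := hbit f x
    have := hbit f y
    omega
  have hr : Refines β (fun f x => 2 * β f x + bit f x) := fun f x y h => (href f x y h).1
  refine ⟨fun f x => 2 * β f x + bit f x, hr, ?_, ?_⟩
  · intro f
    refine ⟨(hβ f).1.comp₂ ?_ (fun a c => 2 * a + c), fun x => ?_⟩
    · intro x y hxy
      have : (∃ j ∈ e, f = e.erase j ∧ x ∈ b j) ↔ (∃ j ∈ e, f = e.erase j ∧ y ∈ b j) := by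
        refine exists_congr fun j => and_congr_right fun hj => and_congr_right fun hf => ?_
        exact iff_of_eq (hb j hj x y (hf ▸ hxy))
      dsimp only [bit]
      simp only [this]
    · have h1 := (hβ f).2 x
      have h2 := hbit f x
      dsimp only
      omega
  · intro τ hτu hτ
    set β' : Finset J → ((j : J) → V j) → ℕ := fun f x => 2 * β f x + bit f x with hβ'
    set ψ : ((j : J) → V j) → ℝ := fun x => ∏ j ∈ e, ind (b j) x with hψ
    have hψ0 : ∀ x, 0 ≤ ψ x := fun x => prod_nonneg fun j _ => ind_nonneg _ _
    have hψ1 : ∀ x, ψ x ≤ 1 := fun x =>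
      prod_le_one (fun j _ => ind_nonneg _ _) (fun j _ => ind_le_one _ _)
    have hψc : ∀ x y, jc β' e x = jc β' e y → ψ x = ψ y := by
      intro x y h
      refine prod_congr rfl fun j hj => ?_
      have h1 := (href _ _ _ (jc_eq_iff.mp h j hj)).2
      have h2 : x ∈ b j ↔ y ∈ b j := by rw [← hbit1 j hj, ← hbit1 j hj, h1]
      by_cases hx : x ∈ b j
      · rw [ind_of_mem hx, ind_of_mem (h2.mp hx)]
      · rw [ind_of_notMem hx, ind_of_notMem (fun h => hx (h2.mpr h))]
    have h1 : avg (fun x => fcond β' e g x * ψ x) = avg (fun x => g x * ψ x) :=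
      avg_cexp_mul _ _ _ hψc
    have h2 : avg (fun x => (g x - tcond β e g x) * ψ x)
        = avg (fun x => (tcond β' e g x - tcond β e g x) * ψ x)
          + avg (fun x => (fcond β' e g x - tcond β' e g x) * ψ x) := by
      simp only [sub_mul, avg_sub]
      rw [h1]; ring
    have h3 : |avg (fun x => (tcond β' e g x - tcond β e g x) * ψ x)|
        ≤ avg (fun x => |tcond β' e g x - tcond β e g x|) := by
      refine (abs_avg_le _).trans (avg_mono fun x => ?_)
      rw [abs_mul, abs_of_nonneg (hψ0 x)]
      exact mul_le_of_le_one_right (abs_nonneg _) (hψ1 x)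
    have h4 : |avg (fun x => (fcond β' e g x - tcond β' e g x) * ψ x)| ≤ τ := by
      refine ((abs_avg_le _).trans (avg_mono fun x => ?_)).trans hτ
      have := sub_nonneg.mpr (tcond_le_fcond β' e g x)
      rw [abs_mul, abs_of_nonneg (hψ0 x), abs_of_nonneg this]
      exact mul_le_of_le_one_right this (hψ1 x)
    have h5 : u - τ ≤ avg (fun x => |tcond β' e g x - tcond β e g x|) := by
      have := abs_add_le (avg (fun x => (tcond β' e g x - tcond β e g x) * ψ x))
        (avg (fun x => (fcond β' e g x - tcond β' e g x) * ψ x))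
      rw [← h2] at this
      linarith
    calc (u - τ) ^ 2 ≤ (avg (fun x => |tcond β' e g x - tcond β e g x|)) ^ 2 :=
          pow_le_pow_left₀ (by linarith) h5 2
      _ ≤ _ := avg_sq_le
      _ = _ := by simp only [sq_abs]

/-- The total energy of a family of functions `g i` on edges `E i` relative to a colouring. -/
noncomputable def energy {I : Type} [Fintype I] (E : I → Finset J) (g : I → ((j : J) → V j) → ℝ)
    (β : Finset J → ((j : J) → V j) → ℕ) : ℝ :=
  ∑ i, avg fun x => tcond β (E i) (g i) x ^ 2

theorem energy_le [∀ j, Nonempty (V j)] {I : Type} [Fintype I] (E : I → Finset J)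
    {g : I → ((j : J) → V j) → ℝ} (hg : ∀ i x, 0 ≤ g i x)
    (β : Finset J → ((j : J) → V j) → ℕ) : energy E g β ≤ Fintype.card I := by
  calc energy E g β ≤ ∑ i : I, (1 : ℝ) := sum_le_sum fun i _ => avg_le_const fun x =>
        pow_le_one₀ (tcond_nonneg _ _ (hg i) x) (tcond_le_one _ _ _ x)
    _ = _ := by simp

/-- Weak regularity by energy increment: at most `N` refinements make every `g i` uniform relative
to its truncated conditional expectation. The truncation errors are assumed to be negligible. -/
theorem weak_reg_aux [∀ j, Nonempty (V j)] {I : Type} [Fintype I] (E : I → Finset J)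
    {g : I → ((j : J) → V j) → ℝ} (hg : ∀ i x, 0 ≤ g i x) {u : ℝ} (hu : 0 < u) (hu1 : u ≤ 1)
    (N : ℕ) : ∀ (m : ℕ) (β : Finset J → ((j : J) → V j) → ℕ), IsCol β m →
      Fintype.card I - N * (u ^ 2 / 4) < energy E g β →
      (∀ β'', IsCol β'' (m * 2 ^ N) → ∀ i, excess β'' (E i) (g i) ≤
        u ^ 2 / (16 * (Fintype.card I + 1))) →
      ∃ β', Refines β β' ∧ IsCol β' (m * 2 ^ N) ∧
        ∀ i, Unif (E i) (fun x => g i x - tcond β' (E i) (g i) x) u := by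
  induction N with
  | zero =>
    intro m β _ he _
    have := energy_le E hg β
    simp at he
    linarith
  | succ N ih =>
    intro m β hβ he hex
    by_cases hall : ∀ i, Unif (E i) (fun x => g i x - tcond β (E i) (g i) x) u
    · exact ⟨β, fun _ _ _ h => h, hβ.mono (Nat.le_mul_of_pos_right m (by positivity)), hall⟩
    · push Not at hall
      obtain ⟨i, hi⟩ := hall
      obtain ⟨β', hr, hβ', hinc⟩ := refine_step hβ hi
      set n : ℝ := (Fintype.card I : ℝ) with hn
      have hn0 : 0 ≤ n := Nat.cast_nonneg _
      set τ : ℝ := u ^ 2 / (16 * (n + 1)) with hτ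
      have hτ0 : 0 ≤ τ := by positivity
      have hτn : n * τ ≤ u ^ 2 / 16 := by
        rw [hτ, ← mul_div_assoc, div_le_div_iff₀ (by positivity) (by positivity)]
        nlinarith [sq_nonneg u]
      have hτ1 : τ ≤ u ^ 2 / 16 := by
        rw [hτ]
        exact div_le_div_of_nonneg_left (by positivity) (by positivity) (by linarith)
      have hτu : τ ≤ u / 16 := by nlinarith
      have e1 : 2 * m * 2 ^ N = m * 2 ^ (N + 1) := by ring
      have hβ'' : IsCol β' (m * 2 ^ (N + 1)) := by
        rw [← e1]; exact hβ'.mono (Nat.le_mul_of_pos_right _ (by positivity))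
      have hstep : energy E g β + u ^ 2 / 4 ≤ energy E g β' := by
        have h1 : ∀ k, avg (fun x => (tcond β' (E k) (g k) x - tcond β (E k) (g k) x) ^ 2) - 2 * τ ≤
            avg (fun x => tcond β' (E k) (g k) x ^ 2) - avg (fun x => tcond β (E k) (g k) x ^ 2) := by
          intro k
          have := energy_step hr (E k) (hg k) (hex β' hβ'' k)
          linarith
        have h2 : (u - τ) ^ 2 ≤ ∑ k, avg (fun x =>
            (tcond β' (E k) (g k) x - tcond β (E k) (g k) x) ^ 2) :=
          (hinc τ (by linarith) (hex β' hβ'' i)).trans (single_le_sum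
            (f := fun k => avg (fun x => (tcond β' (E k) (g k) x - tcond β (E k) (g k) x) ^ 2))
            (fun k _ => avg_nonneg fun x => sq_nonneg _) (mem_univ i))
        have h3 := sum_le_sum fun k (_ : k ∈ univ) => h1 k
        rw [sum_sub_distrib, sum_sub_distrib, sum_const, card_univ, nsmul_eq_mul] at h3
        unfold energy
        nlinarith
      obtain ⟨β₂, hr₂, hβ₂, hU⟩ := ih (2 * m) β' hβ' (by push_cast at he; linarith)
        (by rw [e1]; exact hex)
      exact ⟨β₂, fun f x y h => hr f x y (hr₂ f x y h), e1 ▸ hβ₂, hU⟩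

/-- The number of refinements that suffice in the weak regularity lemma. -/
noncomputable def wN (n : ℕ) (u : ℝ) : ℕ := ⌈4 * n / u ^ 2⌉₊ + 1

theorem weak_reg [∀ j, Nonempty (V j)] {I : Type} [Fintype I] (E : I → Finset J)
    {g : I → ((j : J) → V j) → ℝ} (hg : ∀ i x, 0 ≤ g i x) {u : ℝ} (hu : 0 < u) (hu1 : u ≤ 1)
    {m : ℕ} {β : Finset J → ((j : J) → V j) → ℕ} (hβ : IsCol β m)
    (hex : ∀ β'', IsCol β'' (m * 2 ^ wN (Fintype.card I) u) → ∀ i, excess β'' (E i) (g i) ≤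
        u ^ 2 / (16 * (Fintype.card I + 1))) :
    ∃ β', Refines β β' ∧ IsCol β' (m * 2 ^ wN (Fintype.card I) u) ∧
        ∀ i, Unif (E i) (fun x => g i x - tcond β' (E i) (g i) x) u := by
  refine weak_reg_aux E hg hu hu1 _ m β hβ ?_ hex
  have h0 : 0 ≤ energy E g β := sum_nonneg fun i _ => avg_nonneg fun x => sq_nonneg _
  have h1 := Nat.le_ceil (4 * (Fintype.card I : ℝ) / u ^ 2)
  have h2 : 0 < u ^ 2 := by positivity
  rw [div_le_iff₀ h2] at h1
  unfold wN
  push_cast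
  nlinarith

theorem excess_eq_zero {β : Finset J → ((j : J) → V j) → ℕ} {e : Finset J}
    {g : ((j : J) → V j) → ℝ} (hg : ∀ x, g x ≤ 1) : excess β e g = 0 := by
  simp [excess, tcond_eq_fcond β e hg, avg]

end Regularity

/-- Strong regularity lemma: a coarse colouring with `m` colours and a refinement of it, such that
the two conditional expectations are `κ`-close in mean square while the refinement makes every
`g i` uniform to within `u m`. Here `u` is an arbitrary function of the coarse complexity. -/
theorem strong_reg_aux (J : Type) [Fintype J] [DecidableEq J] (n : ℕ) {κ : ℝ} (u : ℕ → ℝ)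
    (hu : ∀ m, 0 < u m ∧ u m ≤ 1) (s : ℕ) : ∀ m₀ : ℕ, ∃ mMax : ℕ, ∀ (V : J → Type)
      [∀ j, Fintype (V j)] [∀ j, Nonempty (V j)] (I : Type) [Fintype I] (E : I → Finset J)
      (g : I → ((j : J) → V j) → ℝ), Fintype.card I = n → (∀ i x, 0 ≤ g i x ∧ g i x ≤ 1) →
      ∀ β, IsCol β m₀ → n - s * κ < energy E g β →
      ∃ m ≤ mMax, ∃ β₁ β₂ : Finset J → ((j : J) → V j) → ℕ, IsCol β₁ m ∧ (∃ m₂, IsCol β₂ m₂) ∧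
        (∀ i, avg (fun x => (tcond β₂ (E i) (g i) x - tcond β₁ (E i) (g i) x) ^ 2) ≤ κ) ∧
        ∀ i, Unif (E i) (fun x => g i x - tcond β₂ (E i) (g i) x) (u m) := by
  induction s with
  | zero =>
    intro m₀
    refine ⟨0, fun V _ _ I _ E g hn hg β _ he => ?_⟩
    have := energy_le E (fun i x => (hg i x).1) β
    rw [hn] at this
    simp at he
    linarith
  | succ s ih =>
    intro m₀
    obtain ⟨M₁, hM₁⟩ := ih (m₀ * 2 ^ wN n (u m₀))
    refine ⟨max m₀ M₁, fun V _ _ I _ E g hn hg β hβ he => ?_⟩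
    have hpos : (0 : ℝ) ≤ u m₀ ^ 2 / (16 * (Fintype.card I + 1)) := by positivity
    obtain ⟨β', hr, hβ', hU⟩ := weak_reg E (fun i x => (hg i x).1) (hu m₀).1 (hu m₀).2 hβ
      (fun β'' _ i => by rw [excess_eq_zero fun x => (hg i x).2]; exact hpos)
    rw [hn] at hβ'
    have h1 : ∀ i, avg (fun x => (tcond β' (E i) (g i) x - tcond β (E i) (g i) x) ^ 2) ≤
        avg (fun x => tcond β' (E i) (g i) x ^ 2) - avg (fun x => tcond β (E i) (g i) x ^ 2) := by
      intro i
      have := energy_step hr (E i) (fun x => (hg i x).1)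
        (le_of_eq (excess_eq_zero (β := β') (e := E i) fun x => (hg i x).2))
      linarith
    by_cases hc : energy E g β' ≤ energy E g β + κ
    · refine ⟨m₀, le_max_left _ _, β, β', hβ, ⟨_, hβ'⟩, fun i => ?_, hU⟩
      have h2 := single_le_sum (f := fun i => avg (fun x => tcond β' (E i) (g i) x ^ 2)
          - avg (fun x => tcond β (E i) (g i) x ^ 2))
        (fun i _ => (avg_nonneg fun x => sq_nonneg _).trans (h1 i)) (mem_univ i)
      rw [sum_sub_distrib] at h2
      unfold energy at hc
      linarith [h1 i]
    · obtain ⟨m, hm, h⟩ := hM₁ V I E g hn hg β' hβ' (by push_cast at he; linarith)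
      exact ⟨m, hm.trans (le_max_right _ _), h⟩

theorem strong_reg (J : Type) [Fintype J] [DecidableEq J] (n : ℕ) {κ : ℝ} (hκ : 0 < κ) (u : ℕ → ℝ)
    (hu : ∀ m, 0 < u m ∧ u m ≤ 1) : ∃ mMax : ℕ, ∀ (V : J → Type)
      [∀ j, Fintype (V j)] [∀ j, Nonempty (V j)] (I : Type) [Fintype I] (E : I → Finset J)
      (g : I → ((j : J) → V j) → ℝ), Fintype.card I = n → (∀ i x, 0 ≤ g i x ∧ g i x ≤ 1) →
      ∃ m ≤ mMax, ∃ β₁ β₂ : Finset J → ((j : J) → V j) → ℕ, IsCol β₁ m ∧ (∃ m₂, IsCol β₂ m₂) ∧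
        (∀ i, avg (fun x => (tcond β₂ (E i) (g i) x - tcond β₁ (E i) (g i) x) ^ 2) ≤ κ) ∧
        ∀ i, Unif (E i) (fun x => g i x - tcond β₂ (E i) (g i) x) (u m) := by
  obtain ⟨mMax, h⟩ := strong_reg_aux J n (κ := κ) u hu (⌈n / κ⌉₊ + 1) 1
  refine ⟨mMax, fun V _ _ I _ E g hn hg => h V I E g hn hg (fun _ _ => 0)
    (fun f => ⟨fun _ _ _ => rfl, fun _ => Nat.one_pos⟩) ?_⟩
  have h0 : 0 ≤ energy E g (fun _ _ => 0) := sum_nonneg fun i _ => avg_nonneg fun x => sq_nonneg _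
  have h1 := Nat.le_ceil ((n : ℝ) / κ)
  rw [div_le_iff₀ hκ] at h1
  push_cast
  nlinarith

/-! ### Cells of a colouring of a complex -/

section Cells

/-- The points whose colours on the faces `f ∈ K` with `|f| ≤ k` and `f ⊆ a` are prescribed by
`τ`. -/
def cell (K : Finset (Finset J)) (k : ℕ) (γ : Finset J → ((j : J) → V j) → ℕ) (τ : Finset J → ℕ)
    (a : Finset J) : Set ((j : J) → V j) :=
  {y | ∀ f ∈ K.filter (fun f => f.card ≤ k ∧ f ⊆ a), y ∈ {z | γ f z = τ f}}

theorem mem_cell {K : Finset (Finset J)} {k : ℕ} {γ : Finset J → ((j : J) → V j) → ℕ}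
    {τ : Finset J → ℕ} {a : Finset J} {y : (j : J) → V j} :
    y ∈ cell K k γ τ a ↔ ∀ f ∈ K, f.card ≤ k → f ⊆ a → γ f y = τ f := by
  constructor
  · intro h f hf hk ha
    exact h f (mem_filter.mpr ⟨hf, hk, ha⟩)
  · intro h f hf
    rw [mem_filter] at hf
    exact h f hf.1 hf.2.1 hf.2.2

variable [∀ j, Fintype (V j)]

/-- The regularity package at level `k`: for most `x`, the cell structure of the complex `K` up to
level `k` seen from `x` is rich. Here `D e c` is the set of points from whose point of view colour
`c` on the edge `e` of size `k` is bad. If no edge is bad then the global cell has mass at least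
`δ`, and the law of the coordinates in `a` conditioned on the global cell is within `ε`
of the law conditioned on the local cell `cell K k γ τ a`. -/
structure CellReg (K : Finset (Finset J)) (k : ℕ) (γ : Finset J → ((j : J) → V j) → ℕ)
    (D : Finset J → ℕ → Set ((j : J) → V j)) (ε δ : ℝ) : Prop where
  small : ∀ e ∈ K, e.card = k → avg (ind {x | x ∈ D e (γ e x)}) ≤ ε
  inv : ∀ e, e.card = k → ∀ c x y, (∀ f, f ⊂ e → γ f x = γ f y) → (x ∈ D e c ↔ y ∈ D e c)
  mass : ∀ x τ, (∀ f ∈ K, f.card < k → τ f = γ f x) →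
    (∀ e ∈ K, e.card = k → x ∉ D e (τ e)) → δ ≤ avg (ind (cell K k γ τ univ))
  dist : ∀ x τ, (∀ f ∈ K, f.card < k → τ f = γ f x) →
    (∀ e ∈ K, e.card = k → x ∉ D e (τ e)) →
    ∀ (a : Finset J) (h : ((j : J) → V j) → ℝ), Dep a h → (∀ y, 0 ≤ h y ∧ h y ≤ 1) →
      avg (fun y => h y * ind (cell K k γ τ univ) y) * avg (ind (cell K k γ τ a)) ≤
        (avg (fun y => h y * ind (cell K k γ τ a) y) + ε * avg (ind (cell K k γ τ a))) *
          avg (ind (cell K k γ τ univ))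

theorem cellReg_zero [∀ j, Nonempty (V j)] (K : Finset (Finset J))
    {B : Finset J → ((j : J) → V j) → ℕ} (hB : Dep ∅ (B ∅)) {ε : ℝ} (hε : 0 ≤ ε) :
    CellReg K 0 B (fun e c => {x | B e x ≠ c}) ε 1 := by
  have hcell : ∀ x τ, (∀ e ∈ K, e.card = 0 → x ∉ {x | B e x ≠ τ e}) → ∀ a y,
      ind (cell K 0 B τ a) y = 1 := by
    intro x τ h a y
    refine ind_of_mem (mem_cell.mpr fun f hf hk _ => ?_)
    have h0 : f.card = 0 := by omega
    have h1 : ¬ (B f x ≠ τ f) := h f hf h0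
    obtain rfl := card_eq_zero.mp h0
    rw [← not_not.mp h1]
    exact hB _ _ (by simp)
  refine ⟨fun e _ _ => ?_, fun e he c x y _ => ?_, fun x τ _ h => ?_, fun x τ _ h a g _ hg => ?_⟩
  · refine (avg_le_const fun x => le_of_eq (ind_of_notMem ?_)).trans hε
    intro h
    exact h rfl
  · obtain rfl := card_eq_zero.mp he
    have : B ∅ x = B ∅ y := hB _ _ (by simp)
    show B ∅ x ≠ c ↔ B ∅ y ≠ c
    rw [this]
  · simp only [funext (hcell x τ h univ), avg_const, le_refl]
  · simp only [funext (hcell x τ h _), avg_const, mul_one]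
    linarith

end Cells

/-- Telescoping: replacing indicators by constants one at a time. -/
theorem telescope_const [∀ j, Fintype (V j)] {ι : Type*} [DecidableEq ι] (Q : Finset ι)
    (ψ : ((j : J) → V j) → ℝ) (F : ι → ((j : J) → V j) → ℝ) (c : ι → ℝ)
    (hc : ∀ e ∈ Q, 0 ≤ c e ∧ c e ≤ 1) {err : ℝ}
    (herr : ∀ S ⊆ Q, ∀ e ∈ Q, e ∉ S → |avg fun y => (F e y - c e) * (ψ y * ∏ i ∈ S, F i y)| ≤ err) :
    |avg (fun y => ψ y * ∏ i ∈ Q, F i y) - (∏ i ∈ Q, c i) * avg ψ| ≤ Q.card * err := by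
  suffices H : ∀ S ⊆ Q, |avg (fun y => ψ y * ∏ i ∈ S, F i y) - (∏ i ∈ S, c i) * avg ψ|
      ≤ S.card * err from H Q subset_rfl
  intro S
  induction S using Finset.induction_on with
  | empty => intro _; simp
  | insert e S he ih =>
    intro hS
    have hS' : S ⊆ Q := fun i hi => hS (mem_insert_of_mem hi)
    have heQ : e ∈ Q := hS (mem_insert_self _ _)
    have h1 := herr S hS' e heQ he
    have h2 := ih hS'
    have h3 : avg (fun y => ψ y * ∏ i ∈ insert e S, F i y)
        = avg (fun y => (F e y - c e) * (ψ y * ∏ i ∈ S, F i y))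
          + c e * avg (fun y => ψ y * ∏ i ∈ S, F i y) := by
      rw [← avg_const_mul, ← avg_add]
      refine avg_congr fun y => ?_
      rw [prod_insert he]; ring
    have h4 : avg (fun y => ψ y * ∏ i ∈ insert e S, F i y) - (∏ i ∈ insert e S, c i) * avg ψ
        = avg (fun y => (F e y - c e) * (ψ y * ∏ i ∈ S, F i y))
          + c e * (avg (fun y => ψ y * ∏ i ∈ S, F i y) - (∏ i ∈ S, c i) * avg ψ) := by
      rw [h3, prod_insert he]; ring
    rw [h4, card_insert_of_notMem he]
    refine (abs_add_le _ _).trans ?_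
    rw [abs_mul, abs_of_nonneg (hc e heQ).1]
    have h5 := mul_le_of_le_one_left (abs_nonneg
      (avg (fun y => ψ y * ∏ i ∈ S, F i y) - (∏ i ∈ S, c i) * avg ψ)) (hc e heQ).2
    push_cast
    linarith

/-- The arithmetic behind the transfer of closeness of conditional laws from one level to the
next. -/
theorem cell_arith {X X0 pa w Y Y0 Z Z0 P ε θ θ' : ℝ} (hpa : 0 < pa) (hw : 0 < w)
    (hX : 0 ≤ X) (hXX : X ≤ X0) (hP0 : 0 ≤ P) (hP1 : P ≤ 1) (hθ' : 0 ≤ θ')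
    (hY : |Y - P * Z| ≤ θ * w) (hZ : |Z * pa - X * w| ≤ θ' * pa * w)
    (hY0 : |Y0 - P * Z0| ≤ θ * w) (hZ0 : |Z0 * pa - X0 * w| ≤ θ' * pa * w)
    (hε : 2 * (θ + θ') * w ≤ ε * Y0) : Y * X0 ≤ (X + ε * X0) * Y0 := by
  rw [abs_le] at *
  have e0 : 0 ≤ θ' * pa * w := by positivity
  have hX0 : 0 ≤ X0 := hX.trans hXX
  have hθ : 0 ≤ θ * w := by linarith
  have a1 : Y * pa ≤ P * X * w + (θ + θ') * pa * w := by
    have h1 : Y * pa ≤ (P * Z + θ * w) * pa := mul_le_mul_of_nonneg_right (by linarith) hpa.le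
    have h2 : P * (Z * pa) ≤ P * (X * w + θ' * pa * w) :=
      mul_le_mul_of_nonneg_left (by linarith) hP0
    have h3 : P * (θ' * pa * w) ≤ θ' * pa * w := mul_le_of_le_one_left e0 hP1
    nlinarith
  have a2 : P * X0 * w - (θ + θ') * pa * w ≤ Y0 * pa := by
    have h1 : (P * Z0 - θ * w) * pa ≤ Y0 * pa := mul_le_mul_of_nonneg_right (by linarith) hpa.le
    have h2 : P * (X0 * w - θ' * pa * w) ≤ P * (Z0 * pa) :=
      mul_le_mul_of_nonneg_left (by linarith) hP0
    have h3 : P * (θ' * pa * w) ≤ θ' * pa * w := mul_le_of_le_one_left e0 hP1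
    nlinarith
  have b1 := mul_le_mul_of_nonneg_right a1 hX0
  have b2 := mul_le_mul_of_nonneg_right a2 hX
  have b3 : (θ + θ') * pa * w * X ≤ (θ + θ') * pa * w * X0 :=
    mul_le_mul_of_nonneg_left hXX (by nlinarith)
  have b4 := mul_le_mul_of_nonneg_right hε (mul_nonneg hX0 hpa.le)
  have : Y * X0 * pa ≤ (X + ε * X0) * Y0 * pa := by nlinarith
  exact le_of_mul_le_mul_right this hpa

section CellStep

variable [∀ j, Fintype (V j)] [∀ j, Nonempty (V j)]

theorem ind_cell_succ (K : Finset (Finset J)) (k : ℕ) (γ B : Finset J → ((j : J) → V j) → ℕ)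
    (τ : Finset J → ℕ) (a : Finset J) (y : (j : J) → V j) :
    ind (cell K (k + 1) (fun f => if f.card ≤ k then γ f else B f) τ a) y =
      ind (cell K k γ τ a) y *
        ∏ e ∈ K.filter (fun e => e.card = k + 1 ∧ e ⊆ a), ind {z | B e z = τ e} y := by
  rw [← ind_forall, ← ind_inter]
  congr 1
  ext z
  rw [mem_cell, Set.mem_inter_iff, mem_cell]
  constructor
  · intro h
    refine ⟨fun f hf hk ha => ?_, fun e he => ?_⟩
    · have := h f hf (by omega) ha
      rwa [if_pos hk] at this
    · rw [mem_filter] at he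
      have := h e he.1 he.2.1.le he.2.2
      rwa [if_neg (by omega)] at this
  · rintro ⟨h1, h2⟩ f hf hk ha
    by_cases hk' : f.card ≤ k
    · rw [if_pos hk']; exact h1 f hf hk' ha
    · rw [if_neg hk']
      exact h2 f (mem_filter.mpr ⟨hf, by omega, ha⟩)

/-- Passing from level `k` to level `k + 1` at a point `x` from whose point of view all densities
`p e x` are at least `t`, and the regular approximations `q e` are close to `p e` on the local
cell. -/
theorem cell_step {K : Finset (Finset J)} (hK : ∀ e ∈ K, ∀ f ⊆ e, f ∈ K) {k : ℕ}
    {γ B : Finset J → ((j : J) → V j) → ℕ} (hγ : ∀ f, Dep f (γ f)) (hB : ∀ f, Dep f (B f))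
    {D : Finset J → ℕ → Set ((j : J) → V j)} {ε' δ' : ℝ} (hreg : CellReg K k γ D ε' δ')
    (hδ' : 0 < δ') {x : (j : J) → V j} {τ : Finset J → ℕ}
    (hτ : ∀ f ∈ K, f.card ≤ k → τ f = γ f x)
    (hx : ∀ f ∈ K, f.card = k → x ∉ D f (γ f x))
    {p q : Finset J → ((j : J) → V j) → ℝ} {t ε : ℝ} {N : ℕ} (ht : 0 < t) (ht1 : t ≤ 1)
    (hε : 0 < ε) (hε1 : ε ≤ 1) (hN : 0 < N) (hKN : K.card ≤ N)
    (hε' : ε' = ε * t ^ N / (16 * N))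
    (hU : ∀ e ∈ K, e.card = k + 1 →
      Unif e (fun y => ind {z | B e z = τ e} y - q e y) (ε' * δ'))
    (hqd : ∀ e ∈ K, e.card = k + 1 → Dep e (q e))
    (hpd : ∀ e ∈ K, e.card = k + 1 → Dep e (p e))
    (hpc : ∀ e ∈ K, e.card = k + 1 → ∀ y, (∀ f, f ⊂ e → γ f y = γ f x) → p e y = p e x)
    (hpt : ∀ e ∈ K, e.card = k + 1 → t ≤ p e x ∧ p e x ≤ 1)
    (hd1 : ∀ e ∈ K, e.card = k + 1 → ∀ y, |q e y - p e y| ≤ 1)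
    (hd : ∀ e ∈ K, e.card = k + 1 →
      avg (fun y => |q e y - p e y| * ind {y | ∀ f, f ⊂ e → γ f y = γ f x} y) ≤
        ε' * avg (ind {y | ∀ f, f ⊂ e → γ f y = γ f x})) :
    δ' * (t ^ N / 2) ≤
        avg (ind (cell K (k + 1) (fun f => if f.card ≤ k then γ f else B f) τ univ)) ∧
    ∀ (a : Finset J) (h : ((j : J) → V j) → ℝ), Dep a h → (∀ y, 0 ≤ h y ∧ h y ≤ 1) →
      avg (fun y => h y *
          ind (cell K (k + 1) (fun f => if f.card ≤ k then γ f else B f) τ univ) y) *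
        avg (ind (cell K (k + 1) (fun f => if f.card ≤ k then γ f else B f) τ a)) ≤
        (avg (fun y => h y *
          ind (cell K (k + 1) (fun f => if f.card ≤ k then γ f else B f) τ a) y) +
          ε * avg (ind (cell K (k + 1) (fun f => if f.card ≤ k then γ f else B f) τ a))) *
          avg (ind (cell K (k + 1) (fun f => if f.card ≤ k then γ f else B f) τ univ)) := by
  have hτ' : ∀ f ∈ K, f.card < k → τ f = γ f x := fun f hf hk => hτ f hf hk.le
  have hx' : ∀ f ∈ K, f.card = k → x ∉ D f (τ f) := fun f hf hk => by
    rw [hτ f hf hk.le]; exact hx f hf hk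
  set W : Finset J → Set ((j : J) → V j) := fun a => cell K k γ τ a with hW
  set A : Finset J → ((j : J) → V j) → ℝ := fun e => ind {z | B e z = τ e} with hA
  set E : Finset J → Finset (Finset J) :=
    fun a => K.filter (fun e => e.card = k + 1 ∧ e ⊆ a) with hE
  set Q : Finset J → Finset (Finset J) :=
    fun a => K.filter (fun e => e.card = k + 1 ∧ ¬ e ⊆ a) with hQ
  have hA01 : ∀ e y, 0 ≤ A e y ∧ A e y ≤ 1 := fun e y => ⟨ind_nonneg _ _, ind_le_one _ _⟩
  have hAd : ∀ e, Dep e (A e) := fun e => Dep.ind ((hB e).comp (fun c => c = τ e))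
  set w := avg (ind (W univ)) with hw
  have hw' : δ' ≤ w := hreg.mass x τ hτ' hx'
  have hw0 : 0 < w := hδ'.trans_le hw'
  have hdist := hreg.dist x τ hτ' hx'
  have hWsub : ∀ a, W univ ⊆ W a := fun a y hy => mem_cell.mpr fun f hf hk _ =>
    mem_cell.mp hy f hf hk (subset_univ _)
  have hpa : ∀ a, w ≤ avg (ind (W a)) := fun a => avg_mono fun y => ind_mono (hWsub a) y
  have hε'0 : 0 < ε' := by rw [hε']; positivity
  have hWe : ∀ e ∈ K, e.card = k + 1 → W e = {y | ∀ f, f ⊂ e → γ f y = γ f x} := by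
    intro e he hek
    ext y
    rw [hW]
    refine mem_cell.trans ⟨fun h f hf => ?_, fun h f hf hk ha => ?_⟩
    · have hfk : f.card ≤ k := by have := card_lt_card hf; omega
      rw [h f (hK e he f hf.1) hfk hf.1, hτ f (hK e he f hf.1) hfk]
    · rw [hτ f hf hk]
      refine h f (Finset.ssubset_iff_subset_ne.mpr ⟨ha, ?_⟩)
      rintro rfl
      omega
  have hindW : ∀ y, ind (W univ) y =
      ∏ f ∈ K.filter (fun f => f.card ≤ k ∧ f ⊆ univ), ind {z | γ f z = τ f} y :=
    fun y => ind_forall _ _ _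
  -- the error committed in replacing one edge indicator by its density at `x`
  have hone : ∀ (a : Finset J) (h : ((j : J) → V j) → ℝ), Dep a h → (∀ y, 0 ≤ h y ∧ h y ≤ 1) →
      |avg (fun y => (h y * ind (W univ) y) * ∏ e ∈ Q a, A e y)
        - (∏ e ∈ Q a, p e x) * avg (fun y => h y * ind (W univ) y)| ≤ N * (3 * ε') * w := by
    intro a h hh h01
    have hQa : ∀ e ∈ Q a, e ∈ K ∧ e.card = k + 1 ∧ ¬ e ⊆ a := fun e he => mem_filter.mp he
    have key := telescope_const (Q a) (fun y => h y * ind (W univ) y) A (fun e => p e x)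
      (fun e he => ⟨ht.le.trans (hpt e (hQa e he).1 (hQa e he).2.1).1,
        (hpt e (hQa e he).1 (hQa e he).2.1).2⟩) (err := 3 * ε' * w) ?_
    · refine key.trans ?_
      have : ((Q a).card : ℝ) ≤ N := by exact_mod_cast (card_filter_le _ _).trans hKN
      nlinarith [mul_pos hε'0 hw0]
    intro S hS e he heS
    obtain ⟨heK, hek, hea⟩ := hQa e he
    have hene : e.Nonempty := card_pos.mp (by omega)
    set G : ((j : J) → V j) → ℝ := fun y => h y * ind (W univ) y * ∏ i ∈ S, A i y with hG
    have hG0 : ∀ y, 0 ≤ G y := fun y =>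
      mul_nonneg (mul_nonneg (h01 y).1 (ind_nonneg _ _)) (prod_nonneg fun i _ => (hA01 i y).1)
    have hGW : ∀ y, G y ≤ ind (W univ) y := fun y => by
      have h1 : h y * ind (W univ) y ≤ ind (W univ) y :=
        mul_le_of_le_one_left (ind_nonneg _ _) (h01 y).2
      have h2 : ∏ i ∈ S, A i y ≤ 1 :=
        prod_le_one (fun i _ => (hA01 i y).1) (fun i _ => (hA01 i y).2)
      exact (mul_le_of_le_one_right (mul_nonneg (h01 y).1 (ind_nonneg _ _)) h2).trans h1
    have hGF : FaceProd e G := by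
      refine ((FaceProd.of_dep hea hh h01).mul ?_).mul
        (FaceProd.prod hene _ fun i hi => FaceProd.of_dep ?_ (hAd i) (hA01 i))
      · rw [funext hindW]
        refine FaceProd.prod hene _ fun f hf => FaceProd.of_dep (a := f) ?_
          (Dep.ind ((hγ f).comp (fun c => c = τ f))) fun y => ⟨ind_nonneg _ _, ind_le_one _ _⟩
        intro hef
        have := card_le_card hef
        have := (mem_filter.mp hf).2.1
        omega
      · intro hei
        have h1 := (hQa i (hS hi)).2.1
        have := eq_of_subset_of_card_le hei (by omega)
        exact heS (this ▸ hi)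
    have hu := (hU e heK hek).faceProd ((hAd e).comp₂ (hqd e heK hek) (· - ·)) hGF
    -- on the cell, `p e` is constant
    have hpG : ∀ y, (p e y - p e x) * G y = 0 := by
      intro y
      by_cases hy : y ∈ W univ
      · have : y ∈ W e := hWsub e hy
        rw [hWe e heK hek] at this
        rw [hpc e heK hek y this, sub_self, zero_mul]
      · simp [hG, ind_of_notMem hy]
    have hdiff : |avg (fun y => (q e y - p e y) * G y)| ≤ 2 * ε' * w := by
      have h1 : |avg (fun y => (q e y - p e y) * G y)| ≤
          avg (fun y => |q e y - p e y| * ind (W univ) y) := by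
        refine (abs_avg_le _).trans (avg_mono fun y => ?_)
        rw [abs_mul, abs_of_nonneg (hG0 y)]
        exact mul_le_mul_of_nonneg_left (hGW y) (abs_nonneg _)
      refine h1.trans ?_
      have h2 := hdist e (fun y => |q e y - p e y|)
        ((hqd e heK hek).comp₂ (hpd e heK hek) (fun a b => |a - b|))
        (fun y => ⟨abs_nonneg _, hd1 e heK hek y⟩)
      have h3 := hd e heK hek
      rw [← hWe e heK hek] at h3
      have h4 : 0 < avg (ind (W e)) := hw0.trans_le (hpa e)
      refine le_of_mul_le_mul_right (h2.trans ?_) h4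
      have : avg (fun y => |q e y - p e y| * ind (W e) y) * w ≤ ε' * avg (ind (W e)) * w :=
        mul_le_mul_of_nonneg_right h3 hw0.le
      rw [add_mul]
      linarith
    have hsplit : avg (fun y => (A e y - p e x) * G y) =
        avg (fun y => (A e y - q e y) * G y) + avg (fun y => (q e y - p e y) * G y) := by
      rw [← avg_add]
      refine avg_congr fun y => ?_
      linarith [hpG y]
    rw [hsplit]
    refine (abs_add_le _ _).trans ?_
    have : ε' * δ' ≤ ε' * w := mul_le_mul_of_nonneg_left hw' hε'0.le
    have hu' : |avg (fun y => (A e y - q e y) * G y)| ≤ ε' * δ' := hu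
    linarith
  have hPi : ∀ a, t ^ N ≤ ∏ e ∈ Q a, p e x ∧ ∏ e ∈ Q a, p e x ≤ 1 := by
    intro a
    have hQa : ∀ e ∈ Q a, t ≤ p e x ∧ p e x ≤ 1 := fun e he => by
      obtain ⟨h1, h2, _⟩ := mem_filter.mp he
      exact hpt e h1 h2
    refine ⟨?_, prod_le_one (fun e he => ht.le.trans (hQa e he).1) fun e he => (hQa e he).2⟩
    calc t ^ N ≤ t ^ (Q a).card :=
          pow_le_pow_of_le_one ht.le ht1 ((card_filter_le _ _).trans hKN)
      _ = ∏ e ∈ Q a, t := by rw [prod_const]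
      _ ≤ _ := prod_le_prod (fun _ _ => ht.le) fun e he => (hQa e he).1
  have hNR : (0 : ℝ) < N := by exact_mod_cast hN
  have hNε : N * ε' = ε * t ^ N / 16 := by rw [hε']; field_simp
  have htN : 0 < t ^ N := by positivity
  have hsplit : ∀ a y, ∏ e ∈ E univ, A e y = (∏ e ∈ E a, A e y) * ∏ e ∈ Q a, A e y := by
    intro a y
    have h1 : E a = (E univ).filter (fun e => e ⊆ a) := by
      ext e; simp only [hE, mem_filter, subset_univ]; tauto
    have h2 : Q a = (E univ).filter (fun e => ¬ e ⊆ a) := by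
      ext e; simp only [hE, hQ, mem_filter, subset_univ]; tauto
    rw [h1, h2, prod_filter_mul_prod_filter_not]
  set Y0 := avg (ind (cell K (k + 1) (fun f => if f.card ≤ k then γ f else B f) τ univ)) with hY0
  have hY0' : t ^ N / 2 * w ≤ Y0 := by
    have h1 := hone ∅ (fun _ => 1) (fun _ _ _ => rfl) (fun _ => ⟨zero_le_one, le_refl _⟩)
    have h2 : avg (fun y => (1 * ind (W univ) y) * ∏ e ∈ Q ∅, A e y) = Y0 := by
      refine avg_congr fun y => ?_
      rw [ind_cell_succ, one_mul]
      refine congrArg _ ?_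
      have : E ∅ = ∅ := by
        refine filter_eq_empty_iff.mpr ?_
        rintro e _ ⟨h1, h2⟩
        rw [subset_empty.mp h2] at h1
        simp at h1
      have h3 := hsplit ∅ y
      rw [this, prod_empty, one_mul] at h3
      exact h3.symm
    rw [h2] at h1
    simp only [one_mul] at h1
    have h3 := (abs_le.mp h1).1
    have h4 : t ^ N * w ≤ (∏ e ∈ Q ∅, p e x) * w := mul_le_mul_of_nonneg_right (hPi ∅).1 hw0.le
    have h5 : N * (3 * ε') * w ≤ t ^ N / 2 * w := by
      refine mul_le_mul_of_nonneg_right ?_ hw0.le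
      nlinarith
    change -(N * (3 * ε') * w) ≤ Y0 - (∏ e ∈ Q ∅, p e x) * w at h3
    linarith
  refine ⟨?_, fun a h hh h01 => ?_⟩
  · refine le_trans ?_ hY0'
    rw [mul_comm]
    exact mul_le_mul_of_nonneg_left hw' (by positivity)
  -- `h` restricted to the edge colours inside `a`
  have hmain : ∀ h : ((j : J) → V j) → ℝ, Dep a h → (∀ y, 0 ≤ h y ∧ h y ≤ 1) →
      ∃ Z, |avg (fun y => h y *
          ind (cell K (k + 1) (fun f => if f.card ≤ k then γ f else B f) τ univ) y)
          - (∏ e ∈ Q a, p e x) * Z| ≤ (N * (3 * ε')) * w ∧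
        |Z * avg (ind (W a)) - avg (fun y => h y *
          ind (cell K (k + 1) (fun f => if f.card ≤ k then γ f else B f) τ a) y) * w|
          ≤ ε' * avg (ind (W a)) * w := by
    intro h hh h01
    set h1 : ((j : J) → V j) → ℝ := fun y => h y * ∏ e ∈ E a, A e y with hh1
    have hd1 : Dep a h1 := hh.comp₂ (Dep.prod _ fun e he =>
      (hAd e).mono (mem_filter.mp he).2.2) (· * ·)
    have h101 : ∀ y, 0 ≤ h1 y ∧ h1 y ≤ 1 := fun y =>
      have h0 : 0 ≤ ∏ e ∈ E a, A e y := prod_nonneg fun e _ => (hA01 e y).1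
      ⟨mul_nonneg (h01 y).1 h0, mul_le_one₀ (h01 y).2 h0
        (prod_le_one (fun e _ => (hA01 e y).1) fun e _ => (hA01 e y).2)⟩
    refine ⟨avg (fun y => h1 y * ind (W univ) y), ?_, ?_⟩
    · have := hone a h1 hd1 h101
      convert this using 4
      funext y
      rw [ind_cell_succ]
      change h y * (ind (W univ) y * ∏ e ∈ E univ, A e y) = _
      rw [hsplit a y]
      simp only [hh1]
      ring
    · have e1 := hdist a h1 hd1 h101
      have e2 := hdist a (fun y => 1 - h1 y) (hd1.comp (fun c => 1 - c))
        (fun y => ⟨by linarith [(h101 y).2], by linarith [(h101 y).1]⟩)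
      have e3 : avg (fun y => h y *
          ind (cell K (k + 1) (fun f => if f.card ≤ k then γ f else B f) τ a) y) =
          avg (fun y => h1 y * ind (W a) y) := by
        refine avg_congr fun y => ?_
        rw [ind_cell_succ]
        simp only [hh1]
        change h y * (ind (W a) y * ∏ e ∈ E a, A e y) = _
        ring
      simp only [sub_mul, one_mul] at e2
      rw [avg_sub, avg_sub] at e2
      rw [e3, abs_le]
      constructor <;> nlinarith
  obtain ⟨Z, hZ1, hZ2⟩ := hmain h hh h01
  obtain ⟨Z0, hZ01, hZ02⟩ := hmain (fun _ => 1) (fun _ _ _ => rfl) (fun _ => ⟨zero_le_one, le_refl _⟩)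
  simp only [one_mul] at hZ01 hZ02
  refine cell_arith (hw0.trans_le (hpa a)) hw0
    (avg_nonneg fun y => mul_nonneg (h01 y).1 (ind_nonneg _ _))
    (avg_mono fun y => mul_le_of_le_one_left (ind_nonneg _ _) (h01 y).2)
    (htN.le.trans (hPi a).1) (hPi a).2 hε'0.le hZ1 hZ2 hZ01 hZ02 ?_
  have h1N : (1 : ℝ) ≤ N := by exact_mod_cast hN
  have h2 : 2 * (N * (3 * ε') + ε') ≤ ε * (t ^ N / 2) := by nlinarith
  have h3 := mul_le_mul_of_nonneg_right h2 hw0.le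
  have h4 := mul_le_mul_of_nonneg_left hY0' hε.le
  linarith

end CellStep

/-! ### Regularising all levels of a complex -/

section Induction

/-- The colours of all proper faces of `e`. -/
def lowCol (γ : Finset J → ((j : J) → V j) → ℕ) (e : Finset J) (x : (j : J) → V j) :
    Finset J → ℕ :=
  fun f => if f ⊂ e then γ f x else 0

theorem lowCol_eq_iff {γ : Finset J → ((j : J) → V j) → ℕ} {e : Finset J} {x y : (j : J) → V j} :
    lowCol γ e x = lowCol γ e y ↔ ∀ f, f ⊂ e → γ f x = γ f y := by
  constructor
  · intro h f hf
    have := congrFun h f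
    simpa [lowCol, hf] using this
  · intro h
    funext f
    by_cases hf : f ⊂ e <;> simp [lowCol, hf, h]

/-- Union bound for the bad points of an edge: a bad face, a colour of small density, or a colour
whose densities given the coarse and the fine colouring differ. -/
theorem bad_small {α : Type*} [Fintype α] {e : Finset J} {P : J → Set α} {ε' : ℝ}
    (hε' : 0 < ε') (hP : ∀ j ∈ e, avg (ind (P j)) ≤ ε') {b : α → ℕ} {M : ℕ} (hb : ∀ x, b x < M)
    {p d : ℕ → α → ℝ} {t s : ℝ}
    (hp : ∀ c < M, avg (fun x => ind {x | b x = c} x * ind {x | p c x < t} x) ≤ t)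
    (hd : ∀ c < M, ε' * avg (ind {x | ε' < d c x}) ≤ ε' * s) :
    avg (ind {x | (∃ j ∈ e, x ∈ P j) ∨ M ≤ b x ∨ p (b x) x < t ∨ ε' < d (b x) x}) ≤
      e.card * ε' + M * t + M * s := by
  have h1 : avg (ind {x | (∃ j ∈ e, x ∈ P j) ∨ M ≤ b x ∨ p (b x) x < t ∨ ε' < d (b x) x}) ≤
      avg (fun x => ∑ j ∈ e, ind (P j) x
        + ∑ c ∈ range M, ind {x | b x = c} x * ind {x | p c x < t} x
        + ∑ c ∈ range M, ind {x | ε' < d c x} x) := by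
    refine avg_mono fun x => ?_
    have n1 : 0 ≤ ∑ j ∈ e, ind (P j) x := sum_nonneg fun j _ => ind_nonneg _ _
    have n2 : 0 ≤ ∑ c ∈ range M, ind {x | b x = c} x * ind {x | p c x < t} x :=
      sum_nonneg fun j _ => mul_nonneg (ind_nonneg _ _) (ind_nonneg _ _)
    have n3 : 0 ≤ ∑ c ∈ range M, ind {x | ε' < d c x} x := sum_nonneg fun j _ => ind_nonneg _ _
    by_cases hx : (∃ j ∈ e, x ∈ P j) ∨ M ≤ b x ∨ p (b x) x < t ∨ ε' < d (b x) x
    · rw [ind_of_mem (by exact hx)]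
      rcases hx with ⟨j, hj, hx⟩ | hx | hx | hx
      · have := single_le_sum (f := fun j => ind (P j) x) (fun j _ => ind_nonneg _ _) hj
        rw [ind_of_mem hx] at this
        linarith
      · exact absurd (hb x) (by omega)
      · have := single_le_sum (f := fun c => ind {x | b x = c} x * ind {x | p c x < t} x)
          (fun j _ => mul_nonneg (ind_nonneg _ _) (ind_nonneg _ _)) (mem_range.mpr (hb x))
        rw [ind_of_mem (by exact rfl), ind_of_mem (by exact hx)] at this
        linarith
      · have := single_le_sum (f := fun c => ind {x | ε' < d c x} x)
          (fun j _ => ind_nonneg _ _) (mem_range.mpr (hb x))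
        rw [ind_of_mem (by exact hx)] at this
        linarith
    · rw [ind_of_notMem (by exact hx)]
      linarith
  refine h1.trans ?_
  rw [avg_add, avg_add, avg_sum, avg_sum, avg_sum]
  have e1 : ∑ j ∈ e, avg (ind (P j)) ≤ ∑ j ∈ e, ε' := sum_le_sum hP
  have e2 : ∑ c ∈ range M, avg (fun x => ind {x | b x = c} x * ind {x | p c x < t} x) ≤
      ∑ c ∈ range M, t := sum_le_sum fun c hc => hp c (mem_range.mp hc)
  have e3 : ∑ c ∈ range M, avg (ind {x | ε' < d c x}) ≤ ∑ c ∈ range M, s :=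
    sum_le_sum fun c hc => le_of_mul_le_mul_left (hd c (mem_range.mp hc)) hε'
  simp only [sum_const, card_range, nsmul_eq_mul] at e1 e2 e3
  exact add_le_add (add_le_add e1 e2) e3

theorem exists_pos_le {f : ℕ → ℝ} (hf : ∀ m, 0 < f m) (n : ℕ) : ∃ d, 0 < d ∧ ∀ m ≤ n, d ≤ f m := by
  induction n with
  | zero => exact ⟨f 0, hf 0, fun m hm => by rw [Nat.le_zero.mp hm]⟩
  | succ n ih =>
    obtain ⟨d, hd, h⟩ := ih
    refine ⟨min d (f (n + 1)), lt_min hd (hf _), fun m hm => ?_⟩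
    rcases Nat.lt_or_ge n m with h1 | h1
    · have : m = n + 1 := by omega
      rw [this]; exact min_le_right _ _
    · exact (min_le_left _ _).trans (h m h1)

theorem CellReg.mono [∀ j, Fintype (V j)] {K : Finset (Finset J)} {k : ℕ}
    {γ : Finset J → ((j : J) → V j) → ℕ}
    {D : Finset J → ℕ → Set ((j : J) → V j)} {ε ε' δ δ' : ℝ} (h : CellReg K k γ D ε δ)
    (hε : ε ≤ ε') (hδ : δ' ≤ δ) : CellReg K k γ D ε' δ' :=
  ⟨fun e he hk => (h.small e he hk).trans hε, h.inv, fun x τ h1 h2 => hδ.trans (h.mass x τ h1 h2),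
    fun x τ h1 h2 a g hg g01 => (h.dist x τ h1 h2 a g hg g01).trans
      (mul_le_mul_of_nonneg_right (add_le_add le_rfl (mul_le_mul_of_nonneg_right hε
        (avg_nonneg fun _ => ind_nonneg _ _))) (avg_nonneg fun _ => ind_nonneg _ _))⟩

/-- Hypergraph regularity with its counting lemma, by induction on the level: the colouring `B` of
the edges of size `k` is completed to the lower levels so that the regularity package holds. -/
theorem exists_cellReg (J : Type) [Fintype J] [DecidableEq J] {K : Finset (Finset J)}
    (hK : ∀ e ∈ K, ∀ f ⊆ e, f ∈ K) {r : ℕ}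
    (hpure : ∀ f ∈ K, f.card < r → ∃ e ∈ K, ∃ j ∈ e, f = e.erase j) (k : ℕ) (hk : k ≤ r) :
    ∀ (M : ℕ) (ε : ℝ), 0 < ε → ∃ δ : ℝ, 0 < δ ∧ ∃ m : ℕ, ∀ (V : J → Type) [∀ j, Fintype (V j)]
      [∀ j, Nonempty (V j)] (B : Finset J → ((j : J) → V j) → ℕ), IsCol B M →
      ∃ γ, IsCol γ m ∧ (∀ f, f.card = k → γ f = B f) ∧ ∃ D, CellReg K k γ D ε δ := by
  induction k with
  | zero =>
    intro M ε hε
    refine ⟨1, one_pos, M, fun V _ _ B hB => ⟨B, hB, fun _ _ => rfl, _, cellReg_zero K (hB ∅).1 hε.le⟩⟩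
  | succ k ih =>
    intro M ε₀ hε₀
    set ε := min ε₀ 1 with hεdef
    have hε : 0 < ε := lt_min hε₀ one_pos
    have hε1 : ε ≤ 1 := min_le_right _ _
    set N := Fintype.card (Finset J) + Fintype.card J + 1 with hN
    set t : ℝ := ε / (4 * (M + 1)) with ht
    have hM0 : (0 : ℝ) ≤ M := Nat.cast_nonneg _
    have ht0 : 0 < t := by positivity
    have htM : M * t ≤ ε / 4 := by
      rw [ht, ← mul_div_assoc, div_le_div_iff₀ (by positivity) (by positivity)]
      nlinarith
    have ht1 : t ≤ 1 := by
      rw [ht, div_le_one (by positivity)]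
      nlinarith
    set ε' : ℝ := ε * t ^ N / (16 * N) with hε'
    have hNR : (0 : ℝ) < N := by exact_mod_cast Nat.succ_pos _
    have hε'0 : 0 < ε' := by positivity
    have hNε' : N * ε' ≤ ε / 16 := by
      have h1 : N * ε' = ε * t ^ N / 16 := by rw [hε']; field_simp
      have h2 : t ^ N ≤ 1 := pow_le_one₀ ht0.le ht1
      rw [h1]; nlinarith
    have hκ0 : 0 < (ε' * t) ^ 2 := by positivity
    choose δ' hδ' m' h' using fun m => ih (by omega) m ε' hε'0
    obtain ⟨mMax, hreg⟩ := strong_reg J (Fintype.card (Finset J × Fin M)) hκ0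
      (fun m => min 1 (ε' * δ' m)) (fun m => ⟨lt_min one_pos (mul_pos hε'0 (hδ' m)), min_le_left _ _⟩)
    obtain ⟨d, hd0, hd⟩ := exists_pos_le hδ' mMax
    refine ⟨d * (t ^ N / 2), by positivity, ∑ m ∈ range (mMax + 1), m' m + M,
      fun V _ _ B hB => ?_⟩
    have g01 : ∀ (e : Finset J) (c : ℕ) (x : (j : J) → V j),
      0 ≤ ind {z | B e z = c} x ∧ ind {z | B e z = c} x ≤ 1 :=
        fun e c x => ⟨ind_nonneg _ _, ind_le_one _ _⟩
    obtain ⟨m, hm, β₁, β₂, hβ₁, ⟨m₂, hβ₂⟩, hclose, hunif⟩ := hreg V (Finset J × Fin M) Prod.fst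
      (fun i => ind {z | B i.1 z = (i.2 : ℕ)}) rfl (fun i x => g01 _ _ x)
    obtain ⟨γ, hγ, hγβ, D', hD'⟩ := h' m V β₁ hβ₁
    set p : Finset J → ℕ → ((j : J) → V j) → ℝ := fun e c => tcond β₁ e (ind {z | B e z = c}) with hp
    set q : Finset J → ℕ → ((j : J) → V j) → ℝ := fun e c => tcond β₂ e (ind {z | B e z = c}) with hq
    have hp01 : ∀ e c x, 0 ≤ p e c x ∧ p e c x ≤ 1 := fun e c x =>
      ⟨tcond_nonneg _ _ (fun x => ind_nonneg _ _) x, tcond_le_one _ _ _ x⟩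
    have hq01 : ∀ e c x, 0 ≤ q e c x ∧ q e c x ≤ 1 := fun e c x =>
      ⟨tcond_nonneg _ _ (fun x => ind_nonneg _ _) x, tcond_le_one _ _ _ x⟩
    have herase : ∀ e : Finset J, e.card = k + 1 → ∀ j ∈ e, (e.erase j).card = k := by
      intro e he j hj
      rw [card_erase_of_mem hj, he]; rfl
    have hpc : ∀ e c, e.card = k + 1 → ∀ x y, (∀ f, f ⊂ e → γ f x = γ f y) → p e c x = p e c y := by
      intro e c he x y h
      refine tcond_congr _ (jc_eq_iff.mpr fun j hj => ?_)
      rw [← hγβ _ (herase e he j hj)]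
      exact h _ (erase_ssubset hj)
    have hlow : ∀ e : Finset J, e.card = k + 1 → ∀ f, f ⊂ e →
        (if f.card ≤ k then γ f else B f) = γ f := by
      intro e he f hf
      have := card_lt_card hf
      rw [if_pos (by omega)]
    refine ⟨fun f => if f.card ≤ k then γ f else B f, ?_, ?_,
      fun e c => {x | (∃ j ∈ e, x ∈ {x | x ∈ D' (e.erase j) (γ (e.erase j) x)}) ∨ M ≤ c ∨
        p e c x < t ∨ ε' < cexp (lowCol γ e) (fun y => |q e c y - p e c y|) x}, ?_⟩
    · intro f
      dsimp only
      split_ifs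
      · refine ⟨(hγ f).1, fun x => ((hγ f).2 x).trans_le ?_⟩
        have h1 := single_le_sum (f := m') (fun _ _ => Nat.zero_le _)
          (mem_range.mpr (Nat.lt_succ_of_le hm))
        exact h1.trans (Nat.le_add_right _ _)
      · exact ⟨(hB f).1, fun x => ((hB f).2 x).trans_le (Nat.le_add_left _ _)⟩
    · intro f hf
      exact if_neg (by omega)
    refine CellReg.mono (ε := ε) (δ := d * (t ^ N / 2)) ?_ (min_le_left _ _) le_rfl
    have hstep : ∀ (x : (j : J) → V j) (τ : Finset J → ℕ), (∀ f ∈ K, f.card < k + 1 → τ f = (if f.card ≤ k then γ f else B f) x) →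
        (∀ e ∈ K, e.card = k + 1 → x ∉ {x | (∃ j ∈ e, x ∈ {x | x ∈ D' (e.erase j)
          (γ (e.erase j) x)}) ∨ M ≤ τ e ∨ p e (τ e) x < t ∨
          ε' < cexp (lowCol γ e) (fun y => |q e (τ e) y - p e (τ e) y|) x}) →
        δ' m * (t ^ N / 2) ≤
          avg (ind (cell K (k + 1) (fun f => if f.card ≤ k then γ f else B f) τ univ)) ∧
        ∀ (a : Finset J) (h : ((j : J) → V j) → ℝ), Dep a h → (∀ y, 0 ≤ h y ∧ h y ≤ 1) →
          avg (fun y => h y *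
              ind (cell K (k + 1) (fun f => if f.card ≤ k then γ f else B f) τ univ) y) *
            avg (ind (cell K (k + 1) (fun f => if f.card ≤ k then γ f else B f) τ a)) ≤
            (avg (fun y => h y *
              ind (cell K (k + 1) (fun f => if f.card ≤ k then γ f else B f) τ a) y) +
              ε * avg (ind (cell K (k + 1) (fun f => if f.card ≤ k then γ f else B f) τ a))) *
              avg (ind (cell K (k + 1) (fun f => if f.card ≤ k then γ f else B f) τ univ)) := by
      intro x τ hτ hx
      have hx' : ∀ e ∈ K, e.card = k + 1 → ¬ ((∃ j ∈ e, x ∈ {x | x ∈ D' (e.erase j)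
          (γ (e.erase j) x)}) ∨ M ≤ τ e ∨ p e (τ e) x < t ∨
          ε' < cexp (lowCol γ e) (fun y => |q e (τ e) y - p e (τ e) y|) x) := hx
      push Not at hx'
      refine cell_step hK (fun f => (hγ f).1) (fun f => (hB f).1) hD' (hδ' m) (x := x) (τ := τ)
        (p := fun e => p e (τ e)) (q := fun e => q e (τ e)) (N := N)
        ?_ ?_ ht0 ht1 hε hε1 (Nat.succ_pos _)
        ((card_le_univ K).trans (by omega)) hε' ?_ (fun e _ _ => dep_tcond hβ₂ e _)
        (fun e _ _ => dep_tcond hβ₁ e _) ?_ ?_ ?_ ?_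
      · intro f hf hfk
        rw [hτ f hf (by omega), if_pos hfk]
      · intro f hf hfk
        obtain ⟨e, he, j, hj, rfl⟩ := hpure f hf (by omega)
        have hek : e.card = k + 1 := by
          rw [card_erase_of_mem hj] at hfk
          have := card_pos.mpr ⟨j, hj⟩
          omega
        exact (hx' e he hek).1 j hj
      · intro e he hek b hb
        exact (hunif (e, ⟨τ e, (hx' e he hek).2.1⟩) b hb).trans (min_le_right _ _)
      · intro e he hek y hy
        exact hpc e (τ e) hek y x hy
      · intro e he hek
        exact ⟨(hx' e he hek).2.2.1, (hp01 _ _ _).2⟩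
      · intro e he hek y
        rw [abs_le]
        have h1 := hp01 e (τ e) y
        have h2 := hq01 e (τ e) y
        constructor <;> linarith
      · intro e he hek
        have h1 := (hx' e he hek).2.2.2
        have h2 := cexp_mul_avg_class (lowCol γ e) (fun y => |q e (τ e) y - p e (τ e) y|) x
        have h3 : {y | lowCol γ e y = lowCol γ e x} = {y | ∀ f, f ⊂ e → γ f y = γ f x} := by
          ext y; exact lowCol_eq_iff
        rw [h3] at h2
        rw [← h2]
        exact mul_le_mul_of_nonneg_right h1 (avg_nonneg fun y => ind_nonneg _ _)
    refine ⟨fun e he hek => ?_, fun e hek c x y hxy => ?_, fun x τ hτ hx => ?_,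
      fun x τ hτ hx => (hstep x τ hτ hx).2⟩
    · have hek' : ¬ e.card ≤ k := by omega
      have h1 := bad_small (e := e) (P := fun j => {x | x ∈ D' (e.erase j) (γ (e.erase j) x)})
        (b := B e) (M := M) (p := p e) (t := t) (s := t)
        (d := fun c => cexp (lowCol γ e) (fun y => |q e c y - p e c y|)) hε'0 ?_ (hB e).2 ?_ ?_
      · simp only [hek', if_false]
        refine h1.trans ?_
        have : (e.card : ℝ) ≤ N := by
          exact_mod_cast (card_le_univ e).trans (by omega)
        have := mul_le_mul_of_nonneg_right this hε'0.le
        linarith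
      · intro j hj
        exact hD'.small _ (hK e he _ (erase_subset _ _)) (herase e hek j hj)
      · intro c hc
        have h2 := avg_cexp_mul (jc β₁ e) (ind {z | B e z = c}) (ind {x | p e c x < t}) (by
          intro x y hxy
          have : p e c x = p e c y := tcond_congr _ hxy
          by_cases h : p e c x < t
          · rw [ind_of_mem (by exact h), ind_of_mem (by rw [this] at h; exact h)]
          · rw [ind_of_notMem (by exact h), ind_of_notMem (by rw [this] at h; exact h)])
        rw [← h2]
        refine avg_le_const fun x => ?_
        have h3 : cexp (jc β₁ e) (ind {z | B e z = c}) x = p e c x :=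
          (tcond_eq_fcond β₁ e (fun x => ind_le_one _ _) x).symm
        rw [h3]
        by_cases h : p e c x < t
        · rw [ind_of_mem (by exact h), mul_one]; exact h.le
        · rw [ind_of_notMem (by exact h), mul_zero]; exact ht0.le
      · intro c hc
        refine (markov fun x => cexp_nonneg _ (fun y => abs_nonneg _) x).trans ?_
        rw [avg_cexp]
        have h2 := hclose (e, ⟨c, hc⟩)
        refine le_of_sq_le_sq ((avg_sq_le).trans ?_) (by positivity)
        simp only [sq_abs]
        exact h2
    · have hxy' : ∀ f, f ⊂ e → γ f x = γ f y := fun f hf => by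
        have := hxy f hf
        rwa [hlow e hek f hf] at this
      have e1 : (∃ j ∈ e, x ∈ D' (e.erase j) (γ (e.erase j) x)) ↔
          (∃ j ∈ e, y ∈ D' (e.erase j) (γ (e.erase j) y)) := by
        refine exists_congr fun j => and_congr_right fun hj => ?_
        rw [hxy' _ (erase_ssubset hj)]
        exact hD'.inv _ (herase e hek j hj) _ x y fun f hf => hxy' f (hf.trans (erase_ssubset hj))
      have e2 := hpc e c hek x y hxy'
      have e3 := cexp_congr (fun y => |q e c y - p e c y|) (lowCol_eq_iff.mpr hxy')
      show (_ ∨ _ ∨ p e c x < t ∨ ε' < cexp (lowCol γ e) (fun y => |q e c y - p e c y|) x) ↔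
        (_ ∨ _ ∨ p e c y < t ∨ ε' < cexp (lowCol γ e) (fun y => |q e c y - p e c y|) y)
      rw [e2, e3]
      exact or_congr e1 Iff.rfl
    · exact (mul_le_mul_of_nonneg_right (hd m hm) (by positivity)).trans (hstep x τ hτ hx).1

end Induction

/-! ### Removal in the dense setting, and complexity -/

section DenseRemoval

/-- The dense hypergraph removal lemma. The exceptional sets `D e` are unions of atoms of a bounded
colouring of the proper faces of `e`. -/
theorem dense_removal (J : Type) [Fintype J] [DecidableEq J] (H : Finset (Finset J)) (r : ℕ)
    (hH : ∀ e ∈ H, e.card = r) (ε : ℝ) (hε : 0 < ε) : ∃ δ : ℝ, 0 < δ ∧ ∃ m : ℕ,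
    ∀ (V : J → Type) [∀ j, Fintype (V j)] [∀ j, Nonempty (V j)]
      (E : Finset J → Set ((j : J) → V j)), (∀ e, Dep e (fun x => x ∈ E e)) →
      avg (ind {x | ∀ e ∈ H, x ∈ E e}) < δ →
      ∃ γ, IsCol γ m ∧ ∃ D : Finset J → Set ((j : J) → V j),
        (∀ e ∈ H, ∀ x y, (∀ f, f ⊂ e → γ f x = γ f y) → (x ∈ D e ↔ y ∈ D e)) ∧
        (∀ e ∈ H, avg (ind (E e ∩ D e)) ≤ ε) ∧ ∀ x, ∃ e ∈ H, x ∈ D e := by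
  classical
  set K : Finset (Finset J) := univ.filter (fun f => ∃ e ∈ H, f ⊆ e) with hKdef
  have memK : ∀ f, f ∈ K ↔ ∃ e ∈ H, f ⊆ e := fun f => by simp [hKdef]
  have hK : ∀ e ∈ K, ∀ f ⊆ e, f ∈ K := by
    intro e he f hf
    obtain ⟨e', he', h⟩ := (memK e).mp he
    exact (memK f).mpr ⟨e', he', hf.trans h⟩
  have hKr : ∀ e ∈ K, e.card = r → e ∈ H := by
    intro e he hr
    obtain ⟨e', he', h⟩ := (memK e).mp he
    rwa [eq_of_subset_of_card_le h (by rw [hr, hH e' he'])]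
  have hpure : ∀ f ∈ K, f.card < r → ∃ e ∈ K, ∃ j ∈ e, f = e.erase j := by
    intro f hf hfr
    obtain ⟨e', he', h⟩ := (memK f).mp hf
    obtain ⟨j, hj, hjf⟩ := exists_of_ssubset (Finset.ssubset_iff_subset_ne.mpr
      ⟨h, by rintro rfl; rw [hH f he'] at hfr; exact lt_irrefl _ hfr⟩)
    exact ⟨insert j f, (memK _).mpr ⟨e', he', insert_subset hj h⟩, j, mem_insert_self _ _,
      (erase_insert hjf).symm⟩
  obtain ⟨δ, hδ, m, h⟩ := exists_cellReg J hK hpure r le_rfl 2 ε hε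
  refine ⟨δ, hδ, m, fun V _ _ E hE hsmall => ?_⟩
  set B : Finset J → ((j : J) → V j) → ℕ := fun e x => if x ∈ E e then 1 else 0 with hB
  have hBcol : IsCol B 2 := fun f => ⟨fun x y hxy => by
    have : (x ∈ E f) = (y ∈ E f) := hE f x y hxy
    simp only [hB, this], fun x => by simp only [hB]; split_ifs <;> norm_num⟩
  obtain ⟨γ, hγ, hγB, D, hD⟩ := h V B hBcol
  refine ⟨γ, hγ, fun e => D e 1, fun e he x y hxy => hD.inv e (hH e he) 1 x y hxy,
    fun e he => ?_, fun x => ?_⟩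
  · refine (avg_mono fun x => ind_mono ?_ x).trans
      (hD.small e ((memK e).mpr ⟨e, he, subset_rfl⟩) (hH e he))
    rintro y ⟨h1, h2⟩
    show y ∈ D e (γ e y)
    rw [hγB e (hH e he)]
    simp only [hB, h1, if_true]
    exact h2
  · by_contra hcon
    push Not at hcon
    have h1 := hD.mass x (fun f => if f.card = r then 1 else γ f x)
      (fun f _ hf => if_neg hf.ne) (fun e he her => by rw [if_pos her]; exact hcon e (hKr e he her))
    refine absurd (h1.trans (avg_mono fun y => ind_mono ?_ y)) (not_le.mpr hsmall)
    intro y hy e he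
    have h2 := mem_cell.mp hy e ((memK e).mpr ⟨e, he, subset_rfl⟩) (hH e he).le (subset_univ _)
    rw [if_pos (hH e he), hγB e (hH e he)] at h2
    by_contra hc
    simp [hB, hc] at h2

end DenseRemoval

section Complexity

/-- If `F` has small correlation with every class of `L`, it has small correlation with every
union of classes. -/
theorem avg_mul_ind_le {α κ : Type*} [Fintype α] [Fintype κ] [DecidableEq κ] {L : α → κ}
    {F : α → ℝ} {u : ℝ} (hu : 0 ≤ u)
    (hF : ∀ y₀, |avg fun y => F y * ind {y | L y = L y₀} y| ≤ u) {D : Set α}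
    (hD : ∀ x y, L x = L y → (x ∈ D ↔ y ∈ D)) :
    |avg fun y => F y * ind D y| ≤ Fintype.card κ * u := by
  have h1 : ∀ y, F y * ind D y = ∑ σ : κ, F y * ind {y | L y = σ ∧ y ∈ D} y := by
    intro y
    rw [← mul_sum, sum_eq_single (L y)]
    · congr 1
      by_cases hy : y ∈ D
      · rw [ind_of_mem hy, ind_of_mem (by exact ⟨rfl, hy⟩)]
      · rw [ind_of_notMem hy, ind_of_notMem (by rintro ⟨-, h⟩; exact hy h)]
    · rintro σ - hσ
      exact ind_of_notMem (by rintro ⟨h, -⟩; exact hσ h.symm)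
    · intro h; exact absurd (mem_univ _) h
  rw [funext h1, avg_sum]
  refine (abs_sum_le_sum_abs _ _).trans ?_
  calc _ ≤ ∑ σ : κ, u := sum_le_sum fun σ _ => ?_
    _ = _ := by simp
  by_cases hσ : ∃ y₀, L y₀ = σ ∧ y₀ ∈ D
  · obtain ⟨y₀, rfl, hy₀⟩ := hσ
    have : {y | L y = L y₀ ∧ y ∈ D} = {y | L y = L y₀} := by
      ext y
      exact ⟨fun h => h.1, fun h => ⟨h, (hD y y₀ h).mpr hy₀⟩⟩
    rw [this]
    exact hF y₀
  · have : ∀ y, F y * ind {y | L y = σ ∧ y ∈ D} y = 0 := fun y => by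
      rw [ind_of_notMem (by intro h; exact hσ ⟨y, h⟩), mul_zero]
    rw [funext this]
    simpa [avg] using hu

/-- `lowCol` as a map to a finite type. -/
def lowColFin {γ : Finset J → ((j : J) → V j) → ℕ} {m : ℕ} (hγ : IsCol γ m) (e : Finset J)
    (x : (j : J) → V j) : Finset J → Fin (m + 1) :=
  fun f => if f ⊂ e then ⟨γ f x, ((hγ f).2 x).trans (Nat.lt_succ_self m)⟩ else 0

theorem lowColFin_eq_iff {γ : Finset J → ((j : J) → V j) → ℕ} {m : ℕ} (hγ : IsCol γ m)
    {e : Finset J} {x y : (j : J) → V j} :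
    lowColFin hγ e x = lowColFin hγ e y ↔ ∀ f, f ⊂ e → γ f x = γ f y := by
  constructor
  · intro h f hf
    have := congrFun h f
    simpa [lowColFin, hf] using this
  · intro h
    funext f
    by_cases hf : f ⊂ e <;> simp [lowColFin, hf, h]

/-- A uniform function has small correlation with sets that are unions of boundedly many cells. -/
theorem unif_union [∀ j, Fintype (V j)] [∀ j, Nonempty (V j)]
    {γ : Finset J → ((j : J) → V j) → ℕ} {m : ℕ} (hγ : IsCol γ m)
    {e : Finset J} (he : e.Nonempty) {F : ((j : J) → V j) → ℝ} {u : ℝ} (hF : Unif e F u)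
    (hFd : Dep e F) {D : Set ((j : J) → V j)}
    (hD : ∀ x y, (∀ f, f ⊂ e → γ f x = γ f y) → (x ∈ D ↔ y ∈ D)) :
    |avg fun y => F y * ind D y| ≤ Fintype.card (Finset J → Fin (m + 1)) * u := by
  have hu : 0 ≤ u := (abs_nonneg _).trans
    (hF (fun _ => Set.univ) (fun _ _ _ _ _ => rfl))
  refine avg_mul_ind_le (L := lowColFin hγ e) hu (fun y₀ => ?_)
    (fun x y h => hD x y ((lowColFin_eq_iff hγ).mp h))
  refine hF.faceProd hFd ?_
  have : {y | lowColFin hγ e y = lowColFin hγ e y₀} =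
      {y | ∀ f ∈ univ.filter (fun f => f ⊂ e), y ∈ {z | γ f z = γ f y₀}} := by
    ext y
    refine (lowColFin_eq_iff hγ).trans ⟨fun h f hf => h f (mem_filter.mp hf).2, fun h f hf =>
      h f (mem_filter.mpr ⟨mem_univ _, hf⟩)⟩
  rw [this, funext (ind_forall _ _)]
  refine FaceProd.prod he _ fun f hf => FaceProd.of_dep (a := f) ?_
    (Dep.ind ((hγ f).1.comp (fun c => c = γ f y₀))) fun y => ⟨ind_nonneg _ _, ind_le_one _ _⟩
  exact (mem_filter.mp hf).2.2

/-- An arbitrary extension of a tuple indexed by `e` to a tuple indexed by `J`. -/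
noncomputable def extend [∀ j, Nonempty (V j)] (e : Finset J) (v : (i : ↥e) → V i) : (j : J) → V j :=
  fun j => if h : j ∈ e then v ⟨j, h⟩ else Classical.arbitrary (V j)

theorem Dep.extend_restr [∀ j, Nonempty (V j)] {e : Finset J} {β : Type*}
    {f : ((j : J) → V j) → β} (h : Dep e f) (x : (j : J) → V j) : f (extend e (restr e x)) = f x :=
  h _ _ fun j hj => by simp [restr, extend, hj]

theorem isCliqueSet_empty {e : Finset J} (he : e.Nonempty) :
    IsCliqueSet e (∅ : Set ((i : ↥e) → V i)) := by
  obtain ⟨j, hj⟩ := he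
  exact ⟨fun _ => ∅, fun x => ⟨fun h => absurd h (Set.notMem_empty x),
    fun h => absurd (h j hj) (Set.notMem_empty _)⟩⟩

/-- A set determined by boundedly many colours of the proper faces of `e` has bounded complexity:
each cell is a clique set. -/
theorem complexityLE_of_inv [∀ j, Nonempty (V j)]
    {γ : Finset J → ((j : J) → V j) → ℕ} {m : ℕ} (hγ : IsCol γ m)
    {e : Finset J} (he : e.Nonempty) {D : Set ((j : J) → V j)}
    (hD : ∀ x y, (∀ f, f ⊂ e → γ f x = γ f y) → (x ∈ D ↔ y ∈ D)) :
    ComplexityLE e {v | extend e v ∈ D} (Fintype.card (Finset J → Fin (m + 1))) := by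
  let φ := Fintype.equivFin (Finset J → Fin (m + 1))
  refine ⟨fun i => {v | lowColFin hγ e (extend e v) = φ.symm i ∧ extend e v ∈ D},
    fun i => ?_, fun i j hij => ?_, ?_⟩
  · by_cases hne : ∃ v, lowColFin hγ e (extend e v) = φ.symm i ∧ extend e v ∈ D
    · obtain ⟨v₀, h₀, hv₀⟩ := hne
      refine ⟨fun j => {w | ∀ f, f ⊆ e.erase j → γ f (extend _ w) = γ f (extend e v₀)},
        fun v => ⟨fun h j hj => ?_, fun h => ?_⟩⟩
      · have h1 := (lowColFin_eq_iff hγ).mp (h.1.trans h₀.symm)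
        intro f hf
        rw [← h1 f (lt_of_le_of_lt hf (erase_ssubset hj))]
        refine (hγ f).1 _ _ fun i hi => ?_
        have hi' := hf hi
        simp [extend, hi', mem_of_mem_erase hi', faceProj]
      · have h1 : ∀ f, f ⊂ e → γ f (extend e v) = γ f (extend e v₀) := by
          intro f hf
          obtain ⟨j, hj, hjf⟩ := exists_of_ssubset hf
          have hfe : f ⊆ e.erase j := fun i hi => mem_erase.mpr ⟨fun h => hjf (h ▸ hi), hf.1 hi⟩
          rw [← h j hj f hfe]
          refine (hγ f).1 _ _ fun i hi => ?_
          have hi' := hfe hi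
          simp [extend, hi', mem_of_mem_erase hi', faceProj]
        exact ⟨((lowColFin_eq_iff hγ).mpr h1).trans h₀, (hD _ _ h1).mpr hv₀⟩
    · have : {v | lowColFin hγ e (extend e v) = φ.symm i ∧ extend e v ∈ D} = ∅ := by
        ext v
        exact ⟨fun h => absurd ⟨v, h⟩ hne, fun h => absurd h (Set.notMem_empty v)⟩
      dsimp only
      rw [this]
      exact isCliqueSet_empty he
  · ext v
    refine ⟨fun h => ?_, fun h => absurd h (Set.notMem_empty v)⟩
    exact absurd (φ.symm.injective (h.1.1.symm.trans h.2.1)) hij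
  · ext v
    rw [Set.mem_iUnion]
    refine ⟨fun ⟨i, h⟩ => h.2, fun h => ⟨φ (lowColFin hγ e (extend e v)), ?_, h⟩⟩
    rw [Equiv.symm_apply_apply]

end Complexity

/-! ### The linear forms condition and repeated Cauchy–Schwarz -/

section CauchySchwarz

variable [∀ j, Fintype (V j)] [∀ j, Nonempty (V j)]

/-- The linear forms condition for weights regarded as functions on the whole product: the pair
`(e, s)` encodes the form `ν_e` evaluated at the second point on `s` and at the first point
elsewhere. -/
def LF (H : Finset (Finset J)) (ν : Finset J → ((j : J) → V j) → ℝ) (η : ℝ) : Prop :=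
  ∀ S : Finset (Finset J × Finset J), (∀ p ∈ S, p.1 ∈ H ∧ p.2 ⊆ p.1) →
    |avg (fun w : ((j : J) → V j) × ((j : J) → V j) =>
      ∏ p ∈ S, ν p.1 (p.2.piecewise w.2 w.1)) - 1| ≤ η

theorem LF.mono {H : Finset (Finset J)} {ν : Finset J → ((j : J) → V j) → ℝ} {η η' : ℝ}
    (h : LF H ν η) (hη : η ≤ η') : LF H ν η' := fun S hS => (h S hS).trans hη

theorem avg_resample_fst (j : J) (f : ((j : J) → V j) → ((j : J) → V j) → ℝ) :
    avg (fun w : ((j : J) → V j) × ((j : J) → V j) =>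
      avg (fun z => f (({j} : Finset J).piecewise z w.1) w.2)) =
      avg (fun w : ((j : J) → V j) × ((j : J) → V j) => f w.1 w.2) := by
  rw [avg_prod, avg_comm, avg_prod (fun w : ((j : J) → V j) × ((j : J) → V j) => f w.1 w.2),
    avg_comm (fun x y => f x y)]
  exact avg_congr fun y => avg_piecewise {j} (fun x => f x y)

theorem avg_resample_snd (j : J) (f : ((j : J) → V j) → ((j : J) → V j) → ℝ) :
    avg (fun w : ((j : J) → V j) × ((j : J) → V j) =>
      avg (fun z => f w.1 (({j} : Finset J).piecewise z w.2))) =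
      avg (fun w : ((j : J) → V j) × ((j : J) → V j) => f w.1 w.2) := by
  rw [avg_prod, avg_prod (fun w : ((j : J) → V j) × ((j : J) → V j) => f w.1 w.2)]
  exact avg_congr fun y => avg_piecewise {j} (fun x => f y x)

/-- One application of Cauchy–Schwarz, doubling the coordinate `j`: the copy of the `j`-th
coordinate is stored in the `j`-th coordinate of the second point. -/
theorem cs_step (j : J) {A AN B : ((j : J) → V j) → ((j : J) → V j) → ℝ}
    (hA : ∀ x y z, A (({j} : Finset J).piecewise z x) y = A x y)
    (hAN : ∀ x y z, AN (({j} : Finset J).piecewise z x) y = AN x y)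
    (hAN' : ∀ x y z, AN x (({j} : Finset J).piecewise z y) = AN x y)
    (hB : ∀ x y z, B x (({j} : Finset J).piecewise z y) = B x y)
    (habs : ∀ x y, |A x y| ≤ AN x y) :
    (avg fun w : ((j : J) → V j) × ((j : J) → V j) => A w.1 w.2 * B w.1 w.2) ^ 2 ≤
      avg (fun w : ((j : J) → V j) × ((j : J) → V j) => AN w.1 w.2) *
        avg (fun w : ((j : J) → V j) × ((j : J) → V j) =>
          AN w.1 w.2 * (B w.1 w.2 * B (({j} : Finset J).piecewise w.2 w.1) w.2)) := by
  have h1 : (avg fun w : ((j : J) → V j) × ((j : J) → V j) => A w.1 w.2 * B w.1 w.2) =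
      avg fun w : ((j : J) → V j) × ((j : J) → V j) => A w.1 w.2 *
        avg fun z => B (({j} : Finset J).piecewise z w.1) w.2 := by
    rw [← avg_resample_fst j (fun x y => A x y * B x y)]
    refine avg_congr fun w => ?_
    rw [← avg_const_mul]
    exact avg_congr fun z => by rw [hA]
  have h2 : avg (fun w : ((j : J) → V j) × ((j : J) → V j) => AN w.1 w.2 *
        (avg fun z => B (({j} : Finset J).piecewise z w.1) w.2) ^ 2) =
      avg (fun w : ((j : J) → V j) × ((j : J) → V j) =>
          AN w.1 w.2 * (B w.1 w.2 * B (({j} : Finset J).piecewise w.2 w.1) w.2)) := by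
    rw [← avg_resample_fst j (fun x y => AN x y * (B x y * B (({j} : Finset J).piecewise y x) y)),
      ← avg_resample_snd j (fun x y => avg fun z =>
        AN (({j} : Finset J).piecewise z x) y * (B (({j} : Finset J).piecewise z x) y *
          B (({j} : Finset J).piecewise y (({j} : Finset J).piecewise z x)) y))]
    refine avg_congr fun w => ?_
    rw [sq, ← avg_mul_const, ← avg_const_mul, avg_comm]
    refine avg_congr fun z => ?_
    rw [← avg_const_mul, ← avg_const_mul]
    refine avg_congr fun z' => ?_
    have : ({j} : Finset J).piecewise (({j} : Finset J).piecewise z' w.2)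
        (({j} : Finset J).piecewise z w.1) = ({j} : Finset J).piecewise z' w.1 := by
      funext i
      by_cases hi : i = j <;> simp [Finset.piecewise, hi]
    rw [this, hAN, hAN', hB, hB]
  rw [h1]
  exact (avg_cauchy (a := fun w : ((j : J) → V j) × ((j : J) → V j) => A w.1 w.2)
    (fun w => habs w.1 w.2)).trans_eq (by rw [h2])

/-- The integrand after the coordinates in `d` have been doubled: `f` occurs at all `2 ^ |d|` mixed
points, and each `G i` whose coordinates do not contain `d` has been replaced by its majorant
`W i`. -/
noncomputable def csF (f : ((j : J) → V j) → ℝ) (I : Finset (Finset J × Finset J))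
    (G W : Finset J × Finset J → ((j : J) → V j) → ℝ) (d : Finset J)
    (x y : (j : J) → V j) : ℝ :=
  (∏ s ∈ d.powerset, f (s.piecewise y x)) *
    ∏ i ∈ I, ∏ s ∈ (d ∩ i.1).powerset,
      (if d ⊆ i.1 then G i else W i) ((s ∪ i.2).piecewise y x)

/-- The product of majorants over the doubled coordinates `d`. -/
noncomputable def csW (I : Finset (Finset J × Finset J))
    (W : Finset J × Finset J → ((j : J) → V j) → ℝ) (d : Finset J) (x y : (j : J) → V j) : ℝ :=
  ∏ i ∈ I, ∏ s ∈ (d ∩ i.1).powerset, W i ((s ∪ i.2).piecewise y x)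

theorem Dep.pw_fst {a : Finset J} {f : ((j : J) → V j) → ℝ} (h : Dep a f) {j : J} (hj : j ∉ a)
    (s : Finset J) (x y z : (j : J) → V j) :
    f (s.piecewise y (({j} : Finset J).piecewise z x)) = f (s.piecewise y x) :=
  h _ _ fun i hi => by
    have : i ≠ j := fun h => hj (h ▸ hi)
    by_cases his : i ∈ s <;> simp [his, this]

theorem Dep.pw_snd {a : Finset J} {f : ((j : J) → V j) → ℝ} (h : Dep a f) {j : J} (hj : j ∉ a)
    (s : Finset J) (x y z : (j : J) → V j) :
    f (s.piecewise (({j} : Finset J).piecewise z y) x) = f (s.piecewise y x) :=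
  h _ _ fun i hi => by
    have : i ≠ j := fun h => hj (h ▸ hi)
    by_cases his : i ∈ s <;> simp [his, this]

theorem pw_snd_of_notMem {j : J} {s : Finset J} (hj : j ∉ s) (x y z : (j : J) → V j) :
    s.piecewise (({j} : Finset J).piecewise z y) x = s.piecewise y x := by
  funext i
  by_cases his : i ∈ s
  · have : i ≠ j := fun h => hj (h ▸ his)
    simp [his, this]
  · simp [his]

theorem pw_insert (j : J) (s : Finset J) (x y : (j : J) → V j) :
    s.piecewise y (({j} : Finset J).piecewise y x) = (insert j s).piecewise y x := by
  funext i
  by_cases his : i ∈ s <;> by_cases hij : i = j <;> simp [Finset.piecewise, his, hij]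

theorem csF_step {e d : Finset J} {f : ((j : J) → V j) → ℝ} {I : Finset (Finset J × Finset J)}
    {G W : Finset J × Finset J → ((j : J) → V j) → ℝ}
    (hG : ∀ i ∈ I, Dep i.1 (G i)) (hW : ∀ i ∈ I, Dep i.1 (W i))
    (hGW : ∀ i ∈ I, ∀ x, |G i x| ≤ W i x) (hdisj : ∀ i ∈ I, Disjoint i.2 e)
    {j : J} (hje : j ∈ e) (hjd : j ∉ d) (_hde : d ⊆ e) :
    (avg fun w : ((j : J) → V j) × ((j : J) → V j) => csF f I G W d w.1 w.2) ^ 2 ≤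
      avg (fun w : ((j : J) → V j) × ((j : J) → V j) =>
        csW (I.filter fun i => j ∉ i.1) W d w.1 w.2) *
      avg (fun w : ((j : J) → V j) × ((j : J) → V j) => csF f I G W (insert j d) w.1 w.2) := by
  let Z := fun i => if d ⊆ i.1 then G i else W i
  have hZ : ∀ i ∈ I, Dep i.1 (Z i) := fun i hi => by
    by_cases h : d ⊆ i.1 <;> simp only [Z, h, if_true, if_false]
    · exact hG i hi
    · exact hW i hi
  have hZW : ∀ i ∈ I, ∀ x, |Z i x| ≤ W i x := fun i hi x => by
    by_cases h : d ⊆ i.1 <;> simp only [Z, h, if_true, if_false]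
    · exact hGW i hi x
    · rw [abs_of_nonneg ((abs_nonneg _).trans (hGW i hi x))]
  let A : ((j : J) → V j) → ((j : J) → V j) → ℝ := csW (I.filter fun i => j ∉ i.1) Z d
  let AN : ((j : J) → V j) → ((j : J) → V j) → ℝ := csW (I.filter fun i => j ∉ i.1) W d
  let B : ((j : J) → V j) → ((j : J) → V j) → ℝ := fun x y =>
    (∏ s ∈ d.powerset, f (s.piecewise y x)) * csW (I.filter fun i => j ∈ i.1) Z d x y
  have hsplit : ∀ x y, csF f I G W d x y = A x y * B x y := fun x y => by
    simp only [csF, A, B, csW]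
    rw [← prod_filter_not_mul_prod_filter I (fun i => j ∈ i.1)]
    ring
  have hsplit' : ∀ x y, csF f I G W (insert j d) x y =
      AN x y * (B x y * B (({j} : Finset J).piecewise y x) y) := fun x y => by
    simp only [csF, AN, B, csW]
    rw [← prod_filter_not_mul_prod_filter I (fun i => j ∈ i.1), prod_powerset_insert hjd]
    have h1 : ∏ i ∈ I.filter (fun i => j ∉ i.1), ∏ s ∈ (insert j d ∩ i.1).powerset,
        (if insert j d ⊆ i.1 then G i else W i) ((s ∪ i.2).piecewise y x) =
        ∏ i ∈ I.filter (fun i => j ∉ i.1), ∏ s ∈ (d ∩ i.1).powerset,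
          W i ((s ∪ i.2).piecewise y x) := by
      refine prod_congr rfl fun i hi => ?_
      have hji := (mem_filter.1 hi).2
      rw [insert_inter_of_notMem hji, if_neg fun h => hji (h (mem_insert_self _ _))]
    have h2 : ∏ i ∈ I.filter (fun i => j ∈ i.1), ∏ s ∈ (insert j d ∩ i.1).powerset,
        (if insert j d ⊆ i.1 then G i else W i) ((s ∪ i.2).piecewise y x) =
        (∏ i ∈ I.filter (fun i => j ∈ i.1), ∏ s ∈ (d ∩ i.1).powerset,
          Z i ((s ∪ i.2).piecewise y x)) *
        ∏ i ∈ I.filter (fun i => j ∈ i.1), ∏ s ∈ (d ∩ i.1).powerset,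
          Z i ((s ∪ i.2).piecewise y (({j} : Finset J).piecewise y x)) := by
      rw [← prod_mul_distrib]
      refine prod_congr rfl fun i hi => ?_
      have hji := (mem_filter.1 hi).2
      rw [insert_inter_of_mem hji, prod_powerset_insert (fun h => hjd (mem_inter.1 h).1)]
      simp only [insert_subset_iff, hji, true_and, pw_insert]
      congr 1
      exact prod_congr rfl fun s _ => by rw [insert_union]
    rw [h1, h2]
    simp only [pw_insert]
    ring
  simp only [hsplit, hsplit']
  refine cs_step j ?_ ?_ ?_ ?_ ?_
  · intro x y z
    refine prod_congr rfl fun i hi => prod_congr rfl fun s _ => ?_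
    exact (hZ i (mem_filter.1 hi).1).pw_fst (mem_filter.1 hi).2 _ _ _ _
  · intro x y z
    refine prod_congr rfl fun i hi => prod_congr rfl fun s _ => ?_
    exact (hW i (mem_filter.1 hi).1).pw_fst (mem_filter.1 hi).2 _ _ _ _
  · intro x y z
    refine prod_congr rfl fun i hi => prod_congr rfl fun s _ => ?_
    exact (hW i (mem_filter.1 hi).1).pw_snd (mem_filter.1 hi).2 _ _ _ _
  · intro x y z
    simp only [B, csW]
    congr 1
    · refine prod_congr rfl fun s hs => ?_
      rw [pw_snd_of_notMem fun h => hjd (mem_powerset.1 hs h)]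
    · refine prod_congr rfl fun i hi => prod_congr rfl fun s hs => ?_
      rw [pw_snd_of_notMem]
      intro h
      rcases mem_union.1 h with h | h
      · exact hjd (mem_inter.1 (mem_powerset.1 hs h)).1
      · exact Finset.disjoint_left.1 (hdisj i (mem_filter.1 hi).1) h hje
  · intro x y
    simp only [A, csW, abs_prod]
    exact prod_le_prod (fun i _ => prod_nonneg fun s _ => abs_nonneg _) fun i hi =>
      prod_le_prod (fun s _ => abs_nonneg _) fun s _ => hZW i (mem_filter.1 hi).1 _

/-- The weight majorising the function with index `i`: it is `ν i.1` for the indices in `P`, and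
`1` for the others. -/
noncomputable def wt (P : Finset (Finset J × Finset J)) (ν : Finset J → ((j : J) → V j) → ℝ)
    (i : Finset J × Finset J) (x : (j : J) → V j) : ℝ := if i ∈ P then ν i.1 x else 1

/-- The pairs `(a, s)` for which `ν a` occurs at the mixed point `s` in `csW`. -/
def csPairs (P : Finset (Finset J × Finset J)) (I : Finset (Finset J × Finset J)) (d : Finset J) :
    Finset (Finset J × Finset J) :=
  (I.filter fun i => i ∈ P).biUnion fun i =>
    (d ∩ i.1).powerset.image fun s => (i.1, s ∪ i.2)

theorem mem_csPairs {P I : Finset (Finset J × Finset J)} {d : Finset J}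
    {p : Finset J × Finset J} : p ∈ csPairs P I d ↔
      ∃ i ∈ I, i ∈ P ∧ ∃ s ⊆ d ∩ i.1, (i.1, s ∪ i.2) = p := by
  simp only [csPairs, mem_biUnion, mem_filter, mem_image, mem_powerset, and_assoc]

theorem csW_eq {P I : Finset (Finset J × Finset J)} {e d : Finset J}
    (ν : Finset J → ((j : J) → V j) → ℝ) (hdisj : ∀ i ∈ I, Disjoint i.2 e) (hde : d ⊆ e)
    (x y : (j : J) → V j) :
    csW I (wt P ν) d x y = ∏ p ∈ csPairs P I d, ν p.1 (p.2.piecewise y x) := by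
  have key : ∀ i ∈ I, ∀ s ⊆ d ∩ i.1, (s ∪ i.2) \ e = i.2 ∧ (s ∪ i.2) ∩ e = s := by
    intro i hi s hs
    have hse : s ⊆ e := fun k hk => hde (mem_inter.1 (hs hk)).1
    have := hdisj i hi
    constructor
    · rw [union_sdiff_distrib, sdiff_eq_empty_iff_subset.2 hse, empty_union,
        sdiff_eq_self_of_disjoint this]
    · rw [union_inter_distrib_right, inter_eq_left.2 hse, disjoint_iff_inter_eq_empty.1 this,
        union_empty]
  rw [csPairs, prod_biUnion]
  · rw [csW, prod_filter]
    refine prod_congr rfl fun i hi => ?_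
    by_cases h : i ∈ P
    · rw [if_pos h, prod_image]
      · exact prod_congr rfl fun s _ => by simp [wt, h]
      · intro s hs s' hs' h'
        have h2 : s ∪ i.2 = s' ∪ i.2 := (Prod.ext_iff.1 h').2
        rw [← (key i hi s (mem_powerset.1 hs)).2, h2, (key i hi s' (mem_powerset.1 hs')).2]
    · rw [if_neg h]
      exact prod_eq_one fun s _ => by simp [wt, h]
  · intro i hi i' hi' hne
    rw [Function.onFun, Finset.disjoint_left]
    intro p hp hp'
    obtain ⟨s, hs, rfl⟩ := mem_image.1 hp
    obtain ⟨s', hs', h'⟩ := mem_image.1 hp'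
    rw [Prod.ext_iff] at h'
    have hI := (mem_filter.1 hi).1
    have hI' := (mem_filter.1 hi').1
    refine hne (Prod.ext h'.1.symm ?_)
    have h2 : s' ∪ i'.2 = s ∪ i.2 := h'.2
    rw [← (key i hI s (mem_powerset.1 hs)).1, ← h2, (key i' hI' s' (mem_powerset.1 hs')).1]

/-- The average of a product of weights is close to `1`. -/
theorem LF.csW_close {H : Finset (Finset J)} {P : Finset (Finset J × Finset J)}
    {ν : Finset J → ((j : J) → V j) → ℝ} {η : ℝ}
    (hν : LF H ν η) (hP : ∀ i ∈ P, i.1 ∈ H) {I : Finset (Finset J × Finset J)}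
    {e d : Finset J} (hdisj : ∀ i ∈ I, Disjoint i.2 e) (hsub : ∀ i ∈ I, i.2 ⊆ i.1)
    (hde : d ⊆ e) :
    |avg (fun w : ((j : J) → V j) × ((j : J) → V j) => csW I (wt P ν) d w.1 w.2) - 1| ≤ η := by
  simp only [csW_eq ν hdisj hde]
  refine hν (csPairs P I d) fun p hp => ?_
  obtain ⟨i, hi, hiP, s, hs, rfl⟩ := mem_csPairs.1 hp
  exact ⟨hP i hiP, union_subset (hs.trans inter_subset_right) (hsub i hi)⟩

/-- Doubling all coordinates in `d`. Dividing by `2` absorbs the factor `1 + η ≤ 2` that every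
Cauchy–Schwarz step costs. -/
theorem csF_iter {H : Finset (Finset J)} {P : Finset (Finset J × Finset J)}
    {ν : Finset J → ((j : J) → V j) → ℝ} {η : ℝ}
    (hν : LF H ν η) (hη : η ≤ 1) (hP : ∀ i ∈ P, i.1 ∈ H) (hνd : ∀ a, Dep a (ν a))
    {I : Finset (Finset J × Finset J)} {e : Finset J} {f : ((j : J) → V j) → ℝ}
    (hdisj : ∀ i ∈ I, Disjoint i.2 e) (hsub : ∀ i ∈ I, i.2 ⊆ i.1)
    {G : Finset J × Finset J → ((j : J) → V j) → ℝ} (hG : ∀ i ∈ I, Dep i.1 (G i))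
    (hGW : ∀ i ∈ I, ∀ x, |G i x| ≤ wt P ν i x) (d : Finset J) (hde : d ⊆ e) :
    (|avg fun w : ((j : J) → V j) × ((j : J) → V j) =>
        csF f I G (wt P ν) ∅ w.1 w.2| / 2) ^ (2 ^ #d) ≤
      |avg fun w : ((j : J) → V j) × ((j : J) → V j) =>
        csF f I G (wt P ν) d w.1 w.2| / 2 := by
  have hW : ∀ i ∈ I, Dep i.1 (wt P ν i) := fun i _ x y hxy => by
    simp only [wt, hνd i.1 x y hxy]
  induction d using Finset.induction_on with
  | empty => simp
  | insert j d hjd ih =>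
    have hde' := (subset_insert j d).trans hde
    have h1 := ih hde'
    have h2 := csF_step (f := f) hG hW hGW hdisj (hde (mem_insert_self j d)) hjd hde'
    have h3 : avg (fun w : ((j : J) → V j) × ((j : J) → V j) =>
        csW (I.filter fun i => j ∉ i.1) (wt P ν) d w.1 w.2) ≤ 2 := by
      have := (abs_le.1 (hν.csW_close hP (I := I.filter fun i => j ∉ i.1)
        (fun i hi => hdisj i (mem_filter.1 hi).1)
        (fun i hi => hsub i (mem_filter.1 hi).1) hde')).2
      linarith
    have h4 : 0 ≤ avg (fun w : ((j : J) → V j) × ((j : J) → V j) =>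
        csW (I.filter fun i => j ∉ i.1) (wt P ν) d w.1 w.2) :=
      avg_nonneg fun w => prod_nonneg fun i hi => prod_nonneg fun s _ =>
        (abs_nonneg _).trans (hGW i (mem_filter.1 hi).1 _)
    rw [card_insert_of_notMem hjd, pow_succ, pow_mul]
    have h5 := pow_le_pow_left₀ (by positivity) h1 2
    refine h5.trans ?_
    have h6 := mul_le_mul_of_nonneg_left (le_abs_self (avg fun w : ((j : J) → V j) ×
      ((j : J) → V j) => csF f I G (wt P ν) (insert j d) w.1 w.2)) h4
    have h7 := mul_le_mul_of_nonneg_right h3 (abs_nonneg (avg fun w : ((j : J) → V j) ×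
      ((j : J) → V j) => csF f I G (wt P ν) (insert j d) w.1 w.2))
    rw [div_pow, sq_abs]
    linarith

/-- Once all coordinates of `e` are doubled only weights remain, and expanding the product of the
`ν e - 1` gives an alternating sum of averages close to `1`. -/
theorem csF_full {H : Finset (Finset J)} {P : Finset (Finset J × Finset J)}
    {ν : Finset J → ((j : J) → V j) → ℝ} {η : ℝ}
    (hν : LF H ν η) (hP : ∀ i ∈ P, i.1 ∈ H) {e : Finset J} (he : e ∈ H)
    {I : Finset (Finset J × Finset J)}
    (hdisj : ∀ i ∈ I, Disjoint i.2 e) (hsub : ∀ i ∈ I, i.2 ⊆ i.1) (hIe : ∀ i ∈ I, ¬ e ⊆ i.1)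
    (G : Finset J × Finset J → ((j : J) → V j) → ℝ) :
    |avg fun w : ((j : J) → V j) × ((j : J) → V j) =>
        csF (fun x => ν e x - 1) I G (wt P ν) e w.1 w.2| ≤ 2 ^ 2 ^ #e * η := by
  have hexp : ∀ w : ((j : J) → V j) × ((j : J) → V j),
      csF (fun x => ν e x - 1) I G (wt P ν) e w.1 w.2 =
      ∑ t ∈ e.powerset.powerset, (-1) ^ #(e.powerset \ t) *
        ∏ p ∈ t.image (fun s => (e, s)) ∪ csPairs P I e, ν p.1 (p.2.piecewise w.2 w.1) := by
    intro w
    have h1 : csF (fun x => ν e x - 1) I G (wt P ν) e w.1 w.2 =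
        (∏ s ∈ e.powerset, (ν e (s.piecewise w.2 w.1) + -1)) *
          csW I (wt P ν) e w.1 w.2 := by
      simp only [csF, csW, sub_eq_add_neg]
      congr 1
      exact prod_congr rfl fun i hi => by simp only [hIe i hi, if_false]
    rw [h1, csW_eq ν hdisj subset_rfl, prod_add, sum_mul]
    refine sum_congr rfl fun t _ => ?_
    rw [prod_union, prod_image, prod_const]
    · ring
    · intro s _ s' _ h
      exact (Prod.ext_iff.1 h).2
    · rw [Finset.disjoint_left]
      intro p hp hp'
      obtain ⟨s, _, rfl⟩ := mem_image.1 hp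
      obtain ⟨i, hi, _, s', _, h⟩ := mem_csPairs.1 hp'
      exact hIe i hi (Prod.ext_iff.1 h).1.ge
  have halt : ∑ t ∈ e.powerset.powerset, (-1 : ℝ) ^ #(e.powerset \ t) = 0 := by
    have := prod_add (fun _ : Finset J => (1 : ℝ)) (fun _ => -1) e.powerset
    simp only [prod_const_one, one_mul, prod_const] at this
    rw [← this]
    simp
  simp only [hexp]
  rw [avg_sum]
  simp only [avg_const_mul]
  rw [← sub_zero (∑ t ∈ e.powerset.powerset, _), ← halt, ← sum_sub_distrib]
  refine (abs_sum_le_sum_abs _ _).trans ?_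
  calc _ ≤ ∑ t ∈ e.powerset.powerset, η := sum_le_sum fun t ht => ?_
    _ = _ := by simp [card_powerset]
  rw [← mul_sub_one, abs_mul, abs_pow, abs_neg, abs_one, one_pow, one_mul]
  refine hν _ fun p hp => ?_
  rcases mem_union.1 hp with hp | hp
  · obtain ⟨s, hs, rfl⟩ := mem_image.1 hp
    exact ⟨he, mem_powerset.1 (mem_powerset.1 ht hs)⟩
  · obtain ⟨i, hi, hiP, s, hs, rfl⟩ := mem_csPairs.1 hp
    exact ⟨hP i hiP, union_subset (hs.trans inter_subset_right) (hsub i hi)⟩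

/-- The error in the linear forms condition guaranteeing that correlations with `ν e - 1` are at
most `κ`. -/
noncomputable def csη (J : Type) [Fintype J] (κ : ℝ) : ℝ := (min κ 1 / 4) ^ 2 ^ Fintype.card J

theorem csη_pos {κ : ℝ} (hκ : 0 < κ) : 0 < csη J κ := by
  have : 0 < min κ 1 := lt_min hκ one_pos
  unfold csη
  positivity

theorem csη_le_one {κ : ℝ} (hκ : 0 < κ) : csη J κ ≤ 1 := by
  have : 0 < min κ 1 := lt_min hκ one_pos
  exact pow_le_one₀ (by positivity) (by linarith [min_le_right κ 1])

/-- `ν e - 1` does not correlate with products of functions bounded by the weights `ν i.1`, `i ∈ P`,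
or by `1`, none of which sees all coordinates of `e`. -/
theorem cs_small {H : Finset (Finset J)} {P : Finset (Finset J × Finset J)}
    {ν : Finset J → ((j : J) → V j) → ℝ} {κ : ℝ}
    (hκ : 0 < κ) (hν : LF H ν (csη J κ)) (hP : ∀ i ∈ P, i.1 ∈ H) (hνd : ∀ a, Dep a (ν a))
    {e : Finset J} (he : e ∈ H) (I : Finset (Finset J × Finset J))
    (hdisj : ∀ i ∈ I, Disjoint i.2 e) (hsub : ∀ i ∈ I, i.2 ⊆ i.1) (hIe : ∀ i ∈ I, ¬ e ⊆ i.1)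
    (G : Finset J × Finset J → ((j : J) → V j) → ℝ) (hG : ∀ i ∈ I, Dep i.1 (G i))
    (hGW : ∀ i ∈ I, ∀ x, |G i x| ≤ wt P ν i x) :
    |avg fun w : ((j : J) → V j) × ((j : J) → V j) =>
      (ν e w.1 - 1) * ∏ i ∈ I, G i (i.2.piecewise w.2 w.1)| ≤ κ := by
  have h0 : ∀ w : ((j : J) → V j) × ((j : J) → V j),
      (ν e w.1 - 1) * ∏ i ∈ I, G i (i.2.piecewise w.2 w.1) =
      csF (fun x => ν e x - 1) I G (wt P ν) ∅ w.1 w.2 := fun w => by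
    simp only [csF, powerset_empty, prod_singleton, piecewise_empty, empty_inter, empty_subset,
      if_true]
    congr 1
    exact prod_congr rfl fun i _ => by rw [empty_union]
  simp only [h0]
  have h1 := csF_iter (f := fun x => ν e x - 1) hν (csη_le_one hκ) hP hνd hdisj hsub hG hGW e
    subset_rfl
  have h2 := csF_full hν hP he hdisj hsub hIe G
  set a := |avg fun w : ((j : J) → V j) × ((j : J) → V j) =>
      csF (fun x => ν e x - 1) I G (wt P ν) ∅ w.1 w.2|
  by_contra! hlt
  have hm : 0 < min κ 1 := lt_min hκ one_pos
  have hη : csη J κ ≤ (min κ 1 / 4) ^ 2 ^ #e :=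
    pow_le_pow_of_le_one (by positivity) (by linarith [min_le_right κ 1])
      (Nat.pow_le_pow_right (by norm_num) (card_le_univ e))
  have h3 : (min κ 1 / 2) ^ 2 ^ #e < (a / 2) ^ 2 ^ #e :=
    pow_lt_pow_left₀ (by linarith [min_le_left κ 1]) (by positivity) (by positivity)
  have h4 : (2 : ℝ) ^ 2 ^ #e * csη J κ ≤ (min κ 1 / 2) ^ 2 ^ #e := by
    calc _ ≤ (2 : ℝ) ^ 2 ^ #e * (min κ 1 / 4) ^ 2 ^ #e := by gcongr
      _ = _ := by rw [← mul_pow]; congr 1; ring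
  have h5 := abs_nonneg (avg fun w : ((j : J) → V j) × ((j : J) → V j) =>
        csF (fun x => ν e x - 1) I G (wt P ν) e w.1 w.2)
  linarith

end CauchySchwarz

/-! ### Dense models -/

section DenseModel

/-- The linear forms condition makes `ν e - 1` uniform. -/
theorem LF.unif [∀ j, Fintype (V j)] [∀ j, Nonempty (V j)] {H : Finset (Finset J)}
    {ν : Finset J → ((j : J) → V j) → ℝ} {κ : ℝ} (hκ : 0 < κ) (hν : LF H ν (csη J κ))
    (hνd : ∀ a, Dep a (ν a)) {e : Finset J} (he : e ∈ H) :
    Unif e (fun x => ν e x - 1) κ := by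
  intro b hb
  let q : J → Finset J × Finset J := fun j => (e.erase j, ∅)
  let G : Finset J × Finset J → ((j : J) → V j) → ℝ := fun i x =>
    ∏ j ∈ e with q j = i, ind (b j) x
  have h := cs_small hκ hν (P := ∅) (by simp) hνd he (e.image q) ?_ ?_ ?_ G ?_ ?_
  · have h1 : ∀ x y : (j : J) → V j, ∏ i ∈ e.image q, G i (i.2.piecewise y x) =
        ∏ j ∈ e, ind (b j) x := by
      intro x y
      rw [← prod_fiberwise_of_maps_to (fun j hj => mem_image_of_mem q hj)]
      refine prod_congr rfl fun i hi => ?_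
      obtain ⟨j, _, rfl⟩ := mem_image.1 hi
      simp [q, G]
    simp only [h1] at h
    rw [avg_prod] at h
    simpa only [avg_const] using h
  · intro i hi
    obtain ⟨j, _, rfl⟩ := mem_image.1 hi
    exact disjoint_empty_left _
  · intro i hi
    obtain ⟨j, _, rfl⟩ := mem_image.1 hi
    exact empty_subset _
  · intro i hi hsub
    obtain ⟨j, hj, rfl⟩ := mem_image.1 hi
    exact notMem_erase j e (hsub hj)
  · intro i hi
    refine Dep.prod _ fun j hj => ?_
    obtain ⟨hje, rfl⟩ := mem_filter.1 hj
    exact (hb j hje).ind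
  · intro i hi x
    rw [abs_of_nonneg (prod_nonneg fun j _ => ind_nonneg _ _)]
    simp only [wt, notMem_empty, if_false]
    exact prod_le_one (fun j _ => ind_nonneg _ _) fun j _ => ind_le_one _ _

/-- If `ν - 1` is uniform and `g ≤ ν`, then truncating the conditional expectation of `g` at `1`
loses little mass. -/
theorem excess_le [∀ j, Fintype (V j)] [∀ j, Nonempty (V j)]
    {β : Finset J → ((j : J) → V j) → ℕ} {m : ℕ} (hβ : IsCol β m) {e : Finset J}
    (he : e.Nonempty) {g ν : ((j : J) → V j) → ℝ} (hgν : ∀ x, g x ≤ ν x) (hνd : Dep e ν) {κ : ℝ}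
    (hν : Unif e (fun x => ν x - 1) κ) :
    excess β e g ≤ Fintype.card (Finset J → Fin (m + 1)) * κ := by
  let D : Set ((j : J) → V j) := {x | 1 < fcond β e g x}
  have hDjc : ∀ x y, jc β e x = jc β e y → (x ∈ D ↔ y ∈ D) := fun x y h => by
    simp only [D, Set.mem_ofPred_eq, fcond, cexp_congr g h]
  have hind : ∀ x y, jc β e x = jc β e y → ind D x = ind D y := fun x y h => by
    by_cases hx : x ∈ D
    · rw [ind_of_mem hx, ind_of_mem ((hDjc x y h).1 hx)]
    · rw [ind_of_notMem hx, ind_of_notMem fun hy => hx ((hDjc x y h).2 hy)]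
  have h1 : excess β e g = avg fun x => (g x - 1) * ind D x := by
    have h2 : ∀ x, fcond β e g x - tcond β e g x = fcond β e g x * ind D x - ind D x := by
      intro x
      by_cases hx : x ∈ D
      · rw [ind_of_mem hx, tcond, min_eq_right (le_of_lt (by exact hx)), mul_one]
      · rw [ind_of_notMem hx, tcond, min_eq_left (not_lt.1 (by exact hx))]; ring
    simp only [excess, h2, sub_mul, one_mul]
    rw [avg_sub, avg_sub, fcond, avg_cexp_mul _ _ _ hind]
  rw [h1]
  have h3 : avg (fun x => (g x - 1) * ind D x) ≤ avg fun x => (ν x - 1) * ind D x :=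
    avg_mono fun x => mul_le_mul_of_nonneg_right (by linarith [hgν x]) (ind_nonneg _ _)
  refine h3.trans ((le_abs_self _).trans (unif_union hβ he hν (hνd.comp fun t => t - 1) ?_))
  exact fun x y h => hDjc x y (jc_eq_iff.2 fun j hj => h _ (erase_ssubset hj))

/-- Dense model theorem: functions majorised by a weight satisfying the linear forms condition are
close, in the sense of uniformity, to functions bounded by `1`. -/
theorem dense_model (H : Finset (Finset J)) (hH : ∀ e ∈ H, e.Nonempty) {u : ℝ} (hu : 0 < u)
    (hu1 : u ≤ 1) :
    ∃ η > 0, ∀ (V : J → Type) [∀ j, Fintype (V j)] [∀ j, Nonempty (V j)]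
      (ν g : Finset J → ((j : J) → V j) → ℝ), (∀ a, Dep a (ν a)) →
      (∀ e ∈ H, ∀ x, 0 ≤ g e x ∧ g e x ≤ ν e x) → LF H ν η →
      ∃ h : Finset J → ((j : J) → V j) → ℝ, (∀ e, Dep e (h e)) ∧
        (∀ e ∈ H, ∀ x, 0 ≤ h e x ∧ h e x ≤ 1) ∧ ∀ e ∈ H, Unif e (fun x => g e x - h e x) u := by
  let m := 1 * 2 ^ wN (Fintype.card H) u
  let K : ℝ := Fintype.card (Finset J → Fin (m + 1))
  have hK : 0 < K := by
    exact Nat.cast_pos.2 Fintype.card_pos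
  let κ : ℝ := u ^ 2 / (16 * (Fintype.card H + 1)) / K
  have hκ : 0 < κ := by positivity
  refine ⟨csη J κ, csη_pos hκ, ?_⟩
  intro V _ _ ν g hνd hg hν
  obtain ⟨β', _, hβ', hun⟩ := weak_reg (fun e : H => e.1) (g := fun e => g e.1)
    (fun e x => (hg e.1 e.2 x).1) hu hu1 (m := 1) (β := fun _ (_ : (j : J) → V j) => 0)
    (fun f => ⟨fun _ _ _ => rfl, fun _ => Nat.one_pos⟩) (by
      intro β'' hβ'' e
      refine (excess_le hβ'' (hH e.1 e.2) (fun x => (hg e.1 e.2 x).2) (hνd e.1)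
        (hν.unif hκ hνd e.2)).trans_eq ?_
      exact mul_div_cancel₀ _ hK.ne')
  exact ⟨fun e => tcond β' e (g e), fun e => dep_tcond hβ' e _,
    fun e he x => ⟨tcond_nonneg _ _ (fun x => (hg e he x).1) x, tcond_le_one _ _ _ _⟩,
    fun e he => hun ⟨e, he⟩⟩

end DenseModel

/-! ### The relative counting lemma -/

section Counting

/-- The majorant of the edge function on `a`: it is `ν a` for the edges in `P`, and `1` for the
others. -/
noncomputable def bd (P : Finset (Finset J)) (ν : Finset J → ((j : J) → V j) → ℝ) (a : Finset J)
    (x : (j : J) → V j) : ℝ := if a ∈ P then ν a x else 1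

theorem dep_bd (P : Finset (Finset J)) {ν : Finset J → ((j : J) → V j) → ℝ}
    (hνd : ∀ a, Dep a (ν a)) (a : Finset J) : Dep a (bd P ν a) := fun x y hxy => by
  simp only [bd, hνd a x y hxy]

/-- The index set for a product over the edges in `A` at a point and at the point obtained from it
by resampling the coordinates outside `e`. -/
def dbl (A : Finset (Finset J)) (e : Finset J) : Finset (Finset J × Finset J) :=
  A.image (fun a => (a, ∅)) ∪ A.image fun a => (a, a \ e)

/-- The functions indexed by `dbl A e`: those of `G` at the original point, those of `G'` at the
resampled point. -/
def dblFun (G G' : Finset J → ((j : J) → V j) → ℝ) (i : Finset J × Finset J) :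
    ((j : J) → V j) → ℝ := if i.2 = ∅ then G i.1 else G' i.1

theorem mem_dbl {A : Finset (Finset J)} {e : Finset J} {i : Finset J × Finset J}
    (hi : i ∈ dbl A e) : i.1 ∈ A ∧ (i.2 = ∅ ∨ i.2 = i.1 \ e) := by
  rcases mem_union.1 hi with h | h
  · obtain ⟨a, ha, rfl⟩ := mem_image.1 h
    exact ⟨ha, Or.inl rfl⟩
  · obtain ⟨a, ha, rfl⟩ := mem_image.1 h
    exact ⟨ha, Or.inr rfl⟩

theorem prod_dbl {A : Finset (Finset J)} {e : Finset J} (hA : ∀ a ∈ A, ¬ a ⊆ e)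
    (G G' : Finset J → ((j : J) → V j) → ℝ) (hG' : ∀ a ∈ A, Dep a (G' a)) (x y : (j : J) → V j) :
    ∏ i ∈ dbl A e, dblFun G G' i (i.2.piecewise y x) =
      (∏ a ∈ A, G a x) * ∏ a ∈ A, G' a (e.piecewise x y) := by
  have hne : ∀ a ∈ A, a \ e ≠ ∅ := fun a ha h => hA a ha (sdiff_eq_empty_iff_subset.1 h)
  rw [dbl, prod_union, prod_image, prod_image]
  · congr 1
    refine prod_congr rfl fun a ha => ?_
    simp only [dblFun, hne a ha, if_false]
    refine hG' a ha _ _ fun j hj => ?_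
    by_cases hje : j ∈ e <;> simp [hj, hje]
  · intro a _ a' _ h
    exact (Prod.ext_iff.1 h).1
  · intro a _ a' _ h
    exact (Prod.ext_iff.1 h).1
  · rw [Finset.disjoint_left]
    intro i hi hi'
    obtain ⟨a, ha, rfl⟩ := mem_image.1 hi
    obtain ⟨a', ha', h⟩ := mem_image.1 hi'
    exact hne a' ha' (Prod.ext_iff.1 h).2

variable [∀ j, Fintype (V j)] [∀ j, Nonempty (V j)]

/-- A product of two averages over the coordinates outside `e` is an average over two points that
agree on `e`. -/
theorem avg_proj_proj {A : Finset (Finset J)} {e : Finset J} (hA : ∀ a ∈ A, ¬ a ⊆ e)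
    (G G' : Finset J → ((j : J) → V j) → ℝ) (hG' : ∀ a ∈ A, Dep a (G' a))
    {F : ((j : J) → V j) → ℝ} (hF : Dep e F) :
    avg (fun x => F x * (proj e (fun x => ∏ a ∈ A, G a x) x *
      proj e (fun x => ∏ a ∈ A, G' a x) x)) =
    avg fun w : ((j : J) → V j) × ((j : J) → V j) =>
      F w.1 * ∏ i ∈ dbl A e, dblFun G G' i (i.2.piecewise w.2 w.1) := by
  simp only [prod_dbl hA G G' hG']
  rw [avg_prod]
  have h1 : ∀ x : (j : J) → V j, F x * (proj e (fun x => ∏ a ∈ A, G a x) x *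
      proj e (fun x => ∏ a ∈ A, G' a x) x) = proj e (fun x => ∏ a ∈ A, G a x) x *
      (F x * proj e (fun x => ∏ a ∈ A, G' a x) x) := fun x => by ring
  simp only [h1]
  rw [avg_proj_mul _ (hF.comp₂ (dep_proj e _) (· * ·))]
  refine avg_congr fun x => ?_
  simp only [proj, ← avg_const_mul]
  exact avg_congr fun y => by ring

/-- The sparse indices in `dbl A e`, when `P` and `P'` are the sparse edges at the two points. -/
def dblP (A : Finset (Finset J)) (e : Finset J) (P P' : Finset (Finset J)) :
    Finset (Finset J × Finset J) :=
  (dbl A e).filter fun i => if i.2 = ∅ then i.1 ∈ P else i.1 ∈ P'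

theorem wt_dblP {A P P' : Finset (Finset J)} {e : Finset J}
    (ν : Finset J → ((j : J) → V j) → ℝ) {i : Finset J × Finset J} (hi : i ∈ dbl A e) :
    wt (dblP A e P P') ν i = dblFun (bd P ν) (bd P' ν) i := by
  funext x
  by_cases h : i.2 = ∅ <;> simp [wt, dblP, dblFun, bd, hi, h]

theorem dblP_sub {H A P P' : Finset (Finset J)} {e : Finset J} (hP : P ⊆ H) (hP' : P' ⊆ H) :
    ∀ i ∈ dblP A e P P', i.1 ∈ H := by
  intro i hi
  have := (mem_filter.1 hi).2
  split_ifs at this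
  · exact hP this
  · exact hP' this

theorem dbl_disjoint {A : Finset (Finset J)} {e : Finset J} : ∀ i ∈ dbl A e, Disjoint i.2 e := by
  intro i hi
  rcases (mem_dbl hi).2 with h | h <;> rw [h]
  · exact disjoint_empty_left _
  · exact sdiff_disjoint

theorem dbl_subset {A : Finset (Finset J)} {e : Finset J} : ∀ i ∈ dbl A e, i.2 ⊆ i.1 := by
  intro i hi
  rcases (mem_dbl hi).2 with h | h <;> rw [h]
  · exact empty_subset _
  · exact sdiff_subset

/-- The weight `ν e` may be replaced by `1` in front of a product of two averages over the
coordinates outside `e`. -/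
theorem proj_small {H A P P' : Finset (Finset J)} {ν : Finset J → ((j : J) → V j) → ℝ} {κ : ℝ}
    (hκ : 0 < κ) (hν : LF H ν (csη J κ)) (hνd : ∀ a, Dep a (ν a)) (hP : P ⊆ H) (hP' : P' ⊆ H)
    {e : Finset J} (he : e ∈ H) (hA : ∀ a ∈ A, ¬ a ⊆ e) (hA' : ∀ a ∈ A, ¬ e ⊆ a)
    {G G' : Finset J → ((j : J) → V j) → ℝ} (hG : ∀ a ∈ A, Dep a (G a))
    (hG' : ∀ a ∈ A, Dep a (G' a)) (hGb : ∀ a ∈ A, ∀ x, |G a x| ≤ bd P ν a x)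
    (hGb' : ∀ a ∈ A, ∀ x, |G' a x| ≤ bd P' ν a x) :
    |avg fun x => (ν e x - 1) * (proj e (fun x => ∏ a ∈ A, G a x) x *
      proj e (fun x => ∏ a ∈ A, G' a x) x)| ≤ κ := by
  rw [avg_proj_proj hA G G' hG' ((hνd e).comp fun t => t - 1)]
  refine cs_small hκ hν (P := dblP A e P P') (dblP_sub hP hP') hνd he (dbl A e) dbl_disjoint
    dbl_subset (fun i hi => hA' _ (mem_dbl hi).1) (dblFun G G') ?_ ?_
  · intro i hi
    by_cases h : i.2 = ∅ <;> simp only [dblFun, h, if_true, if_false]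
    · exact hG _ (mem_dbl hi).1
    · exact hG' _ (mem_dbl hi).1
  · intro i hi x
    rw [wt_dblP ν hi]
    by_cases h : i.2 = ∅ <;> simp only [dblFun, h, if_true, if_false]
    · exact hGb _ (mem_dbl hi).1 x
    · exact hGb' _ (mem_dbl hi).1 x

theorem proj_close {H A P P' : Finset (Finset J)} {ν : Finset J → ((j : J) → V j) → ℝ} {η : ℝ}
    (hν : LF H ν η) (hνd : ∀ a, Dep a (ν a)) (hP : P ⊆ H) (hP' : P' ⊆ H)
    {e : Finset J} (hA : ∀ a ∈ A, ¬ a ⊆ e) :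
    |avg (fun x => proj e (fun x => ∏ a ∈ A, bd P ν a x) x *
      proj e (fun x => ∏ a ∈ A, bd P' ν a x) x) - 1| ≤ η := by
  have h1 := avg_proj_proj hA (bd P ν) (bd P' ν) (fun a _ => dep_bd P' hνd a)
    (F := fun _ => 1) (fun _ _ _ => rfl)
  simp only [one_mul] at h1
  rw [h1]
  have h2 := hν.csW_close (P := dblP A e P P') (dblP_sub hP hP') (I := dbl A e) (e := e) (d := ∅)
    dbl_disjoint dbl_subset (empty_subset e)
  have h3 : ∀ w : ((j : J) → V j) × ((j : J) → V j),
      csW (dbl A e) (wt (dblP A e P P') ν) ∅ w.1 w.2 =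
        ∏ i ∈ dbl A e, dblFun (bd P ν) (bd P' ν) i (i.2.piecewise w.2 w.1) := fun w => by
    simp only [csW, empty_inter, powerset_empty, prod_singleton]
    exact prod_congr rfl fun i hi => by rw [wt_dblP ν hi, empty_union]
  simpa only [h3] using h2

/-- The average `N` of a product of weights over the coordinates outside `e` is close to `1` in mean
square, which bounds the mass of `N` above `1`. -/
theorem mass_small {H A P : Finset (Finset J)} {ν : Finset J → ((j : J) → V j) → ℝ} {η κ : ℝ}
    (hν : LF H ν η) (hνd : ∀ a, Dep a (ν a)) (hP : P ⊆ H) {e : Finset J}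
    (hA : ∀ a ∈ A, ¬ a ⊆ e) (hκ : 0 < κ) (hκ1 : κ ≤ 1) (hη : η ≤ κ ^ 2 / 24) :
    avg (fun x => (proj e (fun x => ∏ a ∈ A, bd P ν a x) x + 1) *
      |proj e (fun x => ∏ a ∈ A, bd P ν a x) x - 1|) ≤ κ := by
  have h1 := proj_close hν hνd hP hP hA
  have h2 := proj_close hν hνd hP (empty_subset H) hA
  have hone : ∀ x, proj e (fun x => ∏ a ∈ A, bd ∅ ν a x) x = 1 := fun x => by
    simp [proj, bd, avg_const]
  simp only [hone, mul_one] at h2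
  generalize hN : proj e (fun x => ∏ a ∈ A, bd P ν a x) = N at *
  have hpt : ∀ x, (N x + 1) * |N x - 1| ≤
      κ / 2 + (2 / κ + 1) * (N x * N x - 2 * N x + 1) := by
    intro x
    have h3 : N x * N x - 2 * N x + 1 = |N x - 1| ^ 2 := by rw [sq_abs]; ring
    have h4 := le_abs_self (N x - 1)
    have h0 := abs_nonneg (N x - 1)
    rw [h3]
    set c := |N x - 1|
    have h5 : 2 * c ≤ κ / 2 + 2 / κ * c ^ 2 := by
      have h6 : κ / 2 + 2 / κ * c ^ 2 - 2 * c = (κ - 2 * c) ^ 2 / (2 * κ) := by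
        field_simp
        ring
      have h7 : 0 ≤ (κ - 2 * c) ^ 2 / (2 * κ) := by positivity
      linarith
    nlinarith
  refine (avg_mono hpt).trans ?_
  rw [avg_add, avg_const, avg_const_mul, avg_add, avg_sub, avg_const_mul, avg_const]
  rw [abs_le] at h1 h2
  have h3 : avg (fun x => N x * N x) - 2 * avg (fun x => N x) + 1 ≤ κ ^ 2 / 8 := by
    linarith [h1.2, h2.1]
  have h4 : (2 / κ + 1) * (avg (fun x => N x * N x) - 2 * avg (fun x => N x) + 1) ≤
      (2 / κ + 1) * (κ ^ 2 / 8) := mul_le_mul_of_nonneg_left h3 (by positivity)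
  have h5 : (2 / κ + 1) * (κ ^ 2 / 8) = κ / 4 + κ * κ / 8 := by field_simp; ring
  nlinarith

/-- The hypotheses of the relative counting lemma, with `P` the set of sparse edges: `g` is
majorised by `ν` on the edges in `P` and by `1` on the others, and is close to the functions `h`
bounded by `1`. -/
structure CountHyp (H P : Finset (Finset J)) (ν g h : Finset J → ((j : J) → V j) → ℝ)
    (η : ℝ) : Prop where
  sub : P ⊆ H
  depν : ∀ a, Dep a (ν a)
  lf : LF H ν η
  depg : ∀ a ∈ H, Dep a (g a)
  deph : ∀ a ∈ H, Dep a (h a)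
  bdg : ∀ a ∈ H, ∀ x, 0 ≤ g a x ∧ g a x ≤ bd P ν a x
  bdh : ∀ a ∈ H, ∀ x, 0 ≤ h a x ∧ h a x ≤ 1
  unif : ∀ a ∈ H, Unif a (fun x => g a x - h a x) η

theorem proj_nonneg {e : Finset J} {R : ((j : J) → V j) → ℝ} (hR : ∀ x, 0 ≤ R x)
    (x : (j : J) → V j) : 0 ≤ proj e R x := avg_nonneg fun _ => hR _

theorem proj_mono {e : Finset J} {R S : ((j : J) → V j) → ℝ} (h : ∀ x, R x ≤ S x)
    (x : (j : J) → V j) : proj e R x ≤ proj e S x := avg_mono fun _ => h _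

/-- Densification: the sparse edge `e` is removed from `P`. By Cauchy–Schwarz it suffices that the
averages of the other edge functions over the coordinates outside `e` agree in mean square for `g`
and `h`, and this is a counting statement in which `e` carries a function bounded by `1`. -/
theorem count_step {H P : Finset (Finset J)} {ν g h : Finset J → ((j : J) → V j) → ℝ} {η κ c : ℝ}
    (hne : ∀ a ∈ H, a.Nonempty) (hanti : ∀ a ∈ H, ∀ b ∈ H, a ⊆ b → a = b)
    (hκ : 0 < κ) (hκ1 : κ ≤ 1) (hc : c = κ ^ 2 / 64) (hyp : CountHyp H P ν g h η) {e : Finset J}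
    (he : e ∈ P) (hη1 : η ≤ csη J c) (hη2 : η ≤ c ^ 2 / 24) (hη3 : η ≤ κ / 2)
    (ih : ∀ ψ : ((j : J) → V j) → ℝ, Dep e ψ → (∀ x, 0 ≤ ψ x ∧ ψ x ≤ 1) →
      |avg (fun x => (∏ a ∈ H.erase e, g a x) * ψ x) -
        avg (fun x => (∏ a ∈ H.erase e, h a x) * ψ x)| ≤ c) :
    |avg (fun x => ∏ a ∈ H, g a x) - avg (fun x => ∏ a ∈ H, h a x)| ≤ κ := by
  have heH := hyp.sub he
  have hc0 : 0 < c := by rw [hc]; positivity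
  have hc1 : c ≤ 1 := by rw [hc]; nlinarith
  have hA : ∀ a ∈ H.erase e, ¬ a ⊆ e := fun a ha hs =>
    (mem_erase.1 ha).1 (hanti a (mem_erase.1 ha).2 e heH hs)
  have hA' : ∀ a ∈ H.erase e, ¬ e ⊆ a := fun a ha hs =>
    (mem_erase.1 ha).1 (hanti e heH a (mem_erase.1 ha).2 hs).symm
  have hbde : ∀ x, bd P ν e x = ν e x := fun x => by simp [bd, he]
  have hge : ∀ x, 0 ≤ g e x ∧ g e x ≤ ν e x := fun x => by
    rw [← hbde]; exact hyp.bdg e heH x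
  have hbdg : ∀ a ∈ H.erase e, ∀ x, 0 ≤ g a x ∧ g a x ≤ bd P ν a x := fun a ha =>
    hyp.bdg a (mem_erase.1 ha).2
  have hbdh : ∀ a ∈ H.erase e, ∀ x, 0 ≤ h a x ∧ h a x ≤ 1 := fun a ha =>
    hyp.bdh a (mem_erase.1 ha).2
  have hdg : ∀ a ∈ H.erase e, Dep a (g a) := fun a ha => hyp.depg a (mem_erase.1 ha).2
  have hdh : ∀ a ∈ H.erase e, Dep a (h a) := fun a ha => hyp.deph a (mem_erase.1 ha).2
  have hag : ∀ a ∈ H.erase e, ∀ x, |g a x| ≤ bd P ν a x := fun a ha x => by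
    rw [abs_of_nonneg (hbdg a ha x).1]; exact (hbdg a ha x).2
  have hah : ∀ a ∈ H.erase e, ∀ x, |h a x| ≤ bd ∅ ν a x := fun a ha x => by
    rw [abs_of_nonneg (hbdh a ha x).1]; simpa [bd] using (hbdh a ha x).2
  have hlf := hyp.lf.mono hη1
  -- the error terms produced by replacing the weight `ν e` by `1`
  have hgg := proj_small hc0 hlf hyp.depν hyp.sub hyp.sub heH hA hA' hdg hdg hag hag
  have hgh := proj_small hc0 hlf hyp.depν hyp.sub (empty_subset H) heH hA hA' hdg hdh hag hah
  have hhh := proj_small hc0 hlf hyp.depν (empty_subset H) (empty_subset H) heH hA hA' hdh hdh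
    hah hah
  have hmass := mass_small hyp.lf hyp.depν hyp.sub hA hc0 hc1 hη2
  have hR0 : ∀ x, 0 ≤ ∏ a ∈ H.erase e, g a x := fun x =>
    prod_nonneg fun a ha => (hbdg a ha x).1
  have hS0 : ∀ x, 0 ≤ ∏ a ∈ H.erase e, h a x := fun x =>
    prod_nonneg fun a ha => (hbdh a ha x).1
  have hS1 : ∀ x, ∏ a ∈ H.erase e, h a x ≤ 1 := fun x =>
    prod_le_one (fun a ha => (hbdh a ha x).1) fun a ha => (hbdh a ha x).2
  have hRN : ∀ x, ∏ a ∈ H.erase e, g a x ≤ ∏ a ∈ H.erase e, bd P ν a x := fun x =>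
    prod_le_prod (fun a ha => (hbdg a ha x).1) fun a ha => (hbdg a ha x).2
  have hG0 := proj_nonneg (e := e) hR0
  have hH0 := proj_nonneg (e := e) hS0
  have hH1 : ∀ x, proj e (fun x => ∏ a ∈ H.erase e, h a x) x ≤ 1 := fun x =>
    avg_le_const fun _ => hS1 _
  have hGN := proj_mono (e := e) hRN
  have hface : FaceProd e fun x => ∏ a ∈ H.erase e, h a x :=
    FaceProd.prod (hne e heH) _ fun a ha => FaceProd.of_dep (hA' a ha) (hdh a ha) (hbdh a ha)
  have hT2 := (hyp.unif e heH).faceProd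
    ((hyp.depg e heH).comp₂ (hyp.deph e heH) (· - ·)) hface
  have hprod : ∀ f : Finset J → ((j : J) → V j) → ℝ, Dep e (f e) →
      avg (fun x => ∏ a ∈ H, f a x) =
        avg fun x => proj e (fun x => ∏ a ∈ H.erase e, f a x) x * f e x := by
    intro f hf
    rw [avg_proj_mul _ hf]
    exact avg_congr fun x => by rw [mul_comm, mul_prod_erase H (fun a => f a x) heH]
  rw [hprod g (hyp.depg e heH), hprod h (hyp.deph e heH)]
  have hpR : ∀ ψ : ((j : J) → V j) → ℝ, Dep e ψ →
      avg (fun x => proj e (fun x => ∏ a ∈ H.erase e, g a x) x * ψ x) =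
        avg fun x => (∏ a ∈ H.erase e, g a x) * ψ x := fun ψ hψ => avg_proj_mul _ hψ
  have hpS : ∀ ψ : ((j : J) → V j) → ℝ, Dep e ψ →
      avg (fun x => proj e (fun x => ∏ a ∈ H.erase e, h a x) x * ψ x) =
        avg fun x => (∏ a ∈ H.erase e, h a x) * ψ x := fun ψ hψ => avg_proj_mul _ hψ
  have hdG := dep_proj e (fun x => ∏ a ∈ H.erase e, g a x)
  have hdH := dep_proj e (fun x => ∏ a ∈ H.erase e, h a x)
  have hT2' : avg (fun x => (g e x - h e x) * ∏ a ∈ H.erase e, h a x) =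
      avg fun x => (g e x - h e x) * proj e (fun x => ∏ a ∈ H.erase e, h a x) x := by
    simp only [mul_comm (g e _ - h e _)]
    exact (hpS _ ((hyp.depg e heH).comp₂ (hyp.deph e heH) (· - ·))).symm
  rw [hT2'] at hT2
  have ih' : ∀ ψ : ((j : J) → V j) → ℝ, Dep e ψ → (∀ x, 0 ≤ ψ x ∧ ψ x ≤ 1) →
      |avg (fun x => (proj e (fun x => ∏ a ∈ H.erase e, g a x) x -
        proj e (fun x => ∏ a ∈ H.erase e, h a x) x) * ψ x)| ≤ c := by
    intro ψ hψ h01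
    simp only [sub_mul]
    rw [avg_sub, hpR ψ hψ, hpS ψ hψ]
    exact ih ψ hψ h01
  generalize proj e (fun x => ∏ a ∈ H.erase e, g a x) = G at *
  generalize proj e (fun x => ∏ a ∈ H.erase e, h a x) = K at *
  generalize proj e (fun x => ∏ a ∈ H.erase e, bd P ν a x) = N at *
  have ihmin := ih' (fun x => min (G x) 1) (hdG.comp fun t => min t 1)
    fun x => ⟨le_min (hG0 x) zero_le_one, min_le_right _ _⟩
  have ihK := ih' K hdH fun x => ⟨hH0 x, hH1 x⟩
  have hsq : avg (fun x => (G x - K x) ^ 2) ≤ 3 * c := by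
    have hpt : ∀ x, (G x - K x) ^ 2 ≤ (G x - K x) * min (G x) 1 - (G x - K x) * K x +
        (N x + 1) * |N x - 1| := by
      intro x
      have h1 : 0 ≤ G x - min (G x) 1 := by linarith [min_le_left (G x) 1]
      have h2 : G x - min (G x) 1 ≤ |N x - 1| := by
        rcases min_cases (G x) 1 with h | h <;> rw [h.1]
        · simp
        · linarith [hGN x, le_abs_self (N x - 1)]
      have h3 : G x - K x ≤ N x + 1 := by linarith [hGN x, hH0 x]
      have h4 : 0 ≤ N x + 1 := by linarith [hGN x, hG0 x]
      have h5 : (G x - K x) * (G x - min (G x) 1) ≤ (N x + 1) * |N x - 1| :=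
        (mul_le_mul_of_nonneg_right h3 h1).trans (mul_le_mul_of_nonneg_left h2 h4)
      linarith
    have := avg_mono hpt
    rw [avg_add, avg_sub] at this
    rw [abs_le] at ihmin ihK
    linarith [ihmin.2, ihK.1]
  have hwsq : avg (fun x => ν e x * (G x - K x) ^ 2) ≤ 7 * c := by
    have h1 : ∀ x, ν e x * (G x - K x) ^ 2 = (ν e x - 1) * (G x * G x) -
        2 * ((ν e x - 1) * (G x * K x)) + (ν e x - 1) * (K x * K x) + (G x - K x) ^ 2 :=
      fun x => by ring
    simp only [h1]
    rw [avg_add, avg_add, avg_sub, avg_const_mul]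
    rw [abs_le] at hgg hgh hhh
    linarith [hgg.2, hgh.1, hhh.2]
  have hνavg : avg (ν e) ≤ 2 := by
    have h1 := hyp.lf {(e, ∅)} (by simp [heH])
    simp only [prod_singleton, piecewise_empty] at h1
    rw [avg_prod] at h1
    simp only [avg_const] at h1
    have h2 : csη J c ≤ 1 := csη_le_one hc0
    linarith [(abs_le.1 h1).2]
  have hCS := avg_cauchy (a := g e) (b := fun x => G x - K x) (w := ν e)
    (fun x => by rw [abs_of_nonneg (hge x).1]; exact (hge x).2)
  have hwsq0 : 0 ≤ avg (fun x => ν e x * (G x - K x) ^ 2) :=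
    avg_nonneg fun x => mul_nonneg ((hge x).1.trans (hge x).2) (sq_nonneg _)
  have hT1 : |avg fun x => g e x * (G x - K x)| ≤ κ / 2 := by
    rw [← sq_le_sq₀ (abs_nonneg _) (by positivity), sq_abs]
    have := mul_le_mul hνavg hwsq hwsq0 zero_le_two
    rw [hc] at this
    nlinarith
  have hfin : avg (fun x => G x * g e x) - avg (fun x => K x * h e x) =
      avg (fun x => g e x * (G x - K x)) + avg fun x => (g e x - h e x) * K x := by
    rw [← avg_sub, ← avg_add]
    exact avg_congr fun x => by ring
  rw [hfin]
  exact (abs_add_le _ _).trans (by linarith)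

/-- The counting lemma without sparse edges: replace the functions `g a` by `h a` one at a time. -/
theorem count_dense {H : Finset (Finset J)} {ν g h : Finset J → ((j : J) → V j) → ℝ} {η : ℝ}
    (hne : ∀ a ∈ H, a.Nonempty) (hanti : ∀ a ∈ H, ∀ b ∈ H, a ⊆ b → a = b)
    (hyp : CountHyp H ∅ ν g h η) (S : Finset (Finset J)) (hS : S ⊆ H) :
    |avg (fun x => ∏ a ∈ H, (if a ∈ S then g a else h a) x) - avg (fun x => ∏ a ∈ H, h a x)| ≤
      #S * η := by
  induction S using Finset.induction_on with
  | empty => simp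
  | insert e S heS ih =>
    have heH := hS (mem_insert_self e S)
    have h1 := ih ((subset_insert e S).trans hS)
    let f : Finset J → ((j : J) → V j) → ℝ := fun a => if a ∈ S then g a else h a
    have hf : ∀ a ∈ H, Dep a (f a) := fun a ha => by
      by_cases h : a ∈ S <;> simp only [f, h, if_true, if_false]
      · exact hyp.depg a ha
      · exact hyp.deph a ha
    have hf01 : ∀ a ∈ H, ∀ x, 0 ≤ f a x ∧ f a x ≤ 1 := fun a ha x => by
      by_cases h : a ∈ S <;> simp only [f, h, if_true, if_false]
      · simpa [bd] using hyp.bdg a ha x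
      · exact hyp.bdh a ha x
    have hface : FaceProd e fun x => ∏ a ∈ H.erase e, f a x := by
      refine FaceProd.prod (hne e heH) _ fun a ha => ?_
      obtain ⟨hae, haH⟩ := mem_erase.1 ha
      exact FaceProd.of_dep (fun hs => hae (hanti e heH a haH hs).symm) (hf a haH) (hf01 a haH)
    have h2 := (hyp.unif e heH).faceProd
      ((hyp.depg e heH).comp₂ (hyp.deph e heH) (· - ·)) hface
    have h3 : avg (fun x => ∏ a ∈ H, (if a ∈ insert e S then g a else h a) x) -
        avg (fun x => ∏ a ∈ H, f a x) =
        avg fun x => (g e x - h e x) * ∏ a ∈ H.erase e, f a x := by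
      rw [← avg_sub]
      refine avg_congr fun x => ?_
      rw [← mul_prod_erase H _ heH, ← mul_prod_erase H (fun a => f a x) heH]
      have h4 : ∏ a ∈ H.erase e, (if a ∈ insert e S then g a else h a) x =
          ∏ a ∈ H.erase e, f a x := prod_congr rfl fun a ha => by
        simp [f, (mem_erase.1 ha).1]
      rw [h4, if_pos (mem_insert_self e S)]
      simp only [f, heS, if_false]
      ring
    rw [← h3] at h2
    rw [card_insert_of_notMem heS]
    push_cast
    have h5 := abs_sub_le (avg fun x => ∏ a ∈ H, (if a ∈ insert e S then g a else h a) x)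
      (avg fun x => ∏ a ∈ H, f a x) (avg fun x => ∏ a ∈ H, h a x)
    linarith

end Counting

/-- Relative counting lemma, by induction on the number of sparse edges. -/
theorem rel_count (H : Finset (Finset J)) (hne : ∀ a ∈ H, a.Nonempty)
    (hanti : ∀ a ∈ H, ∀ b ∈ H, a ⊆ b → a = b) (n : ℕ) :
    ∀ κ : ℝ, 0 < κ → ∃ η > 0, ∀ (V : J → Type) [∀ j, Fintype (V j)] [∀ j, Nonempty (V j)]
      (P : Finset (Finset J)) (ν g h : Finset J → ((j : J) → V j) → ℝ), #P ≤ n →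
      CountHyp H P ν g h η →
      |avg (fun x => ∏ a ∈ H, g a x) - avg (fun x => ∏ a ∈ H, h a x)| ≤ κ := by
  have hdense : ∀ κ : ℝ, 0 < κ → ∀ (V : J → Type) [∀ j, Fintype (V j)] [∀ j, Nonempty (V j)]
      (ν g h : Finset J → ((j : J) → V j) → ℝ) (η : ℝ), η ≤ κ / (#H + 1) →
      CountHyp H ∅ ν g h η →
      |avg (fun x => ∏ a ∈ H, g a x) - avg (fun x => ∏ a ∈ H, h a x)| ≤ κ := by
    intro κ hκ V _ _ ν g h η hη hyp
    have h1 := count_dense hne hanti hyp H subset_rfl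
    have h2 : ∀ x : (j : J) → V j, ∏ a ∈ H, (if a ∈ H then g a else h a) x =
        ∏ a ∈ H, g a x := fun x => prod_congr rfl fun a ha => by rw [if_pos ha]
    simp only [h2] at h1
    rw [le_div_iff₀ (by positivity)] at hη
    have h3 : #H * η ≤ κ := by
      rcases le_or_gt 0 η with h | h
      · linarith
      · have : #H * η ≤ 0 := mul_nonpos_of_nonneg_of_nonpos (Nat.cast_nonneg _) h.le
        linarith
    exact h1.trans h3
  induction n with
  | zero =>
    intro κ hκ
    refine ⟨κ / (#H + 1), by positivity, ?_⟩
    intro V _ _ P ν g h hP hyp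
    obtain rfl := card_eq_zero.1 (Nat.le_zero.1 hP)
    exact hdense κ hκ V ν g h _ le_rfl hyp
  | succ n ih =>
    intro κ hκ
    let κ' := min κ 1
    have hκ' : 0 < κ' := lt_min hκ one_pos
    let c := κ' ^ 2 / 64
    have hc : 0 < c := by positivity
    obtain ⟨η₀, hη₀, hcount⟩ := ih c hc
    have hpos : 0 < csη J c := csη_pos hc
    refine ⟨min (min η₀ (κ / (#H + 1))) (min (csη J c) (min (c ^ 2 / 24) (κ' / 2))), by positivity,
      ?_⟩
    intro V _ _ P ν g h hP hyp
    set η := min (min η₀ (κ / (#H + 1))) (min (csη J c) (min (c ^ 2 / 24) (κ' / 2)))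
    have hη0 : η ≤ η₀ := (min_le_left _ _).trans (min_le_left _ _)
    rcases P.eq_empty_or_nonempty with rfl | ⟨e, he⟩
    · exact hdense κ hκ V ν g h η ((min_le_left _ _).trans (min_le_right _ _)) hyp
    refine (count_step hne hanti hκ' (min_le_right _ _) rfl hyp he
      ((min_le_right _ _).trans (min_le_left _ _))
      ((min_le_right _ _).trans ((min_le_right _ _).trans (min_le_left _ _)))
      ((min_le_right _ _).trans ((min_le_right _ _).trans (min_le_right _ _))) ?_).trans
      (min_le_left _ _)
    intro ψ hψ h01
    have heH := hyp.sub he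
    have hprod : ∀ f : Finset J → ((j : J) → V j) → ℝ, ∀ x,
        ∏ a ∈ H, Function.update f e ψ a x = (∏ a ∈ H.erase e, f a x) * ψ x := by
      intro f x
      rw [← prod_erase_mul H _ heH, Function.update_self]
      congr 1
      exact prod_congr rfl fun a ha => by rw [Function.update_of_ne (mem_erase.1 ha).1]
    have hη : 0 ≤ η₀ := hη₀.le
    have := hcount V (P.erase e) ν (Function.update g e ψ) (Function.update h e ψ)
      (by rw [card_erase_of_mem he]; omega)
      { sub := (erase_subset _ _).trans hyp.sub
        depν := hyp.depν
        lf := hyp.lf.mono hη0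
        depg := fun a ha => by
          rcases eq_or_ne a e with rfl | hae
          · rwa [Function.update_self]
          · rw [Function.update_of_ne hae]; exact hyp.depg a ha
        deph := fun a ha => by
          rcases eq_or_ne a e with rfl | hae
          · rwa [Function.update_self]
          · rw [Function.update_of_ne hae]; exact hyp.deph a ha
        bdg := fun a ha x => by
          rcases eq_or_ne a e with rfl | hae
          · rw [Function.update_self]; simpa [bd] using h01 x
          · rw [Function.update_of_ne hae]; simpa [bd, hae] using hyp.bdg a ha x
        bdh := fun a ha x => by
          rcases eq_or_ne a e with rfl | hae
          · rw [Function.update_self]; exact h01 x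
          · rw [Function.update_of_ne hae]; exact hyp.bdh a ha x
        unif := fun a ha => by
          rcases eq_or_ne a e with rfl | hae
          · intro b _
            simp only [Function.update_self, sub_self, zero_mul, avg_const, abs_zero]
            exact hη
          · simp only [Function.update_of_ne hae]
            exact fun b hb => (hyp.unif a ha b hb).trans hη0 }
    simpa only [hprod] using this

/-! ### Removal for functions on the full product -/

/-- Relative removal for a fixed hypergraph. The dense model `h` of `g` has few copies of `H` by the
counting lemma, so dense removal applies to the level sets `h e ≥ τ`. The exceptional sets `D e`
are unions of boundedly many cells, on which `g` and `h` have nearly the same mass. -/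
theorem removal_aux (H : Finset (Finset J)) (r : ℕ) (hr : 1 ≤ r) (hH : ∀ e ∈ H, e.card = r)
    {ε : ℝ} (hε : 0 < ε) :
    ∃ δ : ℝ, 0 < δ ∧ ∃ m : ℕ, ∃ η : ℝ, 0 < η ∧
      ∀ (V : J → Type) [∀ j, Fintype (V j)] [∀ j, Nonempty (V j)]
        (ν g : Finset J → ((j : J) → V j) → ℝ), (∀ a, Dep a (ν a)) → (∀ a, Dep a (g a)) →
        (∀ e ∈ H, ∀ x, 0 ≤ g e x ∧ g e x ≤ ν e x) → LF H ν η →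
        avg (fun x => ∏ e ∈ H, g e x) ≤ δ →
        ∃ γ, IsCol γ m ∧ ∃ D : Finset J → Set ((j : J) → V j),
          (∀ e ∈ H, ∀ x y, (∀ f, f ⊂ e → γ f x = γ f y) → (x ∈ D e ↔ y ∈ D e)) ∧
          (∀ x, ∃ e ∈ H, x ∈ D e) ∧ ∀ e ∈ H, avg (fun x => g e x * ind (D e) x) ≤ ε := by
  have hne : ∀ a ∈ H, a.Nonempty := fun a ha => card_pos.1 (by rw [hH a ha]; omega)
  have hanti : ∀ a ∈ H, ∀ b ∈ H, a ⊆ b → a = b := fun a ha b hb hab =>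
    eq_of_subset_of_card_le hab (by rw [hH a ha, hH b hb])
  let τ := ε / 4
  have hτ : 0 < τ := by positivity
  obtain ⟨δ₀, hδ₀, m, hdense⟩ := dense_removal J H r hH τ hτ
  let K : ℝ := Fintype.card (Finset J → Fin (m + 1))
  have hK : 0 < K := Nat.cast_pos.2 Fintype.card_pos
  let q := δ₀ * τ ^ #H
  have hq : 0 < q := by positivity
  obtain ⟨η₁, hη₁, hcount⟩ := rel_count H hne hanti #H (q / 4) (by positivity)
  let u := min 1 (min η₁ (τ / K))
  have hu : 0 < u := by positivity
  have huη : u ≤ η₁ := (min_le_right _ _).trans (min_le_left _ _)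
  have huK : K * u ≤ τ := by
    have : u ≤ τ / K := (min_le_right _ _).trans (min_le_right _ _)
    rwa [le_div_iff₀ hK, mul_comm] at this
  obtain ⟨η₂, hη₂, hmodel⟩ := dense_model H hne hu (min_le_left _ _)
  refine ⟨q / 4, by positivity, m, min η₁ η₂, by positivity, ?_⟩
  intro V _ _ ν g hνd hgd hg hν hδ
  obtain ⟨h, hhd, hh01, hunif⟩ := hmodel V ν g hνd hg (hν.mono (min_le_right _ _))
  have hc := hcount V H ν g h le_rfl
    { sub := subset_rfl
      depν := hνd
      lf := hν.mono (min_le_left _ _)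
      depg := fun a _ => hgd a
      deph := fun a _ => hhd a
      bdg := fun a ha x => by simpa [bd, ha] using hg a ha x
      bdh := hh01
      unif := fun a ha b hb => (hunif a ha b hb).trans huη }
  let E : Finset J → Set ((j : J) → V j) := fun e => {x | τ ≤ h e x}
  have hEd : ∀ e, Dep e (fun x => x ∈ E e) := fun e => (hhd e).comp fun t => τ ≤ t
  have hsmall : avg (ind {x | ∀ e ∈ H, x ∈ E e}) < δ₀ := by
    have h1 : avg (fun x => ind {x | ∀ e ∈ H, x ∈ E e} x * τ ^ #H) ≤
        avg fun x => ∏ e ∈ H, h e x := by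
      refine avg_mono fun x => ?_
      by_cases hx : ∀ e ∈ H, x ∈ E e
      · rw [ind_of_mem (by exact hx), one_mul, ← prod_const]
        exact prod_le_prod (fun _ _ => hτ.le) fun e he => hx e he
      · rw [ind_of_notMem (by exact hx), zero_mul]
        exact prod_nonneg fun e he => (hh01 e he x).1
    rw [avg_mul_const] at h1
    have h2 : avg (ind {x | ∀ e ∈ H, x ∈ E e}) * τ ^ #H < δ₀ * τ ^ #H := by
      have := (abs_le.1 hc).1
      change _ < q
      linarith
    exact lt_of_mul_lt_mul_right h2 (by positivity)
  obtain ⟨γ, hγ, D, hD, hED, hcov⟩ := hdense V E hEd hsmall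
  refine ⟨γ, hγ, D, hD, hcov, fun e he => ?_⟩
  have h1 := unif_union hγ (hne e he) (hunif e he) ((hgd e).comp₂ (hhd e) (· - ·)) (hD e he)
  have h2 : avg (fun x => h e x * ind (D e) x) ≤ avg (fun x => ind (E e ∩ D e) x + τ) := by
    refine avg_mono fun x => ?_
    rw [ind_inter]
    have hd0 := ind_nonneg (D e) x
    have hd1 := ind_le_one (D e) x
    by_cases hx : x ∈ E e
    · rw [ind_of_mem hx]
      have := mul_le_mul_of_nonneg_right (hh01 e he x).2 hd0
      linarith
    · rw [ind_of_notMem hx]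
      have hlt : h e x < τ := not_le.1 (by exact hx)
      have := mul_le_mul_of_nonneg_left hd1 (hh01 e he x).1
      linarith
  rw [avg_add, avg_const] at h2
  have h3 : avg (fun x => g e x * ind (D e) x) =
      avg (fun x => (g e x - h e x) * ind (D e) x) + avg fun x => h e x * ind (D e) x := by
    rw [← avg_add]
    exact avg_congr fun x => by ring
  have h4 : avg (fun x => (g e x - h e x) * ind (D e) x) ≤ τ :=
    ((le_abs_self _).trans h1).trans huK
  have h5 := hED e he
  rw [h3]
  have : τ = ε / 4 := rfl
  linarith

/-! ### Passing between functions of edges and functions on the full product -/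

section Transfer

/-- The coordinates at which `ω` selects the second point. -/
def supp (e : Finset J) (ω : ↥e → Bool) : Finset J := e.filter fun j => ∃ h : j ∈ e, ω ⟨j, h⟩ = true

theorem mem_supp {e : Finset J} {ω : ↥e → Bool} (i : ↥e) : i.1 ∈ supp e ω ↔ ω i = true := by
  simp [supp]

theorem dep_restr (e : Finset J) {β : Type*} (φ : ((i : ↥e) → V i) → β) :
    Dep e (fun x : (j : J) → V j => φ (restr e x)) := fun _ _ hxy =>
  congrArg φ (funext fun i => hxy i.1 i.2)

/-- The pairs `(e, s)` with `s ⊆ e` correspond to the vectors `ω ∈ {0,1}^e`. -/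
theorem prod_forms (H : Finset (Finset J)) (ν : (e : Finset J) → ((i : ↥e) → V i) → ℝ)
    {S : Finset (Finset J × Finset J)} (hS : ∀ p ∈ S, p.1 ∈ H ∧ p.2 ⊆ p.1)
    (x y : (j : J) → V j) :
    ∏ p ∈ S, ν p.1 (restr p.1 (p.2.piecewise y x)) =
      ∏ e ∈ H, ∏ ω : ↥e → Bool, if decide ((e, supp e ω) ∈ S) = true then
        ν e (fun i => if ω i then y i.1 else x i.1) else 1 := by
  rw [← prod_fiberwise_of_maps_to fun p hp => (hS p hp).1]
  refine prod_congr rfl fun e _ => ?_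
  rw [← prod_filter]
  symm
  refine prod_bij (fun ω _ => (e, supp e ω)) ?_ ?_ ?_ ?_
  · intro ω hω
    simpa using hω
  · intro ω _ ω' _ h
    have h2 : supp e ω = supp e ω' := (Prod.ext_iff.1 h).2
    funext i
    have h3 := mem_supp (ω := ω) i
    rw [h2, mem_supp] at h3
    exact Bool.eq_iff_iff.2 h3.symm
  · rintro ⟨a, s⟩ hp
    obtain ⟨hpS, hae⟩ := mem_filter.1 hp
    obtain rfl : a = e := hae
    have hsub : s ⊆ a := (hS (a, s) hpS).2
    have hs : supp a (fun i => decide (i.1 ∈ s)) = s := by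
      ext j
      simp only [supp, mem_filter, decide_eq_true_eq]
      exact ⟨fun h => h.2.2, fun h => ⟨hsub h, hsub h, h⟩⟩
    refine ⟨fun i => decide (i.1 ∈ s), ?_, ?_⟩
    · simpa [hs] using hpS
    · exact Prod.ext rfl hs
  · intro ω _
    congr 1
    funext i
    by_cases h : ω i = true <;> simp [restr, Finset.piecewise, mem_supp, h]

variable [∀ j, Fintype (V j)]

theorem HLinearForms.lf {H : Finset (Finset J)} {ν : (e : Finset J) → ((i : ↥e) → V i) → ℝ}
    {η : ℝ} (h : HLinearForms H ν η) :
    LF H (fun e (x : (j : J) → V j) => ν e (restr e x)) η := by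
  intro S hS
  have := h fun e ω => decide ((e, supp e ω) ∈ S)
  simpa only [prod_forms H ν hS] using this

theorem avg_restr [∀ j, Nonempty (V j)] (e : Finset J) (φ : ((i : ↥e) → V i) → ℝ) :
    avg (fun x : (j : J) → V j => φ (restr e x)) = avg φ := by
  have h := avg_comp_equiv (Equiv.piEquivPiSubtypeProd (fun j => j ∈ e) V) (fun p => φ p.1)
  rw [avg_prod] at h
  simp only [avg_const] at h
  exact h

end Transfer

/-- **Relative hypergraph removal lemma.** For every `ε > 0` and finite `J` there exist
`δ > 0`, `T > 0` and `η > 0` such that: for every hypergraph system `(J, (V_j), r, H)`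
and weighted hypergraphs `ν, g` with `0 ≤ g ≤ ν`, if `ν` satisfies the `H`-linear forms
condition within `η` and `E[∏_{e ∈ H} g_e(x_e)] ≤ δ`, then there are sets `E'_e ⊆ V_e`
whose complements have complexity at most `T`, with `∏_{e ∈ H} 1_{E'_e}(x_e) = 0` for
all `x ∈ V_J` and `E[g_e · 1_{V_e ∖ E'_e}] ≤ ε` for all `e ∈ H`. -/
theorem relative_hypergraph_removal (ε : ℝ) (hε : 0 < ε)
    (J : Type) [Fintype J] [DecidableEq J] :
    ∃ δ : ℝ, 0 < δ ∧ ∃ T : ℕ, 0 < T ∧ ∃ η : ℝ, 0 < η ∧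
    ∀ (V : J → Type) [∀ j, Fintype (V j)] [∀ j, Nonempty (V j)]
      (r : ℕ), 1 ≤ r → ∀ H : Finset (Finset J), (∀ e ∈ H, e.card = r) →
      ∀ ν g : (e : Finset J) → ((i : ↥e) → V i) → ℝ,
      (∀ e ∈ H, ∀ x, 0 ≤ g e x ∧ g e x ≤ ν e x) →
      HLinearForms H ν η →
      avg (fun x : (j : J) → V j => ∏ e ∈ H, g e (restr e x)) ≤ δ →
      ∃ E' : (e : Finset J) → Set ((i : ↥e) → V i),
        (∀ e ∈ H, ComplexityLE e (E' e)ᶜ T) ∧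
        (∀ x : (j : J) → V j,
          ∏ e ∈ H, Set.indicator (E' e) (fun _ => (1 : ℝ)) (restr e x) = 0) ∧
        (∀ e ∈ H, avg (fun x : (i : ↥e) → V i =>
          g e x * Set.indicator (E' e)ᶜ (fun _ => (1 : ℝ)) x) ≤ ε) := by
  -- there are finitely many hypergraphs `H` on `J`, so the constants may depend on `H`
  have hex : ∀ H : Finset (Finset J), ∃ δ : ℝ, 0 < δ ∧ ∃ m : ℕ,
      ∃ η : ℝ, 0 < η ∧ ((∃ r, 1 ≤ r ∧ ∀ e ∈ H, e.card = r) →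
      ∀ (V : J → Type) [∀ j, Fintype (V j)] [∀ j, Nonempty (V j)]
        (ν g : Finset J → ((j : J) → V j) → ℝ), (∀ a, Dep a (ν a)) → (∀ a, Dep a (g a)) →
        (∀ e ∈ H, ∀ x, 0 ≤ g e x ∧ g e x ≤ ν e x) → LF H ν η →
        avg (fun x => ∏ e ∈ H, g e x) ≤ δ →
        ∃ γ, IsCol γ m ∧ ∃ D : Finset J → Set ((j : J) → V j),
          (∀ e ∈ H, ∀ x y, (∀ f, f ⊂ e → γ f x = γ f y) → (x ∈ D e ↔ y ∈ D e)) ∧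
          (∀ x, ∃ e ∈ H, x ∈ D e) ∧ ∀ e ∈ H, avg (fun x => g e x * ind (D e) x) ≤ ε) := by
    intro H
    by_cases hq : ∃ r, 1 ≤ r ∧ ∀ e ∈ H, e.card = r
    · obtain ⟨r, hr, hH⟩ := hq
      obtain ⟨δ, hδ, m, η, hη, h⟩ := removal_aux H r hr hH hε
      exact ⟨δ, hδ, m, η, hη, fun _ => h⟩
    · exact ⟨1, one_pos, 0, 1, one_pos, fun h => absurd h hq⟩
  choose δ hδ m η hη hrem using hex
  have hU : (univ : Finset (Finset (Finset J))).Nonempty := univ_nonempty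
  refine ⟨univ.inf' hU δ, (lt_inf'_iff hU).2 fun q _ => hδ q,
    Fintype.card (Finset J → Fin (univ.sup m + 1)), Fintype.card_pos,
    univ.inf' hU η, (lt_inf'_iff hU).2 fun q _ => hη q, ?_⟩
  intro V _ _ r hr H hH ν g hg hν hδg
  obtain ⟨γ, hγ, D, hD, hcov, havg⟩ := hrem H ⟨r, hr, hH⟩ V
    (fun e x => ν e (restr e x)) (fun e x => g e (restr e x))
    (fun e => dep_restr e (ν e)) (fun e => dep_restr e (g e))
    (fun e he x => hg e he (restr e x)) (hν.lf.mono (inf'_le _ (mem_univ H)))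
    (hδg.trans (inf'_le _ (mem_univ H)))
  have hDd : ∀ e ∈ H, Dep e (fun x => x ∈ D e) := fun e he x y hxy =>
    propext (hD e he x y fun f hf => (hγ f).1 x y fun j hj => hxy j (hf.1 hj))
  have hmem : ∀ e ∈ H, ∀ x, extend e (restr e x) ∈ D e ↔ x ∈ D e := fun e he x =>
    iff_of_eq ((hDd e he).extend_restr x)
  have hcompl : ∀ e : Finset J, ({v | extend e v ∉ D e} : Set ((i : ↥e) → V i))ᶜ =
      {v | extend e v ∈ D e} := fun e => Set.ext fun v => not_not
  refine ⟨fun e => {v | extend e v ∉ D e}, fun e he => ?_, fun x => ?_, fun e he => ?_⟩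
  · rw [hcompl]
    exact complexityLE_of_inv (hγ.mono (le_sup (mem_univ H)))
      (card_pos.1 (by rw [hH e he]; omega)) (hD e he)
  · obtain ⟨e, he, hx⟩ := hcov x
    exact prod_eq_zero he (ind_of_notMem fun h => h ((hmem e he x).2 hx))
  · rw [hcompl, ← avg_restr e]
    refine le_of_eq_of_le (avg_congr fun x => ?_) (havg e he)
    congr 1
    by_cases hx : x ∈ D e
    · exact (ind_of_mem ((hmem e he x).2 hx)).trans (ind_of_mem hx).symm
    · exact (ind_of_notMem fun h => hx ((hmem e he x).1 h)).trans (ind_of_notMem hx).symm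
end

section
/- For every ε > 0 and every finite set J, there exists η > 0 such that the following holds. Let V = (J, (V_j)_{j∈J}, r, H) be a hypergraph system and let ν and g be weighted hypergraphs on V with 0 ≤ g_e ≤ ν_e pointwise for all e ∈ H. If ν satisfies the H-linear forms condition within η, then g is upper ε-regular, i.e., for every e ∈ H and all subsets B_f ⊆ V_f (f ∈ ∂e), E[(g_e(x_e) − 1)·∏_{f∈∂e} 1_{B_f}(x_f) | x_e ∈ V_e] ≤ ε. -/
/-!
Since `g ≤ ν` and indicators are nonnegative, it suffices to bound `E[(ν_e - 1) ∏_f 1_{B_f}]`.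
Each `1_{B_f}` with `f = e \ {j}` is bounded by `1` and does not depend on the coordinate `j`, so
`|e|` applications of the Cauchy–Schwarz inequality, one for each coordinate `j ∈ e`, give the
Gowers–Cauchy–Schwarz inequality (`gowers_cauchy_schwarz`)
`E[h ∏_{j ∈ e} b_j] ^ (2 ^ |e|) ≤ E_{x⁰, x¹} ∏_{ω ∈ {0,1}^e} h(x^ω)`, applied to `h = ν_e - 1`.
Expanding the product on the right gives `2 ^ (2 ^ |e|)` terms, each `± (1 + O(η))` by the linear
forms condition; the main terms cancel because `∏_ω (1 - 1) = 0`, so the right-hand side is at most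
`2 ^ (2 ^ |e|) η` (`box_sub_one_le`).

All functions are pulled back to the full product `V_J`, and `ω ∈ {0,1}^e` is encoded as the subset
`t ⊆ e` on which `ω = 1`; then `x^ω` is `t.piecewise x¹ x⁰`. The only fact about the uniform
measure on `V_J` beyond Fubini is that resampling a coordinate preserves it (`expect_resample`).
-/

open Finset

variable {J : Type} [Fintype J] [DecidableEq J] {V : J → Type}

/-! ### Averages -/

open scoped BigOperators

theorem avg_eq_expect {α : Type*} [Fintype α] (f : α → ℝ) : avg f = 𝔼 x, f x := by
  rw [Fintype.expect_eq_sum_div_card, avg]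

/-- Jensen's inequality for `x ↦ x ^ 2 ^ k`; no sign condition is needed, as the exponent is
either `1` or even. -/
theorem expect_pow_two_pow_le {α : Type*} [Fintype α] [Nonempty α] (f : α → ℝ) (k : ℕ) :
    (𝔼 x, f x) ^ 2 ^ k ≤ 𝔼 x, f x ^ 2 ^ k := by
  rcases Nat.eq_zero_or_pos k with rfl | hk
  · simp
  have hc : (Fintype.card α : ℝ) ≠ 0 := by simp
  have := Real.pow_arith_mean_le_arith_mean_pow_of_even (univ : Finset α)
    (fun _ => (Fintype.card α : ℝ)⁻¹) f (fun _ _ => by positivity) (by simp [hc])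
    (n := 2 ^ k) (by simp [Nat.even_pow, hk.ne'])
  rw [← Finset.mul_sum, ← Finset.mul_sum] at this
  rwa [Fintype.expect_eq_sum_div_card, Fintype.expect_eq_sum_div_card, div_eq_inv_mul,
    div_eq_inv_mul]

/-! ### The Gowers–Cauchy–Schwarz inequality -/

/-- Replacing the coordinate `a` of a uniform `x` by that of an independent uniform `y` leaves
the distribution uniform. -/
theorem expect_resample {J : Type} [Fintype J] [DecidableEq J] {V : J → Type}
    [∀ j, Fintype (V j)] [∀ j, Nonempty (V j)]
    (F : ((j : J) → V j) → ℝ) (a : J) :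
    𝔼 x, 𝔼 y : (j : J) → V j, F (Function.update x a (y a)) = 𝔼 x, F x := by
  -- Swapping the `a`-coordinates of `x` and `y` is an involution.
  let φ : (((j : J) → V j) × ((j : J) → V j)) → (((j : J) → V j) × ((j : J) → V j)) :=
    fun p => (Function.update p.1 a (p.2 a), Function.update p.2 a (p.1 a))
  have hφ : Function.Involutive φ := fun p => by simp [φ]
  have h1 : 𝔼 x, 𝔼 y : (j : J) → V j, F (Function.update x a (y a))
      = 𝔼 p : ((j : J) → V j) × ((j : J) → V j), F (φ p).1 :=
    (Finset.expect_product' univ univ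
      (fun x y : (j : J) → V j => F (Function.update x a (y a)))).symm
  have h2 : 𝔼 p : ((j : J) → V j) × ((j : J) → V j), F (φ p).1
      = 𝔼 p : ((j : J) → V j) × ((j : J) → V j), F p.1 :=
    Fintype.expect_equiv hφ.toPerm _ _ (fun _ => rfl)
  have h3 : 𝔼 p : ((j : J) → V j) × ((j : J) → V j), F p.1
      = 𝔼 x, 𝔼 _y : (j : J) → V j, F x :=
    Finset.expect_product' univ univ (fun x _ : (j : J) → V j => F x)
  rw [h1, h2, h3]
  simp

/-- One Cauchy–Schwarz step, eliminating a bounded factor that does not depend on the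
coordinate `a` at the cost of doubling that coordinate. -/
theorem expect_mul_sq_le {J : Type} [Fintype J] [DecidableEq J] {V : J → Type}
    [∀ j, Fintype (V j)] [∀ j, Nonempty (V j)]
    (F b : ((j : J) → V j) → ℝ) (a : J) (hb : ∀ x, |b x| ≤ 1)
    (hba : ∀ x v, b (Function.update x a v) = b x) :
    (𝔼 x, F x * b x) ^ 2 ≤ 𝔼 y : (j : J) → V j, 𝔼 x, F x * F (Function.update x a (y a)) := by
  have h1 : 𝔼 x, F x * b x
      = 𝔼 x, (𝔼 y : (j : J) → V j, F (Function.update x a (y a))) * b x := by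
    rw [← expect_resample (fun x => F x * b x) a]
    simp only [hba, Finset.expect_mul]
  have h2 : (𝔼 x, F x * b x) ^ 2
      ≤ 𝔼 x, (𝔼 y : (j : J) → V j, F (Function.update x a (y a))) ^ 2 := by
    rw [h1]
    refine (expect_pow_two_pow_le _ 1).trans (Finset.expect_le_expect fun x _ => ?_)
    rw [pow_one, mul_pow]
    exact mul_le_of_le_one_right (sq_nonneg _) ((sq_le_one_iff_abs_le_one _).2 (hb x))
  refine h2.trans_eq ?_
  have h3 : ∀ x : (j : J) → V j, (𝔼 y : (j : J) → V j, F (Function.update x a (y a))) ^ 2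
      = 𝔼 z : (j : J) → V j, 𝔼 y : (j : J) → V j,
          F (Function.update x a (y a)) * F (Function.update x a (z a)) := fun x => by
    rw [sq, Finset.mul_expect]
    simp only [Finset.expect_mul]
  simp only [h3]
  rw [Finset.expect_comm]
  refine Finset.expect_congr rfl fun z _ => ?_
  rw [← expect_resample (fun x => F x * F (Function.update x a (z a))) a]
  simp

/-- The Gowers–Cauchy–Schwarz inequality for bounded functions `b j` (`j ∈ s`), where `b j` does
not depend on the coordinate `j`. -/
theorem gowers_cauchy_schwarz {J : Type} [Fintype J] [DecidableEq J] {V : J → Type}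
    [∀ j, Fintype (V j)] [∀ j, Nonempty (V j)] (s : Finset J) :
    ∀ (h : ((j : J) → V j) → ℝ) (b : J → ((j : J) → V j) → ℝ),
      (∀ j x, |b j x| ≤ 1) → (∀ j ∈ s, ∀ x v, b j (Function.update x j v) = b j x) →
      (𝔼 x, h x * ∏ j ∈ s, b j x) ^ 2 ^ s.card
        ≤ 𝔼 x0, 𝔼 x1, ∏ t ∈ s.powerset, h (t.piecewise x1 x0) := by
  induction s using Finset.induction_on with
  | empty =>
    intro h b _ _
    simp
  | insert a s ha ih =>
    intro h b hb hbj
    have hcs := expect_mul_sq_le (fun x => h x * ∏ j ∈ s, b j x) (b a) a (hb a)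
      (hbj a (Finset.mem_insert_self _ _))
    have hstart : 𝔼 x, h x * ∏ j ∈ insert a s, b j x
        = 𝔼 x, (h x * ∏ j ∈ s, b j x) * b a x := by
      refine Finset.expect_congr rfl fun x _ => ?_
      rw [Finset.prod_insert ha]; ring
    have hih : ∀ y : (j : J) → V j,
        (𝔼 x, (h x * ∏ j ∈ s, b j x) *
          (h (Function.update x a (y a)) * ∏ j ∈ s, b j (Function.update x a (y a)))) ^ 2 ^ s.card
        ≤ 𝔼 x0, 𝔼 x1 : (j : J) → V j, ∏ t ∈ s.powerset, (h (t.piecewise x1 x0) *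
            h (Function.update (t.piecewise x1 x0) a (y a))) := fun y => by
      have := ih (fun x => h x * h (Function.update x a (y a)))
        (fun j x => b j x * b j (Function.update x a (y a)))
        (fun j x => by
          rw [abs_mul]
          exact mul_le_one₀ (hb _ _) (abs_nonneg _) (hb _ _))
        (fun j hj x v => by
          have hja : j ≠ a := fun hh => ha (hh ▸ hj)
          rw [Function.update_comm hja, hbj j (Finset.mem_insert_of_mem hj),
            hbj j (Finset.mem_insert_of_mem hj)])
      refine le_trans (le_of_eq ?_) this
      congr 1
      refine Finset.expect_congr rfl fun x _ => ?_
      rw [Finset.prod_mul_distrib]; ring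
    rw [hstart, Finset.card_insert_of_notMem ha, pow_succ', pow_mul]
    refine (pow_le_pow_left₀ (sq_nonneg _) hcs _).trans
      ((expect_pow_two_pow_le _ _).trans
        ((Finset.expect_le_expect fun y _ => hih y).trans_eq ?_))
    rw [Finset.expect_comm]
    refine Finset.expect_congr rfl fun x0 _ => ?_
    rw [Finset.expect_comm,
      ← expect_resample (fun x1 => ∏ t ∈ (insert a s).powerset, h (t.piecewise x1 x0)) a]
    refine Finset.expect_congr rfl fun x1 _ => Finset.expect_congr rfl fun y _ => ?_
    -- With x¹ replaced by `update x1 a (y a)`, the subsets of `s` give the first factors and the subsets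
    -- `insert a t` the second ones.
    rw [Finset.prod_powerset_insert ha, Finset.prod_mul_distrib]
    congr 1
    · refine Finset.prod_congr rfl fun t ht => ?_
      have hat : a ∉ t := fun hh => ha (Finset.mem_powerset.1 ht hh)
      congr 1
      funext j
      by_cases hj : j ∈ t
      · have : j ≠ a := fun hh => hat (hh ▸ hj)
        simp [hj, this]
      · simp [hj]
    · refine Finset.prod_congr rfl fun t ht => ?_
      congr 1
      funext j
      by_cases hja : j = a
      · subst hja; simp
      · by_cases hj : j ∈ t <;> simp [hj, hja]

/-! ### The box average of `ν_e - 1` -/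

theorem expect_restr {J : Type} [Fintype J] [DecidableEq J] {V : J → Type}
    [∀ j, Fintype (V j)] [∀ j, Nonempty (V j)] (e : Finset J)
    (F : ((i : ↥e) → V i) → ℝ) :
    𝔼 x : (j : J) → V j, F (restr e x) = 𝔼 x, F x := by
  have h1 : 𝔼 x : (j : J) → V j, F (restr e x)
      = 𝔼 p : ((i : {j // j ∈ e}) → V i) × ((i : {j // ¬ j ∈ e}) → V i), F p.1 :=
    Fintype.expect_equiv (Equiv.piEquivPiSubtypeProd (fun j => j ∈ e) V) _ _ (fun _ => rfl)
  have h2 : 𝔼 p : ((i : {j // j ∈ e}) → V i) × ((i : {j // ¬ j ∈ e}) → V i), F p.1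
      = 𝔼 x, 𝔼 _y : ((i : {j // ¬ j ∈ e}) → V i), F x :=
    Finset.expect_product' univ univ
      (fun x (_ : (i : {j // ¬ j ∈ e}) → V i) => F x)
  rw [h1, h2]
  simp

/-- The linear forms condition restricted to a single edge `e`, with the nonzero exponents
indexed by a family `T` of subsets of `e`. -/
theorem linearForms_single {J : Type} [Fintype J] [DecidableEq J] {V : J → Type}
    [∀ j, Fintype (V j)] [∀ j, Nonempty (V j)] {H : Finset (Finset J)}
    {ν : (e : Finset J) → ((i : ↥e) → V i) → ℝ} {η : ℝ} (hν : HLinearForms H ν η)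
    {e : Finset J} (he : e ∈ H) (T : Finset (Finset J)) (hT : T ⊆ e.powerset) :
    |(𝔼 x0, 𝔼 x1, ∏ t ∈ T, ν e (restr e (t.piecewise x1 x0))) - 1| ≤ η := by
  have key := hν (fun e' ω => decide (e' = e ∧
    (univ.filter (fun i => ω i = true)).map (Function.Embedding.subtype _) ∈ T))
  rw [avg_eq_expect] at key
  have hprod : ∀ x : ((j : J) → V j) × ((j : J) → V j),
      (∏ e' ∈ H, ∏ ω : ↥e' → Bool,
        if decide (e' = e ∧
          (univ.filter (fun i => ω i = true)).map (Function.Embedding.subtype _) ∈ T) = true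
        then ν e' (fun i => if ω i then x.2 i.1 else x.1 i.1) else 1)
      = ∏ t ∈ T, ν e (restr e (t.piecewise x.2 x.1)) := fun x => by
    rw [Finset.prod_eq_single_of_mem e he]
    · simp only [true_and, decide_eq_true_eq]
      rw [← Finset.prod_filter]
      refine Finset.prod_bij'
        (fun ω _ => (univ.filter (fun i => ω i = true)).map (Function.Embedding.subtype _))
        (fun t _ => fun i => decide (i.1 ∈ t)) ?_ ?_ ?_ ?_ ?_
      · intro ω hω
        exact (Finset.mem_filter.1 hω).2
      · intro t ht
        have hte := Finset.mem_powerset.1 (hT ht)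
        have : (univ.filter (fun i : ↥e => decide (i.1 ∈ t) = true)).map
            (Function.Embedding.subtype _) = t := by
          ext j
          simpa using fun hj => hte hj
        simp only [Finset.mem_filter, Finset.mem_univ, true_and]
        rwa [this]
      · intro ω _
        funext i
        simp
      · intro t ht
        have hte := Finset.mem_powerset.1 (hT ht)
        ext j
        simpa using fun hj => hte hj
      · intro ω _
        congr 1
        funext i
        simp [restr, Finset.piecewise]
    · intro e' _ hne
      simp [hne]
  rw [Finset.expect_congr rfl (fun x _ => hprod x)] at key
  have h2 : 𝔼 x : ((j : J) → V j) × ((j : J) → V j),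
      ∏ t ∈ T, ν e (restr e (t.piecewise x.2 x.1))
      = 𝔼 x0, 𝔼 x1, ∏ t ∈ T, ν e (restr e (t.piecewise x1 x0)) :=
    Finset.expect_product' univ univ
      (fun x0 x1 => ∏ t ∈ T, ν e (restr e (t.piecewise x1 x0)))
  rwa [h2] at key

/-- The box average of `ν e - 1` is small: after expanding, the main terms cancel. -/
theorem box_sub_one_le {J : Type} [Fintype J] [DecidableEq J] {V : J → Type}
    [∀ j, Fintype (V j)] [∀ j, Nonempty (V j)] {H : Finset (Finset J)}
    {ν : (e : Finset J) → ((i : ↥e) → V i) → ℝ} {η : ℝ} (hν : HLinearForms H ν η)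
    {e : Finset J} (he : e ∈ H) :
    𝔼 x0, 𝔼 x1, ∏ t ∈ e.powerset, (ν e (restr e (t.piecewise x1 x0)) - 1)
      ≤ 2 ^ 2 ^ e.card * η := by
  have hexp : 𝔼 x0, 𝔼 x1, ∏ t ∈ e.powerset, (ν e (restr e (t.piecewise x1 x0)) - 1)
      = ∑ T ∈ e.powerset.powerset,
        (𝔼 x0, 𝔼 x1, ∏ t ∈ T, ν e (restr e (t.piecewise x1 x0)))
          * (-1) ^ (e.powerset \ T).card := by
    simp only [sub_eq_add_neg, Finset.prod_add, Finset.prod_const, Finset.expect_sum_comm,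
      Finset.expect_mul]
  have hzero : ∑ T ∈ e.powerset.powerset, (-1 : ℝ) ^ (e.powerset \ T).card = 0 := by
    have h := Finset.prod_add (fun _ : Finset J => (1 : ℝ)) (fun _ => -1) e.powerset
    simp only [Finset.prod_const_one, one_mul, Finset.prod_const] at h
    rw [← h]
    simp
  calc _ = ∑ T ∈ e.powerset.powerset,
        ((𝔼 x0, 𝔼 x1, ∏ t ∈ T, ν e (restr e (t.piecewise x1 x0))) - 1)
          * (-1) ^ (e.powerset \ T).card := by
        simp only [hexp, sub_mul, one_mul, Finset.sum_sub_distrib, hzero, sub_zero]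
    _ ≤ ∑ T ∈ e.powerset.powerset, η := by
        refine Finset.sum_le_sum fun T hT => (le_abs_self _).trans ?_
        rw [abs_mul, abs_pow, abs_neg, abs_one, one_pow, mul_one]
        exact linearForms_single hν he T (Finset.mem_powerset.1 hT)
    _ = _ := by simp

/-! ### Conclusion -/

/-- For every `ε > 0` and finite `J` there exists `η > 0` such that: for every
hypergraph system `(J, (V_j), r, H)` and weighted hypergraphs `ν, g` with `0 ≤ g ≤ ν`,
if `ν` satisfies the `H`-linear forms condition within `η` then `g` is upper
`ε`-regular, i.e. for every `e ∈ H` and all `B_f ⊆ V_f` (`f ∈ ∂e`),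
`E[(g_e(x_e) - 1) ∏_{f ∈ ∂e} 1_{B_f}(x_f)] ≤ ε`. -/
theorem upper_regular_of_linear_forms (ε : ℝ) (hε : 0 < ε)
    (J : Type) [Fintype J] [DecidableEq J] :
    ∃ η : ℝ, 0 < η ∧
    ∀ (V : J → Type) [∀ j, Fintype (V j)] [∀ j, Nonempty (V j)]
      (r : ℕ), 1 ≤ r → ∀ H : Finset (Finset J), (∀ e ∈ H, e.card = r) →
      ∀ ν g : (e : Finset J) → ((i : ↥e) → V i) → ℝ,
      (∀ e ∈ H, ∀ x, 0 ≤ g e x ∧ g e x ≤ ν e x) →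
      HLinearForms H ν η →
      ∀ e ∈ H, EdgeUpperRegular e (g e) ε := by
  -- This `η` satisfies `2 ^ 2 ^ k * η ≤ ε ^ 2 ^ k` simultaneously for all `k ≤ |J|`.
  have hδ : 0 < min 1 (ε / 2) := lt_min one_pos (by positivity)
  refine ⟨min 1 (ε / 2) ^ 2 ^ Fintype.card J, by positivity, ?_⟩
  intro V _ _ r _ H _ ν g hg hν e he B
  have hind : ∀ j (y : (i : ↥(e.erase j)) → V i),
      0 ≤ Set.indicator (B j) (fun _ => (1 : ℝ)) y ∧
      Set.indicator (B j) (fun _ => (1 : ℝ)) y ≤ 1 := fun j y =>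
    ⟨Set.indicator_nonneg (fun _ _ => zero_le_one) y,
      Set.indicator_le_self' (fun _ _ => zero_le_one) y⟩
  have hstep : avg (fun x : (i : ↥e) → V i => (g e x - 1) * faceInd e B x)
      ≤ 𝔼 x : (j : J) → V j, (ν e (restr e x) - 1) *
          ∏ j ∈ e, Set.indicator (B j) (fun _ => (1 : ℝ)) (faceProj j (restr e x)) := by
    rw [avg_eq_expect, expect_restr e (fun x => (ν e x - 1) *
          ∏ j ∈ e, Set.indicator (B j) (fun _ => (1 : ℝ)) (faceProj j x))]
    refine Finset.expect_le_expect fun x _ => ?_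
    exact mul_le_mul_of_nonneg_right (sub_le_sub_right (hg e he x).2 1)
      (Finset.prod_nonneg fun j _ => (hind j _).1)
  refine hstep.trans ?_
  have hgcs := gowers_cauchy_schwarz e (fun x : (j : J) → V j => ν e (restr e x) - 1)
    (fun j x => Set.indicator (B j) (fun _ => (1 : ℝ)) (faceProj j (restr e x)))
    (fun j x => by rw [abs_of_nonneg (hind j _).1]; exact (hind j _).2)
    (fun j _ x v => by
      congr 1
      funext i
      exact Function.update_of_ne (Finset.ne_of_mem_erase i.2) _ _)
  have hbound := hgcs.trans (box_sub_one_le hν he)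
  have hη : (2 : ℝ) ^ 2 ^ e.card * min 1 (ε / 2) ^ 2 ^ Fintype.card J ≤ ε ^ 2 ^ e.card := by
    calc (2 : ℝ) ^ 2 ^ e.card * min 1 (ε / 2) ^ 2 ^ Fintype.card J
        ≤ 2 ^ 2 ^ e.card * (ε / 2) ^ 2 ^ e.card := by
          refine mul_le_mul_of_nonneg_left ?_ (by positivity)
          refine (pow_le_pow_of_le_one hδ.le (min_le_left _ _)
            (Nat.pow_le_pow_right two_pos (Finset.card_le_univ e))).trans ?_
          exact pow_le_pow_left₀ hδ.le (min_le_right _ _) _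
      _ = ε ^ 2 ^ e.card := by rw [← mul_pow]; congr 1; ring
  exact le_of_pow_le_pow_left₀ (by positivity) hε.le (hbound.trans hη)
end
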